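/- arXiv:math/9311208 — 2 statements merged into one kernel-verified Lean document; each statement's English description precedes it below -/
import Mathlib

section
/- Let n ≥ 2, 0 < q ≤ 1, and let a_1 ≥ a_2 ≥ … ≥ a_n ≥ 0 be real numbers, not all zero. Then the Lorentz space ℓ_{w,q}^n is isometric to a subspace of L_q if and only if a_1 − a_2 = a_2 − a_3 = … = a_{n−1} − a_n. -/
/-!
Let `N x` be the `q`-th power of the Lorentz functional.

**Sufficiency.** If the weights decrease by a constant step `d`, then
`N x = aₙ ∑ |xᵢ| ^ q + (d / 2) ∑_{i ≠ j} max |xᵢ| |xⱼ| ^ q`, because the entry of rank `i` is the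
maximum of exactly `n - i` pairs. The identity `max |s| |t| = |(s + t) / 2| + |(s - t) / 2|` turns
each maximum into an `ℓ₁` norm on a plane, and `ℓ₁` embeds into `L_q` for `q < 1` because the Cauchy
law is `1`-stable: if `ξᵢ` are independent standard Cauchy variables, then `∑ xᵢ ξᵢ` is distributed
as `(∑ |xᵢ|) ξ₁`, whose absolute moment of order `q` is finite.

**Necessity.** Since `|t| ^ q` is conditionally negative definite on `ℝ`, so is `N`, by integration.
Restrict `N` to the vectors `(2d, …, 2d, d + u₁, d + u₂, d + u₃, 0, …, 0)`, whose three middle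
entries occupy three consecutive ranks. There `N` is a sum of functions of `d` and two of the `uᵢ`,
and of `c (d + max uᵢ) ^ q`, where `c` is the second difference of the weights at these ranks.
Taking a second difference in each `uᵢ` of `-N` produces a positive definite function `H` and
annihilates everything except the last term: with `f r = r ^ q`,
`H (d, 0, 0, 0) = -c (2 f d - f (d - 1) - f (d + 1))` and `H (d, 1, 0, 0) = -c (f (d + 1) - f d)`.
The first sequence is summable by concavity of `f`; the second is of order `|c| d ^ (q - 1)`.
Testing positive definiteness on two translated combs of `K` points each, with a sign `±1` on the
second, bounds the sum of `K ^ 2` cross terms, of order `|c| K ^ (1 + q)`, by the diagonal terms,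
which are `O(K)`. Letting `K → ∞` gives `c = 0`.
-/

open MeasureTheory

/-- The non-increasing rearrangement of `(|x 0|, …, |x (n-1)|)`. -/
noncomputable def dstar {n : ℕ} (x : Fin n → ℝ) : Fin n → ℝ :=
  fun i => |x (Tuple.sort (fun j => -|x j|) i)|

open ProbabilityTheory Matrix Finset Filter

section Cauchy

open scoped FourierTransform

theorem integrable_exp_neg_mul_abs {b : ℝ} (hb : 0 < b) :
    Integrable fun v : ℝ => Real.exp (-b * |v|) := by
  rw [← integrableOn_univ, ← Set.Iic_union_Ioi (a := (0 : ℝ))]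
  refine ((integrableOn_exp_mul_Iic hb 0).congr_fun (fun v hv => ?_) measurableSet_Iic).union
    ((integrableOn_exp_mul_Ioi (neg_neg_of_pos hb) 0).congr_fun (fun v hv => ?_) measurableSet_Ioi)
  · simp only [abs_of_nonpos (Set.mem_Iic.1 hv), neg_mul_neg]
  · simp only [abs_of_pos (Set.mem_Ioi.1 hv)]

theorem integral_cexp_mul_I_mul_exp_neg_mul_abs {b : ℝ} (hb : 0 < b) (s : ℝ) :
    ∫ v : ℝ, Complex.exp ((s * v : ℝ) * Complex.I) * (Real.exp (-b * |v|) : ℂ) =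
      ((2 * b / (b ^ 2 + s ^ 2) : ℝ) : ℂ) := by
  set F : ℝ → ℂ := fun v => Complex.exp ((s * v : ℝ) * Complex.I) * (Real.exp (-b * |v|) : ℂ)
  have hF : Integrable F :=
    (integrable_exp_neg_mul_abs hb).ofReal.bdd_mul (c := 1) (by fun_prop)
      (.of_forall fun v => (Complex.norm_exp_ofReal_mul_I _).le)
  have hneg : ∫ v in Set.Iic 0, F v = 1 / (b + s * Complex.I) := by
    rw [← Complex.exp_zero, ← mul_zero ((b : ℂ) + s * Complex.I), ← Complex.ofReal_zero,
      ← integral_exp_mul_complex_Iic (by simpa using hb)]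
    refine setIntegral_congr_fun measurableSet_Iic fun v hv => ?_
    simp only [F, abs_of_nonpos (Set.mem_Iic.1 hv), Complex.ofReal_exp, ← Complex.exp_add]
    push_cast
    ring_nf
  have hpos : ∫ v in Set.Ioi 0, F v = 1 / (b - s * Complex.I) := by
    have h := integral_exp_mul_complex_Ioi (a := -b + s * Complex.I) (by simpa using hb) 0
    rw [Complex.ofReal_zero, mul_zero, Complex.exp_zero, neg_div, ← div_neg, neg_add, neg_neg,
      ← sub_eq_add_neg] at h
    rw [← h]
    refine setIntegral_congr_fun measurableSet_Ioi fun v hv => ?_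
    simp only [F, abs_of_pos (Set.mem_Ioi.1 hv), Complex.ofReal_exp, ← Complex.exp_add]
    push_cast
    ring_nf
  have hmul : ((b : ℂ) + s * Complex.I) * (b - s * Complex.I) = ((b ^ 2 + s ^ 2 : ℝ) : ℂ) := by
    push_cast
    linear_combination -(s : ℂ) ^ 2 * Complex.I_sq
  have hne : ((b : ℂ) + s * Complex.I) * (b - s * Complex.I) ≠ 0 := by
    rw [hmul, Complex.ofReal_ne_zero]
    positivity
  rw [← intervalIntegral.integral_Iic_add_Ioi hF.integrableOn hF.integrableOn, hneg, hpos,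
    div_add_div _ _ (left_ne_zero_of_mul hne) (right_ne_zero_of_mul hne), hmul]
  push_cast
  ring

theorem fourier_exp_neg_two_pi_mul_abs :
    𝓕 (fun v : ℝ => (Real.exp (-(2 * Real.pi) * |v|) : ℂ)) =
      fun w => (cauchyPDFReal 0 1 w : ℂ) := by
  ext w
  have h := integral_cexp_mul_I_mul_exp_neg_mul_abs Real.two_pi_pos (-2 * Real.pi * w)
  rw [Real.fourier_real_eq_integral_exp_smul, cauchyPDFReal_def]
  simp only [smul_eq_mul]
  have hpdf : Real.pi⁻¹ * (1 : NNReal) * ((w - 0) ^ 2 + (1 : NNReal) ^ 2)⁻¹ =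
      2 * (2 * Real.pi) / ((2 * Real.pi) ^ 2 + (-2 * Real.pi * w) ^ 2) := by
    simp only [NNReal.coe_one, sub_zero]
    field_simp
    ring
  rw [hpdf, ← h]
  simp only [mul_right_comm]

theorem integral_cauchyMeasure_zero_one {E : Type*} [NormedAddCommGroup E] [NormedSpace ℝ E]
    (f : ℝ → E) :
    ∫ x, f x ∂cauchyMeasure 0 1 = ∫ x, cauchyPDFReal 0 1 x • f x := by
  rw [cauchyMeasure_of_scale_ne_zero 0 one_ne_zero,
    integral_withDensity_eq_integral_toReal_smul (by fun_prop) (by simp [cauchyPDF])]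
  simp only [cauchyPDF, ENNReal.toReal_ofReal (cauchyPDF_pos 0 one_ne_zero _).le]

theorem charFun_cauchyMeasure_zero_one (t : ℝ) :
    charFun (cauchyMeasure 0 1) t = (Real.exp (-|t|) : ℂ) := by
  set f : ℝ → ℂ := fun v => (Real.exp (-(2 * Real.pi) * |v|) : ℂ)
  have hinv := congrFun (Continuous.fourierInv_fourier_eq (f := f) (by fun_prop)
    (integrable_exp_neg_mul_abs Real.two_pi_pos).ofReal
    (by rw [fourier_exp_neg_two_pi_mul_abs]; exact (integrable_cauchyPDFReal 0).ofReal))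
    (t / (2 * Real.pi))
  have hft : f (t / (2 * Real.pi)) = (Real.exp (-|t|) : ℂ) := by
    simp only [f, abs_div, abs_of_pos Real.two_pi_pos, neg_mul,
      mul_div_cancel₀ _ Real.two_pi_pos.ne']
  rw [← hft, ← hinv, fourier_exp_neg_two_pi_mul_abs, Real.fourierInv_eq', charFun_apply_real,
    integral_cauchyMeasure_zero_one]
  refine integral_congr_ae (.of_forall fun v => ?_)
  have hv : 2 * Real.pi * inner ℝ v (t / (2 * Real.pi)) = t * v := by
    simp only [RCLike.inner_apply, conj_trivial]
    field_simp
  simp only [hv, Complex.real_smul, smul_eq_mul, Complex.ofReal_mul]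
  exact mul_comm _ _

theorem integrable_abs_rpow_cauchyMeasure {q : ℝ} (hq0 : 0 ≤ q) (hq1 : q < 1) :
    Integrable (fun s : ℝ => |s| ^ q) (cauchyMeasure 0 1) := by
  rw [cauchyMeasure_of_scale_ne_zero 0 one_ne_zero,
    integrable_withDensity_iff_integrable_smul' (by fun_prop) (by simp [cauchyPDF])]
  have hdom := integrable_rpow_neg_one_add_norm_sq (E := ℝ) (μ := volume) (r := 2 - q)
    (by rw [Module.finrank_self, Nat.cast_one]; linarith)
  refine (hdom.const_mul Real.pi⁻¹).mono'
    (Measurable.aestronglyMeasurable (by fun_prop)) (.of_forall fun s => ?_)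
  have hs : 0 < 1 + s ^ 2 := by positivity
  have habs : |s| ^ q ≤ (1 + s ^ 2) ^ (q / 2) := by
    calc |s| ^ q = (s ^ 2) ^ (q / 2) := by
          rw [← sq_abs, ← Real.rpow_natCast_mul (abs_nonneg s)]
          push_cast
          ring_nf
      _ ≤ (1 + s ^ 2) ^ (q / 2) := by gcongr; linarith
  have hsplit : (1 + ‖s‖ ^ 2) ^ (-(2 - q) / 2) = (1 + s ^ 2)⁻¹ * (1 + s ^ 2) ^ (q / 2) := by
    rw [Real.norm_eq_abs, sq_abs, ← Real.rpow_neg_one (1 + s ^ 2), ← Real.rpow_add hs]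
    ring_nf
  rw [cauchyPDF, ENNReal.toReal_ofReal (cauchyPDF_pos 0 one_ne_zero s).le, cauchyPDFReal_def,
    hsplit, Real.norm_of_nonneg (by positivity), smul_eq_mul]
  simp only [sub_zero, NNReal.coe_one, mul_one, one_pow]
  rw [add_comm (s ^ 2), mul_assoc]
  gcongr

theorem integral_abs_rpow_cauchyMeasure_pos {q : ℝ} (hq0 : 0 < q) (hq1 : q < 1) :
    0 < ∫ s, |s| ^ q ∂cauchyMeasure 0 1 := by
  have hsupp : Function.support (fun s : ℝ => |s| ^ q) = {0}ᶜ := by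
    ext s
    simp [hq0.ne']
  have hzero : cauchyMeasure 0 1 {0} = 0 := by
    rw [cauchyMeasure_of_scale_ne_zero 0 one_ne_zero]
    exact withDensity_absolutelyContinuous _ _ Real.volume_singleton
  rw [integral_pos_iff_support_of_nonneg (fun s => by positivity)
    (integrable_abs_rpow_cauchyMeasure hq0.le hq1), hsupp,
    prob_compl_eq_one_sub (measurableSet_singleton _), hzero]
  simp

theorem map_dotProduct_pi_cauchyMeasure {ι : Type*} [Fintype ι] (x : ι → ℝ) :
    (Measure.pi fun _ : ι => cauchyMeasure 0 1).map (· ⬝ᵥ x) =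
      (cauchyMeasure 0 1).map ((∑ i, |x i|) * ·) := by
  have hprob (i : ι) : IsProbabilityMeasure ((cauchyMeasure 0 1).map (x i * ·)) :=
    Measure.isProbabilityMeasure_map (by fun_prop)
  have hpi : (Measure.pi fun _ : ι => cauchyMeasure 0 1).map (· ⬝ᵥ x) =
      (Measure.pi fun i => (cauchyMeasure 0 1).map (x i * ·)).map fun ξ => ∑ i, ξ i := by
    rw [← Measure.pi_map_pi (fun i => by fun_prop), Measure.map_map (by fun_prop) (by fun_prop)]
    simp only [Function.comp_def, dotProduct, mul_comm]
  have : IsFiniteMeasure ((Measure.pi fun _ : ι => cauchyMeasure 0 1).map (· ⬝ᵥ x)) :=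
    inferInstance
  refine Measure.ext_of_charFun (funext fun t => ?_)
  rw [hpi, charFun_map_sum_pi_eq_prod, Finset.prod_apply]
  simp only [charFun_map_mul, charFun_cauchyMeasure_zero_one, abs_mul,
    abs_of_nonneg (Finset.sum_nonneg fun i _ => abs_nonneg (x i)),
    ← Complex.ofReal_prod, ← Real.exp_sum]
  rw [Finset.sum_neg_distrib, Finset.sum_mul]

end Cauchy

section LevyRepr

variable {ι κ : Type*} [Fintype ι] [Fintype κ] {q : ℝ} {F G : (ι → ℝ) → ℝ}

/-- `F` has a Lévy representation with exponent `q`: it is an integral of the functions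
`x ↦ |⟨ξ, x⟩| ^ q`. This says that `F ^ (1 / q)` is the gauge of a subspace of `L_q`. -/
def HasLevyRepr (q : ℝ) (F : (ι → ℝ) → ℝ) : Prop :=
  ∃ μ : Measure (ι → ℝ), ∀ x, Integrable (fun ξ => |ξ ⬝ᵥ x| ^ q) μ ∧ ∫ ξ, |ξ ⬝ᵥ x| ^ q ∂μ = F x

namespace HasLevyRepr

theorem zero : HasLevyRepr q (0 : (ι → ℝ) → ℝ) :=
  ⟨0, fun _ => ⟨integrable_zero_measure, integral_zero_measure _⟩⟩

theorem add (hF : HasLevyRepr q F) (hG : HasLevyRepr q G) : HasLevyRepr q (F + G) := by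
  obtain ⟨μ, hμ⟩ := hF
  obtain ⟨ν, hν⟩ := hG
  refine ⟨μ + ν, fun x => ⟨(hμ x).1.add_measure (hν x).1, ?_⟩⟩
  rw [integral_add_measure (hμ x).1 (hν x).1, (hμ x).2, (hν x).2, Pi.add_apply]

theorem const_smul (hF : HasLevyRepr q F) {c : ℝ} (hc : 0 ≤ c) : HasLevyRepr q (c • F) := by
  obtain ⟨μ, hμ⟩ := hF
  refine ⟨ENNReal.ofReal c • μ, fun x => ⟨(hμ x).1.smul_measure ENNReal.ofReal_ne_top, ?_⟩⟩
  rw [integral_smul_measure, (hμ x).2, ENNReal.toReal_ofReal hc, Pi.smul_apply]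

theorem sum {α : Type*} {s : Finset α} {F : α → (ι → ℝ) → ℝ}
    (hF : ∀ a ∈ s, HasLevyRepr q (F a)) : HasLevyRepr q (∑ a ∈ s, F a) :=
  Finset.sum_induction F (HasLevyRepr q) (fun _ _ => add) zero hF

theorem comp_mulVec (hF : HasLevyRepr q F) (A : Matrix ι κ ℝ) :
    HasLevyRepr q fun x => F (A *ᵥ x) := by
  obtain ⟨μ, hμ⟩ := hF
  have hA : Measurable fun ξ : ι → ℝ => ξ ᵥ* A := by fun_prop
  have hmeas (x : κ → ℝ) : AEStronglyMeasurable (fun ξ => |ξ ⬝ᵥ x| ^ q) (μ.map (· ᵥ* A)) :=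
    Measurable.aestronglyMeasurable (by fun_prop)
  refine ⟨μ.map (· ᵥ* A), fun x => ?_⟩
  rw [integrable_map_measure (hmeas x) hA.aemeasurable, integral_map hA.aemeasurable (hmeas x)]
  simpa only [Function.comp_def, ← dotProduct_mulVec] using hμ (A *ᵥ x)

theorem abs_dotProduct_rpow (ξ : ι → ℝ) : HasLevyRepr q fun x => |ξ ⬝ᵥ x| ^ q :=
  ⟨Measure.dirac ξ, fun _ => ⟨integrable_dirac (by simp), integral_dirac _ _⟩⟩

theorem sum_abs_rpow_of_lt_one (hq0 : 0 < q) (hq1 : q < 1) :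
    HasLevyRepr q fun x : ι → ℝ => (∑ i, |x i|) ^ q := by
  set P := Measure.pi fun _ : ι => cauchyMeasure 0 1
  set C := ∫ s, |s| ^ q ∂cauchyMeasure 0 1
  have hC : 0 < C := integral_abs_rpow_cauchyMeasure_pos hq0 hq1
  suffices h : HasLevyRepr q fun x : ι → ℝ => (∑ i, |x i|) ^ q * C by
    convert h.const_smul (inv_nonneg.2 hC.le) using 2 with x
    rw [Pi.smul_apply, smul_eq_mul, mul_comm, mul_inv_cancel_right₀ hC.ne']
  refine ⟨P, fun x => ?_⟩
  have hnonneg : 0 ≤ ∑ i, |x i| := sum_nonneg fun i _ => abs_nonneg _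
  have hmeas (μ : Measure ℝ) : AEStronglyMeasurable (fun s : ℝ => |s| ^ q) μ :=
    Measurable.aestronglyMeasurable (by fun_prop)
  have hdot : AEMeasurable (· ⬝ᵥ x) P := Measurable.aemeasurable (by fun_prop)
  have hscale (s : ℝ) : |(∑ i, |x i|) * s| ^ q = (∑ i, |x i|) ^ q * |s| ^ q := by
    rw [abs_mul, abs_of_nonneg hnonneg, Real.mul_rpow hnonneg (abs_nonneg s)]
  constructor
  · rw [← Function.comp_def (fun s : ℝ => |s| ^ q), ← integrable_map_measure (hmeas _) hdot,
      map_dotProduct_pi_cauchyMeasure, integrable_map_measure (hmeas _) (by fun_prop)]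
    simpa only [Function.comp_def, hscale] using
      (integrable_abs_rpow_cauchyMeasure hq0.le hq1).const_mul _
  · rw [← integral_map hdot (hmeas _), map_dotProduct_pi_cauchyMeasure,
      integral_map (by fun_prop) (hmeas _)]
    simp only [hscale, integral_const_mul, C]

theorem sum_abs_rpow (hq0 : 0 < q) (hq1 : q ≤ 1) :
    HasLevyRepr q fun x : ι → ℝ => (∑ i, |x i|) ^ q := by
  classical
  rcases hq1.lt_or_eq with hq1 | rfl
  · exact sum_abs_rpow_of_lt_one hq0 hq1
  · have h (i : ι) : HasLevyRepr 1 fun x : ι → ℝ => |x i| ^ (1 : ℝ) := by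
      simpa only [single_one_dotProduct] using abs_dotProduct_rpow (Pi.single i 1)
    convert sum (s := univ) fun i _ => h i using 1
    ext x
    simp only [Real.rpow_one, Finset.sum_apply]

theorem max_abs_rpow (hq0 : 0 < q) (hq1 : q ≤ 1) (i j : ι) :
    HasLevyRepr q fun x : ι → ℝ => max |x i| |x j| ^ q := by
  classical
  have hmax (s t : ℝ) : max |s| |t| = |2⁻¹ * s + 2⁻¹ * t| + |2⁻¹ * s - 2⁻¹ * t| := by grind
  let A : Matrix (Fin 2) ι ℝ :=
    .of ![Pi.single i 2⁻¹ + Pi.single j 2⁻¹, Pi.single i 2⁻¹ - Pi.single j 2⁻¹]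
  convert (sum_abs_rpow hq0 hq1).comp_mulVec A using 3 with x
  rw [hmax]
  simp [A, add_dotProduct, sub_dotProduct]

end HasLevyRepr

theorem HasLevyRepr.exists_linearMap {ι : Type} [Fintype ι] {F : (ι → ℝ) → ℝ}
    (hF : HasLevyRepr q F) :
    ∃ (Ω : Type) (_ : MeasurableSpace Ω) (μ : Measure Ω) (T : (ι → ℝ) →ₗ[ℝ] (Ω → ℝ)),
      ∀ x, ∫ ω, |T x ω| ^ q ∂μ = F x := by
  obtain ⟨μ, hμ⟩ := hF
  exact ⟨ι → ℝ, inferInstance, μ, LinearMap.pi fun ξ => dotProductBilin ℝ ℝ ξ, fun x => (hμ x).2⟩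

end LevyRepr

theorem sum_sum_compl_max_of_antitone {n : ℕ} {α : Type*} [LinearOrder α] (φ : α → ℝ)
    {y : Fin n → α} (hy : Antitone y) :
    ∑ i, ∑ j ∈ {i}ᶜ, φ (max (y i) (y j)) = 2 * ∑ i : Fin n, ((n : ℝ) - 1 - i) * φ (y i) := by
  have hcard (i : Fin n) : ((#(Ioi i) : ℕ) : ℝ) = (n : ℝ) - 1 - i := by
    rw [Fin.card_Ioi, Nat.sub_sub, Nat.cast_sub (by lia)]
    push_cast
    ring
  have hmax (i j : Fin n) (hij : j ∈ Ioi i) :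
      φ (max (y i) (y j)) + φ (max (y j) (y i)) = 2 * φ (y i) := by
    rw [max_comm (y j), max_eq_left (hy (mem_Ioi.1 hij).le), two_mul]
  rw [← sum_sum_Ioi_add_eq_sum_sum_off_diag fun i j => φ (max (y j) (y i)), mul_sum]
  refine sum_congr rfl fun i _ => ?_
  rw [sum_congr rfl (hmax i), sum_const, nsmul_eq_mul, hcard]
  ring

section Lorentz

variable {n : ℕ} {w : ℕ → ℝ} {q b d : ℝ}

/-- The `q`-th power of the Lorentz functional with weights `w 0, …, w (n - 1)`. The weights are
indexed from `0`, like the coordinates: in the notation `a₁, …, aₙ` of the theorem, `w i = aᵢ₊₁`. -/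
noncomputable def lorentz (w : ℕ → ℝ) (q : ℝ) (x : Fin n → ℝ) : ℝ :=
  ∑ i : Fin n, w i * dstar x i ^ q

theorem dstar_nonneg (x : Fin n → ℝ) : 0 ≤ dstar x := fun _ => abs_nonneg _

theorem antitone_dstar (x : Fin n → ℝ) : Antitone (dstar x) := fun _ _ hij =>
  neg_le_neg_iff.1 (Tuple.monotone_sort (fun k => -|x k|) hij)

theorem dstar_comp_perm (x : Fin n → ℝ) (σ : Equiv.Perm (Fin n)) : dstar (x ∘ σ) = dstar x :=
  funext fun i => neg_injective <|
    congrFun (Tuple.comp_perm_comp_sort_eq_comp_sort (f := fun j => -|x j|) (σ := σ)) i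

theorem dstar_of_antitone {x : Fin n → ℝ} (h0 : 0 ≤ x) (hx : Antitone x) : dstar x = x := by
  have habs (i : Fin n) : |x i| = x i := abs_of_nonneg (h0 i)
  have hsort : Tuple.sort (fun j => -|x j|) = Equiv.refl _ := by
    rw [Tuple.sort_eq_refl_iff_monotone]
    simpa only [habs] using hx.neg
  ext i
  rw [dstar, hsort, Equiv.refl_apply, habs]

theorem lorentz_comp_perm (w : ℕ → ℝ) (q : ℝ) (x : Fin n → ℝ) (σ : Equiv.Perm (Fin n)) :
    lorentz w q (x ∘ σ) = lorentz w q x := by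
  rw [lorentz, dstar_comp_perm, lorentz]

theorem lorentz_nonneg (hw : ∀ i < n, 0 ≤ w i) (x : Fin n → ℝ) : 0 ≤ lorentz w q x :=
  sum_nonneg fun i _ => mul_nonneg (hw i i.2) (Real.rpow_nonneg (dstar_nonneg x i) q)

theorem dstar_zero_pos [NeZero n] {x : Fin n → ℝ} (hx : x ≠ 0) : 0 < dstar x 0 := by
  obtain ⟨k, hk⟩ := Function.ne_iff.1 hx
  obtain ⟨i, rfl⟩ := (Tuple.sort fun j => -|x j|).surjective k
  exact (abs_pos.2 hk).trans_le (antitone_dstar x (Fin.zero_le i))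

theorem lorentz_pos (hw : ∀ i < n, 0 ≤ w i) (hw0 : 0 < w 0) {x : Fin n → ℝ} (hx : x ≠ 0) :
    0 < lorentz w q x := by
  have : NeZero n := ⟨by rintro rfl; exact hx (Subsingleton.elim _ _)⟩
  refine sum_pos' (fun i _ => mul_nonneg (hw i i.2) (Real.rpow_nonneg (dstar_nonneg x i) q))
    ⟨0, mem_univ _, mul_pos ?_ (Real.rpow_pos_of_pos (dstar_zero_pos hx) q)⟩
  simpa only [Fin.coe_ofNat_eq_mod, Nat.zero_mod] using hw0

theorem sum_sum_compl_comp_perm {α : Type*} [Fintype α] [DecidableEq α] (f : α → α → ℝ)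
    (σ : Equiv.Perm α) : ∑ i, ∑ j ∈ {i}ᶜ, f (σ i) (σ j) = ∑ i, ∑ j ∈ {i}ᶜ, f i j :=
  Fintype.sum_equiv σ _ _ fun i => sum_equiv σ (by simp) fun _ _ => rfl

theorem lorentz_eq_of_arithmetic (hw : ∀ i < n, w i = b + ((n : ℝ) - 1 - i) * d) (x : Fin n → ℝ) :
    lorentz w q x = b * ∑ i, |x i| ^ q + d / 2 * ∑ i, ∑ j ∈ {i}ᶜ, max |x i| |x j| ^ q := by
  set σ := Tuple.sort fun j => -|x j|
  have hpow : ∑ i, |x i| ^ q = ∑ i, dstar x i ^ q := (Equiv.sum_comp σ fun i => |x i| ^ q).symm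
  have hmax : ∑ i, ∑ j ∈ {i}ᶜ, max |x i| |x j| ^ q =
      2 * ∑ i : Fin n, ((n : ℝ) - 1 - i) * dstar x i ^ q := by
    rw [← sum_sum_compl_max_of_antitone (· ^ q) (antitone_dstar x)]
    exact (sum_sum_compl_comp_perm (fun i j => max |x i| |x j| ^ q) σ).symm
  rw [hpow, hmax, ← mul_assoc, div_mul_cancel₀ d two_ne_zero, mul_sum, mul_sum, ← sum_add_distrib]
  refine sum_congr rfl fun i _ => ?_
  rw [hw i i.2]
  ring

theorem hasLevyRepr_lorentz (hq0 : 0 < q) (hq1 : q ≤ 1) (hb : 0 ≤ b) (hd : 0 ≤ d)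
    (hw : ∀ i < n, w i = b + ((n : ℝ) - 1 - i) * d) :
    HasLevyRepr q (lorentz w q : (Fin n → ℝ) → ℝ) := by
  have hpow (i : Fin n) : HasLevyRepr q fun x : Fin n → ℝ => |x i| ^ q := by
    simpa only [max_self] using HasLevyRepr.max_abs_rpow hq0 hq1 i i
  convert ((HasLevyRepr.sum (s := univ) fun i _ => hpow i).const_smul hb).add
    ((HasLevyRepr.sum (s := univ) fun i _ => HasLevyRepr.sum (s := {i}ᶜ) fun j _ =>
      HasLevyRepr.max_abs_rpow hq0 hq1 i j).const_smul (div_nonneg hd zero_le_two)) using 1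
  ext x
  simp only [lorentz_eq_of_arithmetic hw, Pi.add_apply, Pi.smul_apply, Finset.sum_apply,
    smul_eq_mul]

end Lorentz

theorem eq_sub_mul_of_sub_eq_sub {R : Type*} [CommRing R] {n : ℕ} {w : ℕ → R}
    (hw : ∀ i, i + 2 < n → w i - w (i + 1) = w (i + 1) - w (i + 2)) :
    ∀ i < n, w i = w 0 - i * (w 0 - w 1) := by
  intro i
  induction i using Nat.twoStepInduction with
  | zero => simp
  | one => simp
  | more i ih₀ ih₁ =>
    intro hi
    have h₀ := ih₀ (by lia)
    have h₁ := ih₁ (by lia)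
    have h := hw i hi
    push_cast at h₁ ⊢
    linear_combination 2 * h₁ - h₀ + h

section Definite

variable {V W : Type*} [AddCommGroup V] [AddCommGroup W] {f : V → ℝ} {c : ℝ}

/-- Conditionally negative definite functions on an abelian group. Since only real coefficients
occur, evenness is not automatic and is part of the definition. -/
structure IsCondNegDef (f : V → ℝ) : Prop where
  even : f.Even
  sum_sum_nonpos : ∀ {ι : Type} [Fintype ι] (c : ι → ℝ) (X : ι → V), ∑ i, c i = 0 →
    ∑ i, ∑ j, c i * c j * f (X i - X j) ≤ 0

/-- Positive definite functions on an abelian group. Since only real coefficients occur, evenness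
is not automatic and is part of the definition. -/
structure IsPosDef (f : V → ℝ) : Prop where
  even : f.Even
  sum_sum_nonneg : ∀ {ι : Type} [Fintype ι] (c : ι → ℝ) (X : ι → V),
    0 ≤ ∑ i, ∑ j, c i * c j * f (X i - X j)

namespace IsCondNegDef

theorem const_smul (hf : IsCondNegDef f) (hc : 0 ≤ c) : IsCondNegDef (c • f) where
  even := hf.even.const_smul c
  sum_sum_nonpos a X ha := by
    simp only [Pi.smul_apply, smul_eq_mul, mul_left_comm _ c, ← mul_sum]
    exact mul_nonpos_of_nonneg_of_nonpos hc (hf.sum_sum_nonpos a X ha)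

theorem comp (hf : IsCondNegDef f) (φ : W →+ V) : IsCondNegDef fun x => f (φ x) where
  even x := (congrArg f (map_neg φ x)).trans (hf.even _)
  sum_sum_nonpos a X ha := by
    simpa only [map_sub, Function.comp_apply] using hf.sum_sum_nonpos a (φ ∘ X) ha

theorem integral {Ω : Type*} [MeasurableSpace Ω] {μ : Measure Ω} {f : Ω → V → ℝ}
    (hf : ∀ᵐ ω ∂μ, IsCondNegDef (f ω)) (hint : ∀ x, Integrable (f · x) μ) :
    IsCondNegDef fun x => ∫ ω, f ω x ∂μ where
  even x := integral_congr_ae <| hf.mono fun ω hω => hω.even x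
  sum_sum_nonpos a X ha := by
    have hsum : ∑ i, ∑ j, a i * a j * ∫ ω, f ω (X i - X j) ∂μ =
        ∫ ω, ∑ i, ∑ j, a i * a j * f ω (X i - X j) ∂μ := by
      rw [integral_finsetSum _ fun i _ => integrable_finsetSum _ fun j _ => (hint _).const_mul _]
      refine sum_congr rfl fun i _ => ?_
      rw [integral_finsetSum _ fun j _ => (hint _).const_mul _]
      exact sum_congr rfl fun j _ => (integral_const_mul _ _).symm
    rw [hsum]
    exact integral_nonpos_of_ae <| hf.mono fun ω hω => hω.sum_sum_nonpos a X ha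

theorem one_sub_cos : IsCondNegDef fun t : ℝ => 1 - Real.cos t where
  even t := by simp only [Real.cos_neg]
  sum_sum_nonpos a t ha := by
    have hform : ∑ i, ∑ j, a i * a j * (1 - Real.cos (t i - t j)) =
        (∑ i, a i) ^ 2 - (∑ i, a i * Real.cos (t i)) ^ 2 - (∑ i, a i * Real.sin (t i)) ^ 2 := by
      simp only [sq, sum_mul_sum, ← sum_sub_distrib, Real.cos_sub]
      refine sum_congr rfl fun i _ => sum_congr rfl fun j _ => ?_
      ring
    rw [hform, ha]
    nlinarith [sq_nonneg (∑ i, a i * Real.cos (t i)), sq_nonneg (∑ i, a i * Real.sin (t i))]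

end IsCondNegDef

end Definite

section AbsRpow

variable {q : ℝ}

theorem integrableOn_one_sub_cos_mul_rpow (hq0 : 0 < q) (hq2 : q < 2) (t : ℝ) :
    IntegrableOn (fun s : ℝ => (1 - Real.cos (t * s)) * s ^ (-1 - q)) (Set.Ioi 0) := by
  have hmeas : Measurable fun s : ℝ => (1 - Real.cos (t * s)) * s ^ (-1 - q) := by fun_prop
  have hnonneg (s : ℝ) : 0 ≤ 1 - Real.cos (t * s) := sub_nonneg.2 (Real.cos_le_one _)
  rw [← Set.Ioc_union_Ioi_eq_Ioi zero_le_one]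
  refine IntegrableOn.union ?_ ?_
  · have hdom : IntegrableOn (fun s : ℝ => s ^ (1 - q)) (Set.Ioc 0 1) := by
      rw [← intervalIntegrable_iff_integrableOn_Ioc_of_le zero_le_one]
      exact intervalIntegral.intervalIntegrable_rpow' (by linarith)
    refine (hdom.const_mul (t ^ 2 / 2)).mono' hmeas.aestronglyMeasurable ?_
    filter_upwards [ae_restrict_mem measurableSet_Ioc] with s hs
    have hs0 : 0 < s := hs.1
    have hsplit : s ^ (1 - q) = s ^ 2 * s ^ (-1 - q) := by
      rw [← Real.rpow_natCast, ← Real.rpow_add hs0]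
      ring_nf
    rw [Real.norm_of_nonneg (mul_nonneg (hnonneg s) (by positivity)), hsplit, ← mul_assoc]
    gcongr
    linarith [Real.one_sub_sq_div_two_le_cos (x := t * s), mul_pow t s 2]
  · have hdom : IntegrableOn (fun s : ℝ => s ^ (-1 - q)) (Set.Ioi 1) :=
      integrableOn_Ioi_rpow_of_lt (by linarith) zero_lt_one
    refine (hdom.const_mul 2).mono' hmeas.aestronglyMeasurable ?_
    filter_upwards [ae_restrict_mem measurableSet_Ioi] with s hs
    have hs0 : 0 < s := zero_lt_one.trans hs
    rw [Real.norm_of_nonneg (mul_nonneg (hnonneg s) (by positivity))]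
    gcongr
    linarith [Real.neg_one_le_cos (t * s)]

theorem integral_one_sub_cos_mul_rpow (hq0 : 0 < q) (t : ℝ) :
    ∫ s in Set.Ioi (0 : ℝ), (1 - Real.cos (t * s)) * s ^ (-1 - q) =
      |t| ^ q * ∫ s in Set.Ioi (0 : ℝ), (1 - Real.cos s) * s ^ (-1 - q) := by
  rcases eq_or_ne t 0 with rfl | ht
  · simp [hq0.ne']
  have ht' : 0 < |t| := abs_pos.2 ht
  have hscale : ∀ s ∈ Set.Ioi (0 : ℝ), (1 - Real.cos (t * s)) * s ^ (-1 - q) =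
      |t| ^ (1 + q) * ((1 - Real.cos (|t| * s)) * (|t| * s) ^ (-1 - q)) := by
    intro s hs
    have hs0 : 0 < s := hs
    have hcos : Real.cos (|t| * s) = Real.cos (t * s) := by
      rw [← Real.cos_abs (t * s), abs_mul, abs_of_pos hs0]
    have hpow : |t| ^ (1 + q) * |t| ^ (-1 - q) = 1 := by
      rw [← Real.rpow_add ht', add_add_sub_cancel, add_neg_cancel, Real.rpow_zero]
    rw [hcos, Real.mul_rpow ht'.le hs0.le]
    linear_combination (-(1 - Real.cos (t * s)) * s ^ (-1 - q)) * hpow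
  have hsubst := integral_comp_mul_left_Ioi (fun s => (1 - Real.cos s) * s ^ (-1 - q)) 0 ht'
  rw [mul_zero] at hsubst
  rw [setIntegral_congr_fun measurableSet_Ioi hscale, integral_const_mul, hsubst, smul_eq_mul,
    ← mul_assoc, add_comm, Real.rpow_add_one ht'.ne', mul_inv_cancel_right₀ ht'.ne']

theorem integral_one_sub_cos_mul_rpow_pos (hq0 : 0 < q) (hq2 : q < 2) :
    0 < ∫ s in Set.Ioi (0 : ℝ), (1 - Real.cos s) * s ^ (-1 - q) := by
  have hint := integrableOn_one_sub_cos_mul_rpow hq0 hq2 1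
  simp only [one_mul] at hint
  rw [setIntegral_pos_iff_support_of_nonneg_ae _ hint]
  · refine lt_of_lt_of_le ?_ (measure_mono (s := Set.Ioo 0 1) fun s hs => ⟨?_, hs.1⟩)
    · simp only [Real.volume_Ioo, sub_zero, ENNReal.ofReal_one, zero_lt_one]
    · have hcos : Real.cos s < 1 := by
        rw [← Real.cos_zero]
        exact Real.cos_lt_cos_of_nonneg_of_le_pi le_rfl (by linarith [hs.2, Real.pi_gt_three]) hs.1
      exact (mul_pos (sub_pos.2 hcos) (Real.rpow_pos_of_pos hs.1 _)).ne'
  · filter_upwards [ae_restrict_mem measurableSet_Ioi] with s hs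
    exact mul_nonneg (sub_nonneg.2 (Real.cos_le_one s)) (Real.rpow_nonneg (le_of_lt hs) _)

theorem IsCondNegDef.abs_rpow (hq0 : 0 < q) (hq2 : q < 2) :
    IsCondNegDef fun t : ℝ => |t| ^ q := by
  set C := ∫ s in Set.Ioi (0 : ℝ), (1 - Real.cos s) * s ^ (-1 - q)
  have hC : 0 < C := integral_one_sub_cos_mul_rpow_pos hq0 hq2
  have hmix : IsCondNegDef fun t : ℝ =>
      ∫ s in Set.Ioi (0 : ℝ), (1 - Real.cos (t * s)) * s ^ (-1 - q) := by
    refine .integral ?_ (integrableOn_one_sub_cos_mul_rpow hq0 hq2)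
    filter_upwards [ae_restrict_mem measurableSet_Ioi] with s hs
    convert (one_sub_cos.comp (AddMonoidHom.mulRight s)).const_smul
      (Real.rpow_nonneg (le_of_lt hs) (-1 - q)) using 1
    ext t
    exact mul_comm _ _
  convert hmix.const_smul (inv_nonneg.2 hC.le) using 1
  ext t
  rw [Pi.smul_apply, smul_eq_mul, integral_one_sub_cos_mul_rpow hq0, mul_comm,
    mul_inv_cancel_right₀ hC.ne']

theorem IsCondNegDef.integral_abs_rpow {E Ω : Type*} [AddCommGroup E] [Module ℝ E]
    [MeasurableSpace Ω] {μ : Measure Ω} (hq0 : 0 < q) (hq2 : q < 2) (T : E →ₗ[ℝ] (Ω → ℝ))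
    (hint : ∀ x, Integrable (fun ω => |T x ω| ^ q) μ) :
    IsCondNegDef fun x => ∫ ω, |T x ω| ^ q ∂μ :=
  .integral (.of_forall fun ω => (abs_rpow hq0 hq2).comp (LinearMap.proj ω ∘ₗ T).toAddMonoidHom)
    hint

end AbsRpow

section SecondDiff

variable {V : Type*} [AddCommGroup V] {f : V → ℝ}

/-- The negative of the symmetric second difference of `f` in direction `v`. The sign is chosen such
that this operation preserves positive definiteness. -/
def secondDiff (v : V) (f : V → ℝ) (x : V) : ℝ :=
  2 * f x - f (x + v) - f (x - v)

theorem even_secondDiff (hf : f.Even) (v : V) : (secondDiff v f).Even := fun x => by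
  rw [secondDiff, secondDiff, hf x, ← hf (x + v), ← hf (x - v), neg_add, neg_sub', sub_neg_eq_add,
    ← sub_eq_add_neg, sub_right_comm]

theorem sum_sum_mul_secondDiff {ι : Type*} [Fintype ι] (v : V) (f : V → ℝ) (c : ι → ℝ)
    (X : ι → V) :
    ∑ i, ∑ j, c i * c j * secondDiff v f (X i - X j) =
      ∑ i : ι ⊕ ι, ∑ j : ι ⊕ ι, Sum.elim c (-c) i * Sum.elim c (-c) j *
        f (Sum.elim X (X + fun _ => v) i - Sum.elim X (X + fun _ => v) j) := by
  simp only [Fintype.sum_sum_type, Sum.elim_inl, Sum.elim_inr, Pi.add_apply, Pi.neg_apply,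
    ← sum_add_distrib]
  refine sum_congr rfl fun i _ => sum_congr rfl fun j _ => ?_
  rw [secondDiff, add_sub_add_right_eq_sub, ← sub_sub (X i), add_sub_right_comm]
  ring

theorem IsCondNegDef.isPosDef_secondDiff_neg (hf : IsCondNegDef f) (v : V) :
    IsPosDef (secondDiff v (-f)) where
  even := even_secondDiff (hf.even.left_comp Neg.neg) v
  sum_sum_nonneg c X := by
    have h := hf.sum_sum_nonpos (Sum.elim c (-c)) (Sum.elim X (X + fun _ => v)) (by simp)
    rw [sum_sum_mul_secondDiff]
    simpa only [Pi.neg_apply, mul_neg, sum_neg_distrib, neg_nonneg] using h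

theorem IsPosDef.secondDiff (hf : IsPosDef f) (v : V) : IsPosDef (secondDiff v f) where
  even := even_secondDiff hf.even v
  sum_sum_nonneg c X := by
    rw [sum_sum_mul_secondDiff]
    exact hf.sum_sum_nonneg _ _

end SecondDiff

section Comb

theorem sum_sum_sub_le_mul_tsum {F : ℤ → ℝ} (hF : Summable F) (hF0 : 0 ≤ F) (K : ℕ) :
    ∑ k : Fin K, ∑ l : Fin K, F (k - l) ≤ K * ∑' d, F d := by
  have hrow (k : Fin K) : ∑ l : Fin K, F (k - l) ≤ ∑' d, F d := by
    have hinj : Function.Injective fun l : Fin K => (k - l : ℤ) :=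
      (sub_right_injective (b := (k : ℤ))).comp (Nat.cast_injective.comp Fin.val_injective)
    calc ∑ l : Fin K, F (k - l) = ∑' l : Fin K, F (k - l) := (tsum_fintype _).symm
      _ ≤ ∑' d, F d := tsum_comp_le_tsum_of_inj hF hF0 hinj
  calc ∑ k : Fin K, ∑ l : Fin K, F (k - l) ≤ ∑ _k : Fin K, ∑' d, F d :=
        sum_le_sum fun k _ => hrow k
    _ = K * ∑' d, F d := by rw [sum_const, card_univ, Fintype.card_fin, nsmul_eq_mul]

namespace IsPosDef

variable {V : Type*} [AddCommGroup V] {h : V → ℝ}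

theorem two_mul_abs_sum_sum_le (hh : IsPosDef h) {ι κ : Type} [Fintype ι] [Fintype κ]
    (X : ι → V) (Y : κ → V) :
    2 * |∑ i, ∑ j, h (X i - Y j)| ≤
      ∑ i, ∑ i', h (X i - X i') + ∑ j, ∑ j', h (Y j - Y j') := by
  have hform (s : ℝ) : 0 ≤ ∑ i, ∑ i', h (X i - X i') + 2 * s * ∑ i, ∑ j, h (X i - Y j) +
      s ^ 2 * ∑ j, ∑ j', h (Y j - Y j') := by
    have hsymm : ∑ j, ∑ i, h (Y j - X i) = ∑ i, ∑ j, h (X i - Y j) := by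
      rw [sum_comm]
      simp only [← neg_sub (X _), hh.even (X _ - Y _)]
    have hpos := hh.sum_sum_nonneg (Sum.elim (fun _ : ι => 1) fun _ : κ => s) (Sum.elim X Y)
    simp only [Fintype.sum_sum_type, Sum.elim_inl, Sum.elim_inr, sum_add_distrib, one_mul, mul_one,
      ← mul_sum, hsymm] at hpos
    linarith
  have hplus := hform 1
  have hminus := hform (-1)
  rw [← abs_of_pos (two_pos (α := ℝ)), ← abs_mul, abs_le]
  constructor <;> linarith

theorem abs_sum_sum_comb_le (hh : IsPosDef h) {p : V} (hsum : Summable fun d : ℕ => h (d • p))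
    (e : V) (K : ℕ) :
    |∑ k : Fin K, ∑ l : Fin K, h ((2 * K + k - l : ℕ) • p + e)| ≤
      K * ∑' d : ℤ, |h (d • p)| := by
  have hsum' : Summable fun d : ℤ => |h (d • p)| := by
    refine .of_nat_of_neg ?_ ?_
    · simpa only [natCast_zsmul] using hsum.abs
    · simpa only [neg_smul, natCast_zsmul, hh.even (_ • p)] using hsum.abs
  have hdiag := (sum_le_sum fun k _ => sum_le_sum fun l _ => le_abs_self _).trans
    (sum_sum_sub_le_mul_tsum hsum' (fun d => abs_nonneg _) K)
  have hcross := hh.two_mul_abs_sum_sum_le (fun k : Fin K => (2 * K + k : ℕ) • p + e)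
    fun l : Fin K => (l : ℕ) • p
  have hXX (k k' : Fin K) : ((2 * K + k : ℕ) • p + e) - ((2 * K + k' : ℕ) • p + e) =
      (k - k' : ℤ) • p := by module
  have hYY (l l' : Fin K) : (l : ℕ) • p - (l' : ℕ) • p = (l - l' : ℤ) • p := by module
  have hXY (k l : Fin K) : ((2 * K + k : ℕ) • p + e) - (l : ℕ) • p =
      (2 * K + k - l : ℕ) • p + e := by
    rw [sub_nsmul p (by lia)]
    abel
  simp only [hXX, hYY, hXY] at hcross
  linarith

/-- If `h` is summable along the multiples of `p`, then two translated combs of `K` multiples of `p`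
have correlation `O(K)`, whereas `K ^ 2` values `c * g d` with `d ≤ 3 * K` would exceed this. -/
theorem eq_zero_of_tendsto (hh : IsPosDef h) {p e : V} {c : ℝ} {g : ℕ → ℝ}
    (hsum : Summable fun d : ℕ => h (d • p))
    (hcross : ∀ᶠ d : ℕ in atTop, h (d • p + e) = c * g d) (hg : Antitone g)
    (htop : Tendsto (fun d : ℕ => d * g d) atTop atTop) : c = 0 := by
  set S := ∑' d : ℤ, |h (d • p)|
  obtain ⟨N, hN⟩ := eventually_atTop.1 hcross
  have hbound (K : ℕ) (hNK : N ≤ K) (hK : 0 < K) : |c| * ((3 * K : ℕ) * g (3 * K)) ≤ 3 * S := by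
    have hcomb := hh.abs_sum_sum_comb_le hsum e K
    have hval (k l : Fin K) : h ((2 * K + k - l : ℕ) • p + e) = c * g (2 * K + k - l) :=
      hN _ (by lia)
    have hlower : K * (K * g (3 * K)) ≤ ∑ k : Fin K, ∑ l : Fin K, g (2 * K + k - l) :=
      calc K * (K * g (3 * K)) = ∑ _k : Fin K, ∑ _l : Fin K, g (3 * K) := by simp
        _ ≤ _ := sum_le_sum fun k _ => sum_le_sum fun l _ => hg (by lia)
    simp only [hval, ← mul_sum, abs_mul] at hcomb
    refine le_of_mul_le_mul_left ?_ (Nat.cast_pos.2 hK)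
    push_cast
    linarith [mul_le_mul_of_nonneg_left (hlower.trans (le_abs_self _)) (abs_nonneg c)]
  by_contra hc
  have hmul : Tendsto (fun K : ℕ => 3 * K) atTop atTop := tendsto_id.const_mul_atTop' three_pos
  obtain ⟨K, hKS, hNK, hK⟩ := (((htop.comp hmul).const_mul_atTop (abs_pos.2 hc)
    |>.eventually_gt_atTop (3 * S)).and
      ((eventually_ge_atTop N).and (eventually_gt_atTop 0))).exists
  exact (hbound K hNK hK).not_gt hKS

end IsPosDef

end Comb

section Concave

theorem summable_sub_succ_of_antitone {g : ℕ → ℝ} (hg : Antitone g) (hg0 : 0 ≤ g) :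
    Summable fun n => g n - g (n + 1) := by
  refine summable_of_sum_range_le (c := g 0) (fun n => sub_nonneg.2 (hg n.le_succ)) fun n => ?_
  rw [sum_range_sub']
  exact sub_le_self _ (hg0 n)

theorem antitone_sub_natCast_of_concaveOn {f : ℝ → ℝ} (hf : ConcaveOn ℝ (Set.Ici 0) f) :
    Antitone fun n : ℕ => f (n + 1) - f n := by
  refine antitone_nat_of_succ_le fun n => ?_
  have hslope := hf.slope_anti_adjacent (x := n) (y := n + 1) (z := n + 2)
    (Set.mem_Ici.2 n.cast_nonneg) (Set.mem_Ici.2 (by positivity)) (by linarith) (by linarith)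
  push_cast
  ring_nf at hslope ⊢
  linarith

theorem tendsto_mul_rpow_succ_sub_rpow {q : ℝ} (hq0 : 0 < q) (hq1 : q ≤ 1) :
    Tendsto (fun n : ℕ => (n : ℝ) * ((n + 1) ^ q - (n : ℝ) ^ q)) atTop atTop := by
  have hpow : Tendsto (fun n : ℕ => (2 ^ q - 1) * (n : ℝ) ^ q) atTop atTop :=
    ((tendsto_rpow_atTop hq0).comp tendsto_natCast_atTop_atTop).const_mul_atTop
      (sub_pos.2 (Real.one_lt_rpow one_lt_two hq0))
  refine tendsto_atTop_mono' _ ?_ hpow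
  filter_upwards [eventually_ge_atTop 1] with n hn
  have hn1 : (1 : ℝ) ≤ n := Nat.one_le_cast.2 hn
  have hn0 : (0 : ℝ) < n := zero_lt_one.trans_le hn1
  -- `n + 1` is the convex combination of `n` and `2 * n` with weights `1 - 1 / n` and `1 / n`
  have hconc := (Real.concaveOn_rpow hq0.le hq1).2 (Set.mem_Ici.2 hn0.le)
    (Set.mem_Ici.2 (mul_pos two_pos hn0).le) (sub_nonneg.2 (inv_le_one_of_one_le₀ hn1))
    (inv_nonneg.2 hn0.le) (sub_add_cancel _ _)
  have hpt : (1 - (n : ℝ)⁻¹) * n + (n : ℝ)⁻¹ * (2 * n) = n + 1 := by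
    field_simp
    ring
  simp only [smul_eq_mul, hpt, Real.mul_rpow two_pos.le hn0.le] at hconc
  calc (2 ^ q - 1) * (n : ℝ) ^ q
      = n * ((1 - (n : ℝ)⁻¹) * (n : ℝ) ^ q + (n : ℝ)⁻¹ * (2 ^ q * (n : ℝ) ^ q) - (n : ℝ) ^ q) := by
        field_simp
        ring
    _ ≤ n * ((n + 1) ^ q - (n : ℝ) ^ q) := by gcongr

end Concave

section Obstruction

/-- The triple second difference kills every term independent of one of `u₁, u₂, u₃`, and turns
`f (d + max u₁ u₂ u₃)` into a function with summable values along `(d, 0, 0, 0)`, but values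
`f (d + 1) - f d` along `(d, 1, 0, 0)`. -/
theorem IsCondNegDef.coeff_eq_zero_of_eq_max {M : ℝ × ℝ × ℝ × ℝ → ℝ} (hM : IsCondNegDef M)
    {A₁ A₂ A₃ : ℝ → ℝ → ℝ → ℝ} {c : ℝ} {f : ℝ → ℝ}
    (hloc : ∀ d u₁ u₂ u₃, 2 ≤ d → |u₁| ≤ 2 → |u₂| ≤ 2 → |u₃| ≤ 2 →
      M (d, u₁, u₂, u₃) =
        A₁ d u₂ u₃ + A₂ d u₁ u₃ + A₃ d u₁ u₂ + c * f (d + max u₁ (max u₂ u₃)))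
    (hconc : ConcaveOn ℝ (Set.Ici 0) f) (hmono : MonotoneOn f (Set.Ici 0))
    (htop : Tendsto (fun n : ℕ => n * (f (n + 1) - f n)) atTop atTop) : c = 0 := by
  set g : ℕ → ℝ := fun n => f (n + 1) - f n with hg
  have hanti : Antitone g := antitone_sub_natCast_of_concaveOn hconc
  have hg0 : 0 ≤ g := fun n => sub_nonneg.2 <|
    hmono (Set.mem_Ici.2 n.cast_nonneg) (Set.mem_Ici.2 (by positivity)) (by linarith)
  set H : ℝ × ℝ × ℝ × ℝ → ℝ :=
    secondDiff (0, 1, 0, 0) (secondDiff (0, 0, 1, 0) (secondDiff (0, 0, 0, 1) (-M))) with hH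
  have hpos : IsPosDef H := ((hM.isPosDef_secondDiff_neg _).secondDiff _).secondDiff _
  have hH0 (d : ℝ) (hd : 2 ≤ d) : H (d, 0, 0, 0) = -c * (2 * f d - f (d - 1) - f (d + 1)) := by
    simp only [hH, secondDiff, Pi.neg_apply, Prod.mk_add_mk, Prod.mk_sub_mk, add_zero, sub_zero,
      zero_add, zero_sub]
    simp (discharger := norm_num) only [hloc d _ _ _ hd]
    norm_num
    ring_nf
  have hH1 (d : ℝ) (hd : 2 ≤ d) : H (d, 1, 0, 0) = -c * (f (d + 1) - f d) := by
    simp only [hH, secondDiff, Pi.neg_apply, Prod.mk_add_mk, Prod.mk_sub_mk, add_zero, sub_zero,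
      zero_add, zero_sub, sub_self, one_add_one_eq_two]
    simp (discharger := norm_num) only [hloc d _ _ _ hd]
    norm_num
    ring_nf
  have hsum : Summable fun n : ℕ => H (n • (1, 0, 0, 0)) := by
    have hdrop := (summable_nat_add_iff 1).2 (summable_sub_succ_of_antitone hanti hg0)
    refine (summable_nat_add_iff 2).1 ((hdrop.mul_left (-c)).congr fun n => ?_)
    simp only [Prod.smul_mk, nsmul_eq_mul, mul_one, mul_zero, hg]
    rw [hH0 _ (by norm_num)]
    push_cast
    ring_nf
  refine neg_eq_zero.1 (hpos.eq_zero_of_tendsto hsum (e := (0, 1, 0, 0)) ?_ hanti htop)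
  filter_upwards [eventually_ge_atTop 2] with n hn
  simp only [Prod.smul_mk, nsmul_eq_mul, mul_one, mul_zero, Prod.mk_add_mk, add_zero, zero_add]
  exact hH1 n (Nat.ofNat_le_cast.2 hn)

end Obstruction

section BlockVec

/-- The vector `(2d, …, 2d, d + u₁, d + u₂, d + u₃, 0, …, 0)` with `k` leading entries `2d`, as a
function of `(d, u₁, u₂, u₃)`. For `2 ≤ d` and `|uᵢ| ≤ 2` its three blocks are in decreasing
order. -/
def blockVec (n k : ℕ) : ℝ × ℝ × ℝ × ℝ →+ (Fin n → ℝ) where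
  toFun z i :=
    if i.1 < k then 2 * z.1
    else if i.1 = k then z.1 + z.2.1
    else if i.1 = k + 1 then z.1 + z.2.2.1
    else if i.1 = k + 2 then z.1 + z.2.2.2
    else 0
  map_zero' := by
    ext i
    simp only [Prod.fst_zero, Prod.snd_zero, mul_zero, add_zero, ite_self, Pi.zero_apply]
  map_add' z z' := by
    ext i
    simp only [Pi.add_apply, Prod.fst_add, Prod.snd_add]
    split_ifs <;> ring

theorem blockVec_apply (n k : ℕ) (d u₁ u₂ u₃ : ℝ) (i : Fin n) :
    blockVec n k (d, u₁, u₂, u₃) i =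
      if i.1 < k then 2 * d
      else if i.1 = k then d + u₁
      else if i.1 = k + 1 then d + u₂
      else if i.1 = k + 2 then d + u₃
      else 0 := rfl

variable {n k : ℕ} {q d u₁ u₂ u₃ : ℝ}

theorem lorentz_blockVec_swap₁₂ (hk : k + 2 < n) (w : ℕ → ℝ) (q d u₁ u₂ u₃ : ℝ) :
    lorentz w q (blockVec n k (d, u₂, u₁, u₃)) = lorentz w q (blockVec n k (d, u₁, u₂, u₃)) := by
  rw [← lorentz_comp_perm w q _ (Equiv.swap (⟨k, by lia⟩ : Fin n) ⟨k + 1, by lia⟩)]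
  congr 1
  ext i
  simp only [blockVec_apply, Function.comp_apply, Equiv.swap_apply_def, Fin.ext_iff]
  grind

theorem lorentz_blockVec_swap₂₃ (hk : k + 2 < n) (w : ℕ → ℝ) (q d u₁ u₂ u₃ : ℝ) :
    lorentz w q (blockVec n k (d, u₁, u₃, u₂)) = lorentz w q (blockVec n k (d, u₁, u₂, u₃)) := by
  rw [← lorentz_comp_perm w q _ (Equiv.swap (⟨k + 1, by lia⟩ : Fin n) ⟨k + 2, by lia⟩)]
  congr 1
  ext i
  simp only [blockVec_apply, Function.comp_apply, Equiv.swap_apply_def, Fin.ext_iff]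
  grind

theorem dstar_blockVec_of_le (hd : 2 ≤ d) (h₁ : |u₁| ≤ 2) (h₃ : |u₃| ≤ 2) (h₂₁ : u₂ ≤ u₁)
    (h₃₂ : u₃ ≤ u₂) :
    dstar (blockVec n k (d, u₁, u₂, u₃)) = blockVec n k (d, u₁, u₂, u₃) := by
  rw [abs_le] at h₁ h₃
  refine dstar_of_antitone (fun i => ?_) fun i j hij => ?_
  · rw [Pi.zero_apply, blockVec_apply]
    split_ifs <;> linarith
  · have hij' : i.1 ≤ j.1 := hij
    simp only [blockVec_apply]
    split_ifs <;> first | linarith | lia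

theorem lorentz_blockVec_of_le (hk : k + 2 < n) (w : ℕ → ℝ) (hq0 : q ≠ 0) (hd : 2 ≤ d)
    (h₁ : |u₁| ≤ 2) (h₃ : |u₃| ≤ 2) (h₂₁ : u₂ ≤ u₁) (h₃₂ : u₃ ≤ u₂) :
    lorentz w q (blockVec n k (d, u₁, u₂, u₃)) =
      (∑ i : Fin k, w i) * (2 * d) ^ q + w k * (d + u₁) ^ q + w (k + 1) * (d + u₂) ^ q +
        w (k + 2) * (d + u₃) ^ q := by
  obtain ⟨m, rfl⟩ := Nat.exists_eq_add_of_le (Nat.succ_le_of_lt hk)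
  have htail (i : ℕ) :
      ¬ k + 2 + 1 + i < k ∧ k + 2 + 1 + i ≠ k ∧ k + 2 + 1 + i ≠ k + 1 ∧ k + 2 + 1 + i ≠ k + 2 := by
    lia
  rw [lorentz, dstar_blockVec_of_le hd h₁ h₃ h₂₁ h₃₂]
  simp [blockVec_apply, Fin.sum_univ_add, hq0, sum_mul, htail, ← add_assoc]

theorem triple_induction_of_swap {α : Type*} [LinearOrder α] {P : α → α → α → Prop}
    (swap₁₂ : ∀ a b c, P a b c → P b a c) (swap₂₃ : ∀ a b c, P a b c → P a c b)
    (sorted : ∀ a b c, b ≤ a → c ≤ b → P a b c) (a b c : α) : P a b c := by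
  rcases le_total a b with hab | hab <;> rcases le_total a c with hac | hac <;>
    rcases le_total b c with hbc | hbc <;> grind

theorem lorentz_blockVec (hk : k + 2 < n) (w : ℕ → ℝ) (hq0 : q ≠ 0) (hd : 2 ≤ d)
    (h₁ : |u₁| ≤ 2) (h₂ : |u₂| ≤ 2) (h₃ : |u₃| ≤ 2) :
    lorentz w q (blockVec n k (d, u₁, u₂, u₃)) =
      (∑ i : Fin k, w i) * (2 * d) ^ q +
        w (k + 2) * ((d + u₁) ^ q + (d + u₂) ^ q + (d + u₃) ^ q) +
        (w (k + 1) - w (k + 2)) *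
          ((d + max u₁ u₂) ^ q + (d + max u₁ u₃) ^ q + (d + max u₂ u₃) ^ q) +
        (w k - 2 * w (k + 1) + w (k + 2)) * (d + max u₁ (max u₂ u₃)) ^ q := by
  induction u₁, u₂, u₃ using triple_induction_of_swap with
  | swap₁₂ u₁ u₂ u₃ ih =>
    rw [lorentz_blockVec_swap₁₂ hk, ih h₂ h₁ h₃, max_comm u₂ u₁, max_left_comm u₂ u₁]
    ring
  | swap₂₃ u₁ u₂ u₃ ih =>
    rw [lorentz_blockVec_swap₂₃ hk, ih h₁ h₃ h₂, max_comm u₃ u₂]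
    ring
  | sorted u₁ u₂ u₃ h₂₁ h₃₂ =>
    rw [lorentz_blockVec_of_le hk w hq0 hd h₁ h₃ h₂₁ h₃₂, max_eq_left h₃₂,
      max_eq_left (h₃₂.trans h₂₁), max_eq_left h₂₁]
    ring

theorem secondDiff_weights_eq_zero {w : ℕ → ℝ} (hq0 : 0 < q) (hq1 : q ≤ 1)
    (hw : ∀ i < n, 0 ≤ w i) (hw0 : 0 < w 0) {Ω : Type*} [MeasurableSpace Ω] {μ : Measure Ω}
    (T : (Fin n → ℝ) →ₗ[ℝ] (Ω → ℝ)) (hT : ∀ x, ∫ ω, |T x ω| ^ q ∂μ = lorentz w q x)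
    (hk : k + 2 < n) : w k - 2 * w (k + 1) + w (k + 2) = 0 := by
  -- a Bochner integral that is positive cannot be a junk value
  have hint (x : Fin n → ℝ) : Integrable (fun ω => |T x ω| ^ q) μ := by
    rcases eq_or_ne x 0 with rfl | hx
    · simp [hq0.ne']
    · exact .of_integral_ne_zero (by rw [hT]; exact (lorentz_pos hw hw0 hx).ne')
  have hcnd := (IsCondNegDef.integral_abs_rpow hq0 (by linarith) T hint).comp (blockVec n k)
  simp only [hT] at hcnd
  refine hcnd.coeff_eq_zero_of_eq_max (f := (· ^ q))
    (A₁ := fun d u₂ u₃ => (∑ i : Fin k, w i) * (2 * d) ^ q +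
      w (k + 2) * ((d + u₂) ^ q + (d + u₃) ^ q) + (w (k + 1) - w (k + 2)) * (d + max u₂ u₃) ^ q)
    (A₂ := fun d u₁ u₃ => w (k + 2) * (d + u₁) ^ q + (w (k + 1) - w (k + 2)) * (d + max u₁ u₃) ^ q)
    (A₃ := fun d u₁ u₂ => (w (k + 1) - w (k + 2)) * (d + max u₁ u₂) ^ q)
    (fun d u₁ u₂ u₃ hd h₁ h₂ h₃ => ?_) (Real.concaveOn_rpow hq0.le hq1)
    (Real.monotoneOn_rpow_Ici_of_exponent_nonneg hq0.le) (tendsto_mul_rpow_succ_sub_rpow hq0 hq1)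
  rw [lorentz_blockVec hk w hq0.ne' hd h₁ h₂ h₃]
  ring

end BlockVec

theorem pos_one_of_antitone_of_exists_ne_zero {n : ℕ} {a : ℕ → ℝ}
    (hmono : ∀ i, 1 ≤ i → i + 1 ≤ n → a (i + 1) ≤ a i) (hnonneg : ∀ i, 1 ≤ i → i ≤ n → 0 ≤ a i)
    (hnz : ∃ i, 1 ≤ i ∧ i ≤ n ∧ a i ≠ 0) : 0 < a 1 := by
  obtain ⟨i, hi, hin, hai⟩ := hnz
  have hanti : AntitoneOn a (Set.Icc 1 n) := antitoneOn_of_succ_le Set.ordConnected_Icc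
    fun j _ hj hj' => hmono j hj.1 hj'.2
  exact ((hnonneg i hi hin).lt_of_ne' hai).trans_le
    (hanti ⟨le_rfl, hi.trans hin⟩ ⟨hi, hin⟩ hi)

theorem stmt0_general (n : ℕ) (hn : 2 ≤ n) (q : ℝ) (hq0 : 0 < q) (hq1 : q ≤ 1)
    (a : ℕ → ℝ) (ha₁ : 0 < a 1) (ha₂ : a 2 ≤ a 1)
    (hnonneg : ∀ i, 1 ≤ i → i ≤ n → 0 ≤ a i) :
    (∃ (Ω : Type) (_ : MeasurableSpace Ω) (μ : Measure Ω)
        (T : (Fin n → ℝ) →ₗ[ℝ] (Ω → ℝ)),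
      ∀ x : Fin n → ℝ,
        (∫ ω, |T x ω| ^ q ∂μ) =
          ((∑ i : Fin n, a (i.1 + 1) * dstar x i ^ q) ^ (1 / q)) ^ q) ↔
    (∀ i, 1 ≤ i → i + 2 ≤ n → a i - a (i + 1) = a (i + 1) - a (i + 2)) := by
  have hw (i : ℕ) (hi : i < n) : 0 ≤ a (i + 1) := hnonneg (i + 1) (by lia) hi
  have hnorm (x : Fin n → ℝ) : ((∑ i : Fin n, a (i.1 + 1) * dstar x i ^ q) ^ (1 / q)) ^ q =
      lorentz (fun i => a (i + 1)) q x := by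
    rw [one_div]
    exact Real.rpow_inv_rpow (lorentz_nonneg hw x) hq0.ne'
  simp only [hnorm]
  constructor
  · rintro ⟨Ω, _, μ, T, hT⟩ i hi hin
    obtain ⟨k, rfl⟩ := Nat.exists_eq_add_of_le' hi
    linarith [secondDiff_weights_eq_zero hq0 hq1 hw ha₁ T hT (k := k) (by lia)]
  · intro h
    have harith := eq_sub_mul_of_sub_eq_sub (w := fun i => a (i + 1))
      fun i hi => h (i + 1) (by lia) hi
    have hlast : a n = a 1 - (n - 1) * (a 1 - a 2) := by
      simpa [Nat.sub_add_cancel (one_le_two.trans hn), Nat.cast_pred (two_pos.trans_le hn)]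
        using harith (n - 1) (by lia)
    refine (hasLevyRepr_lorentz hq0 hq1 (hnonneg n (by lia) le_rfl) (sub_nonneg.2 ha₂)
      fun i hi => ?_).exists_linearMap
    rw [hlast]
    linear_combination harith i hi

/-- For `n ≥ 2`, `0 < q ≤ 1` and weights `a 1 ≥ a 2 ≥ … ≥ a n ≥ 0` not all zero,
the Lorentz space `ℓ_{w,q}^n` is isometric to a subspace of `L_q` iff the
weights form an arithmetic progression. -/
theorem stmt0 (n : ℕ) (hn : 2 ≤ n) (q : ℝ) (hq0 : 0 < q) (hq1 : q ≤ 1)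
    (a : ℕ → ℝ)
    (hmono : ∀ i, 1 ≤ i → i + 1 ≤ n → a (i + 1) ≤ a i)
    (hnonneg : ∀ i, 1 ≤ i → i ≤ n → 0 ≤ a i)
    (hnz : ∃ i, 1 ≤ i ∧ i ≤ n ∧ a i ≠ 0) :
    (∃ (Ω : Type) (_ : MeasurableSpace Ω) (μ : Measure Ω)
        (T : (Fin n → ℝ) →ₗ[ℝ] (Ω → ℝ)),
      ∀ x : Fin n → ℝ,
        (∫ ω, |T x ω| ^ q ∂μ) =
          ((∑ i : Fin n, a (i.1 + 1) * dstar x i ^ q) ^ (1 / q)) ^ q) ↔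
    (∀ i, 1 ≤ i → i + 2 ≤ n → a i - a (i + 1) = a (i + 1) - a (i + 2)) :=
  stmt0_general n hn q hq0 hq1 a (pos_one_of_antitone_of_exists_ne_zero hmono hnonneg hnz)
    (hmono 1 le_rfl hn) hnonneg
end

section
/- Let 0 < q ≤ 1 and let w be a positive non-increasing function on (0,1) with ∫_0^1 w(t) dt = 1. Then the Lorentz function space L_{w,q}(0,1) is isometric to a subspace of L_q if and only if there exists α ∈ [0,2] such that w(t) = 1 + α/2 − αt for almost every t ∈ (0,1). -/
/-!
If `w(t) = 1 + α/2 - αt` with `α ∈ [0, 2]`, then `w` is a mixture of the weights `1` and `2 - 2t`.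
For the weight `2 - 2t` the `q`-th power of the norm is `E max(|f(U)|, |f(V)|)^q` with `U, V`
independent and uniform. Since `max(|a|, |b|) = |(a + b)/2| + |(a - b)/2|` and the two-dimensional
`ℓ₁` embeds in `L_q` (through two independent Cauchy variables when `q < 1`), so does the
space.

Conversely, let `N(v)` be the `q`-th power of the norm of `∑ v i • 1_{E i}` with the `E i` disjoint
of measure `a i`. If the space embeds in `L_q`, averaging over signs and
`|y|^q = c ∫ (1 - cos(sy)) s^{-1-q} ds` present `N` as a mixture of the functions
`1 - ∏ cos(ξ i · v i)`. The test functions `(e^{-x} sin(αx))'` have integral zero and a nonnegative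
cosine transform on the half-line, so `N` integrates to at most `0` against their products. That
integral is `q` times the product of the alternating sum of `W(d) = ∫_0^d w` over the box spanned by
`a` and of `∫ r^{q-1} ∏ e^{-r} sin(α i · r) dr`. For two sets the last factor can be made positive,
so `W` is subadditive. For three sets it takes both signs, so the third mixed differences of `W`
vanish, and `W` is quadratic: `W(x) = x + βx(1 - x)`. Subadditivity gives `β ≥ 0`, and `W ≤ 1` gives
`β ≤ 1`.
-/

open MeasureTheory Set

/-- The non-increasing rearrangement (on `(0,1)`) of a function `f : ℝ → ℝ`:
`f^*(t) = inf { s ≥ 0 : λ({u ∈ (0,1) : |f(u)| > s}) ≤ t }`. -/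
noncomputable def decRearr (f : ℝ → ℝ) (t : ℝ) : ℝ :=
  sInf {s : ℝ | 0 ≤ s ∧ volume {u ∈ Ioo (0:ℝ) 1 | s < |f u|} ≤ ENNReal.ofReal t}

/-- The distribution function `s ↦ λ {u ∈ (0,1) : |f(u)| > s}` of `f`, as a real number. -/
noncomputable def distr (f : ℝ → ℝ) (s : ℝ) : ℝ :=
  volume.real {u ∈ Ioo (0 : ℝ) 1 | s < |f u|}

/-- The measure `r ^ s dr` on the half-line `(0, ∞)`. -/
noncomputable def rpowMeasure (s : ℝ) : Measure ℝ :=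
  (volume.restrict (Ioi 0)).withDensity fun r => ENNReal.ofReal (r ^ s)

/-- The `q`-th power `∫ f^*(t)^q dν(t)` of the Lorentz quasi-norm over `(0,1)`. The weight is
encoded as a measure `ν`, so that the functional is additive in it. -/
noncomputable def lorentzPow (ν : Measure ℝ) (q : ℝ) (f : ℝ → ℝ) : ENNReal :=
  ∫⁻ t in Ioo (0 : ℝ) 1, ENNReal.ofReal (decRearr f t ^ q) ∂ν

section Rearrangement

variable {f : ℝ → ℝ} {s t : ℝ}

lemma volume_superlevel_lt_top (f : ℝ → ℝ) (s : ℝ) :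
    volume {u ∈ Ioo (0 : ℝ) 1 | s < |f u|} < ⊤ :=
  (measure_mono fun _ hu => hu.1).trans_lt (measure_Ioo_lt_top (a := (0 : ℝ)) (b := 1))

lemma ofReal_distr (f : ℝ → ℝ) (s : ℝ) :
    ENNReal.ofReal (distr f s) = volume {u ∈ Ioo (0 : ℝ) 1 | s < |f u|} :=
  ENNReal.ofReal_toReal (volume_superlevel_lt_top f s).ne

lemma distr_nonneg (f : ℝ → ℝ) (s : ℝ) : 0 ≤ distr f s := measureReal_nonneg

lemma distr_le_one (f : ℝ → ℝ) (s : ℝ) : distr f s ≤ 1 :=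
  (measureReal_mono (fun _ hu => hu.1) measure_Ioo_lt_top.ne).trans_eq (by simp)

lemma distr_antitone (f : ℝ → ℝ) : Antitone (distr f) := fun _ _ hst =>
  measureReal_mono (fun _ hu => ⟨hu.1, hst.trans_lt hu.2⟩) (volume_superlevel_lt_top f _).ne

lemma measurableSet_superlevel (hf : Measurable f) (s : ℝ) :
    MeasurableSet {u ∈ Ioo (0 : ℝ) 1 | s < |f u|} :=
  measurableSet_Ioo.inter (measurableSet_lt measurable_const hf.abs)

lemma tendsto_distr_natCast (hf : Measurable f) :
    Filter.Tendsto (fun n : ℕ => distr f n) Filter.atTop (nhds 0) := by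
  have hempty : ⋂ n : ℕ, {u ∈ Ioo (0 : ℝ) 1 | (n : ℝ) < |f u|} = ∅ :=
    eq_empty_of_forall_notMem fun u hu => by
      obtain ⟨n, hn⟩ := exists_nat_gt |f u|
      exact (mem_iInter.1 hu n).2.not_gt hn
  have hlim := tendsto_measure_iInter_atTop (μ := volume)
    (s := fun n : ℕ => {u ∈ Ioo (0 : ℝ) 1 | (n : ℝ) < |f u|})
    (fun n => (measurableSet_superlevel hf n).nullMeasurableSet)
    (fun m n hmn u hu => ⟨hu.1, (Nat.cast_le.2 hmn).trans_lt hu.2⟩)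
    ⟨0, (volume_superlevel_lt_top f _).ne⟩
  rw [hempty, measure_empty] at hlim
  exact (ENNReal.tendsto_toReal ENNReal.zero_ne_top).comp hlim

lemma exists_gt_lt_distr (h : t < distr f s) : ∃ r > s, t < distr f r := by
  by_cases ht : t < 0
  · exact ⟨s + 1, lt_add_one s, ht.trans_le (distr_nonneg f _)⟩
  have hunion : {u ∈ Ioo (0 : ℝ) 1 | s < |f u|}
      = ⋃ n : ℕ, {u ∈ Ioo (0 : ℝ) 1 | s + 1 / ((n : ℝ) + 1) < |f u|} := by
    ext u
    simp only [mem_ofPred_eq, mem_iUnion]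
    refine ⟨fun ⟨hu, hlt⟩ => ?_, fun ⟨n, hu, hlt⟩ => ⟨hu, ?_⟩⟩
    · obtain ⟨n, hn⟩ := exists_nat_one_div_lt (sub_pos.2 hlt)
      exact ⟨n, hu, by linarith⟩
    · linarith [Nat.one_div_pos_of_nat (α := ℝ) (n := n)]
  have hmono : Monotone fun n : ℕ => {u ∈ Ioo (0 : ℝ) 1 | s + 1 / ((n : ℝ) + 1) < |f u|} :=
    fun m n hmn u hu => ⟨hu.1, by linarith [hu.2, Nat.one_div_le_one_div (α := ℝ) hmn]⟩
  rw [← ENNReal.ofReal_lt_ofReal_iff_of_nonneg (not_lt.1 ht), ofReal_distr, hunion,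
    hmono.measure_iUnion, lt_iSup_iff] at h
  obtain ⟨n, hn⟩ := h
  refine ⟨s + 1 / ((n : ℝ) + 1), by linarith [Nat.one_div_pos_of_nat (α := ℝ) (n := n)], ?_⟩
  rwa [← ofReal_distr, ENNReal.ofReal_lt_ofReal_iff_of_nonneg (not_lt.1 ht)] at hn

lemma decRearr_eq_sInf_distr (f : ℝ → ℝ) (ht : 0 ≤ t) :
    decRearr f t = sInf {s | 0 ≤ s ∧ distr f s ≤ t} := by
  simp only [decRearr, ← ofReal_distr, ENNReal.ofReal_le_ofReal_iff ht]

lemma exists_distr_le (hf : Measurable f) (ht : 0 < t) : {s | 0 ≤ s ∧ distr f s ≤ t}.Nonempty := by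
  obtain ⟨n, hn⟩ := ((tendsto_distr_natCast hf).eventually (gt_mem_nhds ht)).exists
  exact ⟨n, Nat.cast_nonneg n, hn.le⟩

lemma bddBelow_distr_le (f : ℝ → ℝ) (t : ℝ) : BddBelow {s | 0 ≤ s ∧ distr f s ≤ t} :=
  ⟨0, fun _ hs => hs.1⟩

lemma decRearr_nonneg (f : ℝ → ℝ) (t : ℝ) : 0 ≤ decRearr f t :=
  Real.sInf_nonneg fun _ hs => hs.1

lemma lt_decRearr_iff (hf : Measurable f) (ht : 0 < t) (hs : 0 ≤ s) :
    s < decRearr f t ↔ t < distr f s := by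
  rw [decRearr_eq_sInf_distr f ht.le]
  refine ⟨fun h => ?_, fun h => ?_⟩
  · by_contra! hle
    exact h.not_ge (csInf_le (bddBelow_distr_le f t) ⟨hs, hle⟩)
  · obtain ⟨r, hsr, hr⟩ := exists_gt_lt_distr h
    refine hsr.trans_le (le_csInf (exists_distr_le hf ht) fun x hx => ?_)
    by_contra! hxr
    exact (hr.trans_le (distr_antitone f hxr.le)).not_ge hx.2

lemma decRearr_antitoneOn (hf : Measurable f) : AntitoneOn (decRearr f) (Ioo 0 1) := by
  intro t ht t' ht' htt'
  rw [decRearr_eq_sInf_distr f ht.1.le, decRearr_eq_sInf_distr f ht'.1.le]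
  exact csInf_le_csInf (bddBelow_distr_le f t') (exists_distr_le hf ht.1)
    fun s hs => ⟨hs.1, hs.2.trans htt'⟩

lemma aemeasurable_decRearr (hf : Measurable f) (ν : Measure ℝ) :
    AEMeasurable (decRearr f) (ν.restrict (Ioo 0 1)) :=
  aemeasurable_restrict_of_antitoneOn measurableSet_Ioo (decRearr_antitoneOn hf)

end Rearrangement

section LayerCake

instance (s : ℝ) : SigmaFinite (rpowMeasure s) := SigmaFinite.withDensity_ofReal _

lemma lintegral_rpowMeasure (s : ℝ) (F : ℝ → ENNReal) :
    ∫⁻ r, F r ∂rpowMeasure s = ∫⁻ r in Ioi (0 : ℝ), F r * ENNReal.ofReal (r ^ s) := by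
  rw [rpowMeasure, lintegral_withDensity_eq_lintegral_mul_non_measurable _ (by fun_prop) (by simp)]
  simp only [Pi.mul_apply, mul_comm]

lemma ae_rpowMeasure_pos (s : ℝ) : ∀ᵐ r ∂rpowMeasure s, 0 < r :=
  (withDensity_absolutelyContinuous _ _).ae_le (ae_restrict_mem measurableSet_Ioi)

lemma lintegral_ofReal_rpow_eq_layerCake {X : Type*} [MeasurableSpace X] {κ : Measure X}
    {g : X → ℝ} (hg : AEMeasurable g κ) (hg0 : ∀ x, 0 ≤ g x) {q : ℝ} (hq : 0 < q) :
    ∫⁻ x, ENNReal.ofReal (g x ^ q) ∂κ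
      = ENNReal.ofReal q * ∫⁻ r, κ {x | r < g x} ∂rpowMeasure (q - 1) := by
  rw [lintegral_rpow_eq_lintegral_meas_lt_mul κ (.of_forall hg0) hg hq, lintegral_rpowMeasure]

variable {ν : Measure ℝ} {q : ℝ} {f : ℝ → ℝ}

lemma lorentzPow_eq_layerCake (ν : Measure ℝ) (hq : 0 < q) (hf : Measurable f) :
    lorentzPow ν q f
      = ENNReal.ofReal q * ∫⁻ r, ν (Ioo 0 (distr f r)) ∂rpowMeasure (q - 1) := by
  rw [lorentzPow, lintegral_ofReal_rpow_eq_layerCake (aemeasurable_decRearr hf ν)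
    (decRearr_nonneg f) hq]
  congr 1
  refine lintegral_congr_ae ?_
  filter_upwards [ae_rpowMeasure_pos (q - 1)] with r hr
  have hsub : Ioo 0 (distr f r) ⊆ Ioo 0 1 := Ioo_subset_Ioo_right (distr_le_one f r)
  rw [Measure.restrict_apply' measurableSet_Ioo]
  congr 1
  ext t
  refine ⟨fun ⟨hr', ht⟩ => ⟨ht.1, (lt_decRearr_iff hf ht.1 hr.le).1 hr'⟩, fun ht => ⟨?_, hsub ht⟩⟩
  exact (lt_decRearr_iff hf ht.1 hr.le).2 ht.2

lemma lorentzPow_eq_lintegral_of_equimeasurable {X : Type*} [MeasurableSpace X] {κ : Measure X}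
    {g : X → ℝ} (hg : AEMeasurable g κ) (hg0 : ∀ x, 0 ≤ g x) (hq : 0 < q) (hf : Measurable f)
    (h : ∀ r > 0, κ {x | r < g x} = ν (Ioo 0 (distr f r))) :
    lorentzPow ν q f = ∫⁻ x, ENNReal.ofReal (g x ^ q) ∂κ := by
  rw [lintegral_ofReal_rpow_eq_layerCake hg hg0 hq, lorentzPow_eq_layerCake ν hq hf]
  congr 1
  exact lintegral_congr_ae ((ae_rpowMeasure_pos _).mono fun r hr => (h r hr).symm)

lemma decRearr_le_of_abs_le {M t : ℝ} (hf : ∀ u ∈ Ioo (0 : ℝ) 1, |f u| ≤ M) (hM : 0 ≤ M) :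
    decRearr f t ≤ M := by
  refine csInf_le ⟨0, fun _ hs => hs.1⟩ ⟨hM, ?_⟩
  have hempty : {u ∈ Ioo (0 : ℝ) 1 | M < |f u|} = ∅ :=
    eq_empty_of_forall_notMem fun u hu => (hf u hu.1).not_gt hu.2
  rw [hempty, measure_empty]
  exact zero_le

lemma lorentzPow_le_of_abs_le {M : ℝ} (ν : Measure ℝ) (hf : ∀ u ∈ Ioo (0 : ℝ) 1, |f u| ≤ M)
    (hM : 0 ≤ M) (hq : 0 ≤ q) :
    lorentzPow ν q f ≤ ENNReal.ofReal (M ^ q) * ν (Ioo 0 1) := by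
  rw [← setLIntegral_const]
  exact lintegral_mono fun t => ENNReal.ofReal_le_ofReal <|
    Real.rpow_le_rpow (decRearr_nonneg f t) (decRearr_le_of_abs_le hf hM) hq

lemma rpow_mul_measure_le_lorentzPow (ν : Measure ℝ) (hq : 0 ≤ q) (hf : Measurable f) {s : ℝ}
    (hs : 0 ≤ s) :
    ENNReal.ofReal (s ^ q) * ν (Ioo 0 (distr f s)) ≤ lorentzPow ν q f := by
  rw [← setLIntegral_const]
  refine (setLIntegral_mono' measurableSet_Ioo fun t ht => ?_).trans
    (lintegral_mono_set (Ioo_subset_Ioo_right (distr_le_one f s)))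
  exact ENNReal.ofReal_le_ofReal
    (Real.rpow_le_rpow hs ((lt_decRearr_iff hf ht.1 hs).2 ht.2).le hq)

end LayerCake

section Homogeneity

lemma lintegral_comp_mul_left {v : ℝ} (hv : v ≠ 0) (F : ℝ → ENNReal) :
    ∫⁻ s, F (v * s) = ENNReal.ofReal |v⁻¹| * ∫⁻ s, F s := by
  have hmap := (Homeomorph.mulLeft₀ v hv).measurableEmbedding.lintegral_map (μ := volume) F
  rw [Homeomorph.coe_mulLeft₀, Real.map_volume_mul_left hv, lintegral_smul_measure] at hmap
  exact hmap.symm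

lemma lintegral_comp_mul_rpowMeasure {v : ℝ} (hv : 0 < v) (p : ℝ) (F : ℝ → ENNReal) :
    ∫⁻ s, F (v * s) ∂rpowMeasure p
      = ENNReal.ofReal (v ^ (-1 - p)) * ∫⁻ s, F s ∂rpowMeasure p := by
  simp only [lintegral_rpowMeasure, ← lintegral_indicator measurableSet_Ioi]
  have hscale (s : ℝ) : (Ioi 0).indicator (fun s => F (v * s) * ENNReal.ofReal (s ^ p)) s
      = ENNReal.ofReal (v ^ (-p))
        * (Ioi 0).indicator (fun s => F s * ENNReal.ofReal (s ^ p)) (v * s) := by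
    by_cases hs : 0 < s
    · rw [indicator_of_mem (mem_Ioi.2 hs), indicator_of_mem (mem_Ioi.2 (mul_pos hv hs)),
        mul_left_comm, ← ENNReal.ofReal_mul (by positivity), Real.mul_rpow hv.le hs.le,
        ← mul_assoc, ← Real.rpow_add hv, neg_add_cancel, Real.rpow_zero, one_mul]
    · rw [indicator_of_notMem (by simpa using hs),
        indicator_of_notMem (by simpa [mul_pos_iff_of_pos_left hv] using hs), mul_zero]
  rw [lintegral_congr hscale, lintegral_const_mul' _ _ ENNReal.ofReal_ne_top,
    lintegral_comp_mul_left hv.ne', ← mul_assoc, ← ENNReal.ofReal_mul (by positivity),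
    abs_of_pos (inv_pos.2 hv), ← Real.rpow_neg_one, ← Real.rpow_add hv, neg_add_eq_sub]

variable {φ : ℝ → ℝ} {p q M : ℝ}

lemma lintegral_rpowMeasure_lt_top (hq : 0 < q) (hqp : q < p)
    (hφM : ∀ s, φ s ≤ M) (hφp : ∀ s, 0 < s → φ s ≤ s ^ p) :
    ∫⁻ s, ENNReal.ofReal (φ s) ∂rpowMeasure (-1 - q) < ⊤ := by
  have hsmall : IntegrableOn (fun s : ℝ => s ^ (p - q - 1)) (Ioc 0 1) :=
    (intervalIntegrable_iff_integrableOn_Ioc_of_le zero_le_one).1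
      (intervalIntegral.intervalIntegrable_rpow' (by linarith))
  have hlarge : IntegrableOn (fun s : ℝ => M * s ^ (-1 - q)) (Ioi 1) :=
    (integrableOn_Ioi_rpow_of_lt (by linarith) zero_lt_one).const_mul M
  rw [lintegral_rpowMeasure, ← Ioc_union_Ioi_eq_Ioi zero_le_one]
  refine (lintegral_union_le _ _ _).trans_lt (ENNReal.add_lt_top.2 ⟨?_, ?_⟩)
  · refine (setLIntegral_mono' measurableSet_Ioc fun s hs => ?_).trans_lt hsmall.lintegral_lt_top
    rw [← ENNReal.ofReal_mul' (Real.rpow_nonneg hs.1.le _),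
      show p - q - 1 = p + (-1 - q) by ring, Real.rpow_add hs.1]
    exact ENNReal.ofReal_le_ofReal
      (mul_le_mul_of_nonneg_right (hφp s hs.1) (Real.rpow_nonneg hs.1.le _))
  · refine (setLIntegral_mono' measurableSet_Ioi fun s hs => ?_).trans_lt hlarge.lintegral_lt_top
    have hs0 : 0 ≤ s := zero_le_one.trans (le_of_lt hs)
    rw [← ENNReal.ofReal_mul' (Real.rpow_nonneg hs0 _)]
    exact ENNReal.ofReal_le_ofReal (mul_le_mul_of_nonneg_right (hφM s) (Real.rpow_nonneg hs0 _))

lemma lintegral_rpowMeasure_pos (s : ℝ) (hφ : Measurable φ) (hpos : ∀ r ∈ Ioo 0 1, 0 < φ r) :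
    0 < ∫⁻ r, ENNReal.ofReal (φ r) ∂rpowMeasure s := by
  rw [lintegral_rpowMeasure]
  refine lt_of_lt_of_le ?_ (lintegral_mono_set (s := Ioo (0 : ℝ) 1) Ioo_subset_Ioi_self)
  rw [setLIntegral_pos_iff (by fun_prop)]
  have hsub : Ioo (0 : ℝ) 1
      ⊆ Function.support fun r => ENNReal.ofReal (φ r) * ENNReal.ofReal (r ^ s) := fun r hr =>
    (ENNReal.mul_pos (ENNReal.ofReal_pos.2 (hpos r hr)).ne'
      (ENNReal.ofReal_pos.2 (Real.rpow_pos_of_pos hr.1 s)).ne').ne'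
  rw [inter_eq_right.2 hsub]
  simp

lemma exists_lintegral_comp_mul_eq_rpow (hq : 0 < q) (hqp : q < p) (hφ : Measurable φ)
    (hφ0 : φ 0 = 0) (hpos : ∀ s ∈ Ioo 0 1, 0 < φ s) (hφM : ∀ s, φ s ≤ M)
    (hφp : ∀ s, 0 < s → φ s ≤ s ^ p) :
    ∃ C > 0, ∀ v, 0 ≤ v →
      ∫⁻ s, ENNReal.ofReal (φ (v * s)) ∂rpowMeasure (-1 - q) = ENNReal.ofReal (C * v ^ q) := by
  have hfin := lintegral_rpowMeasure_lt_top hq hqp hφM hφp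
  refine ⟨_, ENNReal.toReal_pos (lintegral_rpowMeasure_pos (-1 - q) hφ hpos).ne' hfin.ne,
    fun v hv => ?_⟩
  rw [ENNReal.ofReal_mul ENNReal.toReal_nonneg, ENNReal.ofReal_toReal hfin.ne]
  rcases hv.eq_or_lt with rfl | hv
  · simp [hφ0, Real.zero_rpow hq.ne']
  · rw [lintegral_comp_mul_rpowMeasure hv _ fun s => ENNReal.ofReal (φ s), mul_comm]
    ring_nf

lemma exists_lintegral_one_sub_cos_eq_rpow (hq0 : 0 < q) (hq2 : q < 2) :
    ∃ C > 0, ∀ v : ℝ, ∫⁻ s, ENNReal.ofReal (1 - Real.cos (v * s)) ∂rpowMeasure (-1 - q)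
      = ENNReal.ofReal (C * |v| ^ q) := by
  obtain ⟨C, hC, h⟩ := exists_lintegral_comp_mul_eq_rpow (M := 2) (φ := fun s => 1 - Real.cos s)
    hq0 hq2 (by fun_prop) (by simp)
    (fun s hs => sub_pos.2 (Real.cos_zero ▸ Real.cos_lt_cos_of_nonneg_of_le_pi le_rfl
      (hs.2.le.trans (by linarith [Real.pi_gt_three])) hs.1))
    (fun s => by linarith [Real.neg_one_le_cos s])
    (fun s _ => by
      rw [Real.rpow_two]
      linarith [Real.one_sub_sq_div_two_le_cos (x := s), sq_nonneg s])
  refine ⟨C, hC, fun v => (lintegral_congr_ae ?_).trans (h |v| (abs_nonneg v))⟩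
  filter_upwards [ae_rpowMeasure_pos (-1 - q)] with s hs
  rw [← Real.cos_abs (v * s), abs_mul, abs_of_pos hs]

lemma exists_lintegral_one_sub_exp_eq_rpow (hq0 : 0 < q) (hq1 : q < 1) :
    ∃ C > 0, ∀ v, 0 ≤ v →
      ∫⁻ s, ENNReal.ofReal (1 - Real.exp (-(v * s))) ∂rpowMeasure (-1 - q)
        = ENNReal.ofReal (C * v ^ q) :=
  exists_lintegral_comp_mul_eq_rpow (M := 1) (φ := fun s => 1 - Real.exp (-s)) hq0 hq1
    (by fun_prop) (by simp) (fun s hs => by simpa using hs.1)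
    (fun s => by linarith [Real.exp_pos (-s)])
    (fun s _ => by
      rw [Real.rpow_one]
      linarith [Real.add_one_le_exp (-s)])

end Homogeneity

section Cauchy

open ProbabilityTheory Complex

/-- The two-sided exponential `e^{-2π|x|}`, normalized so that its Fourier transform is the density
of the standard Cauchy law. -/
noncomputable def laplaceKernel (x : ℝ) : ℂ := (Real.exp (-(2 * Real.pi) * |x|) : ℝ)

lemma continuous_laplaceKernel : Continuous laplaceKernel := by
  unfold laplaceKernel; fun_prop

lemma exp_smul_laplaceKernel_of_nonpos (ξ : ℝ) {x : ℝ} (hx : x ≤ 0) :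
    exp (↑(-2 * Real.pi * x * ξ) * I) • laplaceKernel x
      = exp (2 * Real.pi * (1 - ξ * I) * x) := by
  rw [laplaceKernel, abs_of_nonpos hx, smul_eq_mul, ofReal_exp, ← exp_add]
  congr 1; push_cast; ring

lemma exp_smul_laplaceKernel_of_nonneg (ξ : ℝ) {x : ℝ} (hx : 0 ≤ x) :
    exp (↑(-2 * Real.pi * x * ξ) * I) • laplaceKernel x
      = exp (-(2 * Real.pi) * (1 + ξ * I) * x) := by
  rw [laplaceKernel, abs_of_nonneg hx, smul_eq_mul, ofReal_exp, ← exp_add]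
  congr 1; push_cast; ring

lemma integrableOn_Iic_exp_smul_laplaceKernel (ξ : ℝ) :
    IntegrableOn (fun x : ℝ => exp (↑(-2 * Real.pi * x * ξ) * I) • laplaceKernel x) (Iic 0) :=
  (integrableOn_exp_mul_complex_Iic (by simp [Real.pi_pos]) 0).congr_fun
    (fun _ hx => (exp_smul_laplaceKernel_of_nonpos ξ hx).symm) measurableSet_Iic

lemma integrableOn_Ioi_exp_smul_laplaceKernel (ξ : ℝ) :
    IntegrableOn (fun x : ℝ => exp (↑(-2 * Real.pi * x * ξ) * I) • laplaceKernel x) (Ioi 0) :=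
  (integrableOn_exp_mul_complex_Ioi (by simp [Real.pi_pos]) 0).congr_fun
    (fun _ hx => (exp_smul_laplaceKernel_of_nonneg ξ (le_of_lt hx)).symm) measurableSet_Ioi

lemma integrable_laplaceKernel : Integrable laplaceKernel := by
  have h := (integrableOn_Iic_exp_smul_laplaceKernel 0).union
    (integrableOn_Ioi_exp_smul_laplaceKernel 0)
  simpa [Iic_union_Ioi] using h

lemma fourier_laplaceKernel :
    FourierTransform.fourier laplaceKernel = fun ξ => (cauchyPDFReal 0 1 ξ : ℂ) := by
  ext ξ
  rw [Real.fourier_real_eq_integral_exp_smul, ← intervalIntegral.integral_Iic_add_Ioi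
      (integrableOn_Iic_exp_smul_laplaceKernel ξ) (integrableOn_Ioi_exp_smul_laplaceKernel ξ),
    setIntegral_congr_fun measurableSet_Iic fun x hx => exp_smul_laplaceKernel_of_nonpos ξ hx,
    setIntegral_congr_fun measurableSet_Ioi fun x hx =>
      exp_smul_laplaceKernel_of_nonneg ξ (le_of_lt hx),
    integral_exp_mul_complex_Iic (by simp [Real.pi_pos]),
    integral_exp_mul_complex_Ioi (by simp [Real.pi_pos]), cauchyPDFReal_def]
  have hsub : (1 - ξ * I : ℂ) ≠ 0 := fun h => by simpa using congrArg re h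
  have hadd : (1 + ξ * I : ℂ) ≠ 0 := fun h => by simpa using congrArg re h
  have hpi : (Real.pi : ℂ) ≠ 0 := ofReal_ne_zero.2 Real.pi_ne_zero
  have hfactor : (ξ : ℂ) ^ 2 + 1 = (1 - ξ * I) * (1 + ξ * I) := by
    linear_combination (ξ : ℂ) ^ 2 * I_sq
  push_cast
  rw [sub_zero, one_pow, hfactor]
  simp only [mul_zero, exp_zero]
  field_simp
  ring

lemma charFun_cauchyMeasure (t : ℝ) : charFun (cauchyMeasure 0 1) t = (Real.exp (-|t|) : ℝ) := by
  have hint : Integrable (FourierTransform.fourier laplaceKernel) :=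
    fourier_laplaceKernel ▸ (integrable_cauchyPDFReal 0).ofReal
  have hinv := congrFun (continuous_laplaceKernel.fourierInv_fourier_eq integrable_laplaceKernel
    hint) (t / (2 * Real.pi))
  rw [Real.fourierInv_eq', fourier_laplaceKernel] at hinv
  have hval : laplaceKernel (t / (2 * Real.pi)) = (Real.exp (-|t|) : ℝ) := by
    rw [laplaceKernel, abs_div, abs_of_pos Real.two_pi_pos]
    congr 2
    field_simp [Real.pi_ne_zero]
  rw [charFun_apply_real, ← hval, ← hinv, cauchyMeasure_of_scale_ne_zero 0 one_ne_zero]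
  unfold cauchyPDF
  rw [integral_withDensity_eq_integral_toReal_smul₀
    (measurable_cauchyPDFReal 0 1).ennreal_ofReal.aemeasurable
    (.of_forall fun x => ENNReal.ofReal_lt_top)]
  refine integral_congr_ae (.of_forall fun x => ?_)
  simp only [ENNReal.toReal_ofReal (cauchyPDF_pos 0 one_ne_zero x).le, real_smul, smul_eq_mul,
    mul_comm (cauchyPDFReal 0 1 x : ℂ)]
  congr 2
  simp only [RCLike.inner_apply, Real.ringHom_apply, ofReal_mul, ofReal_ofNat, ofReal_div,
    mul_eq_mul_right_iff, I_ne_zero, or_false]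
  field_simp [Real.pi_ne_zero]

lemma integral_cos_cauchyMeasure_prod (a b : ℝ) :
    ∫ z : ℝ × ℝ, Real.cos (a * z.1 + b * z.2) ∂(cauchyMeasure 0 1).prod (cauchyMeasure 0 1)
      = Real.exp (-(|a| + |b|)) := by
  have hexp (z : ℝ × ℝ) : (Real.cos (a * z.1 + b * z.2) : ℝ)
      = re (exp (a * z.1 * I) * exp (b * z.2 * I)) := by
    rw [← exp_add, ← add_mul, ← exp_ofReal_mul_I_re]
    push_cast
    rfl
  have hint : Integrable (fun z : ℝ × ℝ => exp (a * z.1 * I) * exp (b * z.2 * I))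
      ((cauchyMeasure 0 1).prod (cauchyMeasure 0 1)) := by
    refine Integrable.of_bound (C := 1) (by fun_prop) (.of_forall fun z => ?_)
    rw [norm_mul, ← ofReal_mul, ← ofReal_mul, norm_exp_ofReal_mul_I, norm_exp_ofReal_mul_I, mul_one]
  have hre : ∫ z : ℝ × ℝ, re (exp (a * z.1 * I) * exp (b * z.2 * I))
        ∂(cauchyMeasure 0 1).prod (cauchyMeasure 0 1)
      = re (∫ z : ℝ × ℝ, exp (a * z.1 * I) * exp (b * z.2 * I)
        ∂(cauchyMeasure 0 1).prod (cauchyMeasure 0 1)) := integral_re hint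
  simp_rw [hexp]
  rw [hre, integral_prod_mul (fun x : ℝ => exp (a * x * I)) fun x : ℝ => exp (b * x * I),
    ← charFun_apply_real, ← charFun_apply_real, charFun_cauchyMeasure, charFun_cauchyMeasure,
    ← ofReal_mul, ofReal_re, ← Real.exp_add, neg_add]

end Cauchy

section EllOne

open ProbabilityTheory

lemma lintegral_one_sub_cos_cauchyMeasure_prod (a b : ℝ) {s : ℝ} (hs : 0 < s) :
    ∫⁻ z : ℝ × ℝ, ENNReal.ofReal (1 - Real.cos ((a * z.1 + b * z.2) * s))
        ∂(cauchyMeasure 0 1).prod (cauchyMeasure 0 1)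
      = ENNReal.ofReal (1 - Real.exp (-((|a| + |b|) * s))) := by
  have hcos : Integrable (fun z : ℝ × ℝ => Real.cos ((a * z.1 + b * z.2) * s))
      ((cauchyMeasure 0 1).prod (cauchyMeasure 0 1)) :=
    Integrable.of_bound (C := 1) (by fun_prop) (.of_forall fun z => Real.abs_cos_le_one _)
  rw [← ofReal_integral_eq_lintegral_ofReal
      (f := fun z : ℝ × ℝ => 1 - Real.cos ((a * z.1 + b * z.2) * s))
      ((integrable_const 1).sub hcos) (.of_forall fun z => sub_nonneg.2 (Real.cos_le_one _)),
    integral_sub (integrable_const 1) hcos]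
  have h := integral_cos_cauchyMeasure_prod (a * s) (b * s)
  rw [abs_mul, abs_mul, abs_of_pos hs, ← add_mul] at h
  rw [← h, integral_const, probReal_univ, one_smul]
  simp only [add_mul, mul_right_comm _ s]

lemma exists_measure_lintegral_rpow_eq_abs_add_abs_of_lt_one {q : ℝ} (hq0 : 0 < q) (hq1 : q < 1) :
    ∃ m : Measure (ℝ × ℝ), SFinite m ∧ ∀ a b : ℝ,
      ∫⁻ z, ENNReal.ofReal (|a * z.1 + b * z.2| ^ q) ∂m = ENNReal.ofReal ((|a| + |b|) ^ q) := by
  obtain ⟨C, hC, hcos⟩ := exists_lintegral_one_sub_cos_eq_rpow hq0 (hq1.trans one_lt_two)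
  obtain ⟨D, hD, hexp⟩ := exists_lintegral_one_sub_exp_eq_rpow hq0 hq1
  refine ⟨ENNReal.ofReal (C / D) • (cauchyMeasure 0 1).prod (cauchyMeasure 0 1), inferInstance,
    fun a b => ?_⟩
  have hmix : ENNReal.ofReal C * ∫⁻ z : ℝ × ℝ, ENNReal.ofReal (|a * z.1 + b * z.2| ^ q)
        ∂(cauchyMeasure 0 1).prod (cauchyMeasure 0 1)
      = ENNReal.ofReal (D * (|a| + |b|) ^ q) := by
    rw [← lintegral_const_mul' _ _ ENNReal.ofReal_ne_top]
    simp_rw [← ENNReal.ofReal_mul hC.le, ← hcos]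
    rw [lintegral_lintegral_swap (by fun_prop), ← hexp _ (by positivity)]
    refine lintegral_congr_ae ?_
    filter_upwards [ae_rpowMeasure_pos (-1 - q)] with s hs
    exact lintegral_one_sub_cos_cauchyMeasure_prod a b hs
  rw [lintegral_smul_measure, smul_eq_mul, ENNReal.ofReal_div_of_pos hD,
    ← ENNReal.mul_div_right_comm, hmix, ENNReal.ofReal_mul hD.le, mul_comm]
  exact ENNReal.mul_div_cancel_right (ENNReal.ofReal_pos.2 hD).ne' ENNReal.ofReal_ne_top

lemma exists_measure_lintegral_rpow_eq_abs_add_abs {q : ℝ} (hq0 : 0 < q) (hq1 : q ≤ 1) :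
    ∃ m : Measure (ℝ × ℝ), SFinite m ∧ ∀ a b : ℝ,
      ∫⁻ z, ENNReal.ofReal (|a * z.1 + b * z.2| ^ q) ∂m = ENNReal.ofReal ((|a| + |b|) ^ q) := by
  rcases hq1.eq_or_lt with rfl | hq1
  · refine ⟨Measure.dirac (1, 0) + Measure.dirac (0, 1), inferInstance, fun a b => ?_⟩
    simp [lintegral_add_measure, ENNReal.ofReal_add]
  · exact exists_measure_lintegral_rpow_eq_abs_add_abs_of_lt_one hq0 hq1

end EllOne

/-- The weight `w` on `(0,1)`, encoded as the measure `w(t) dt`. -/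
noncomputable def weightMeasure (w : ℝ → ℝ) : Measure ℝ :=
  (volume.restrict (Ioo 0 1)).withDensity fun t => ENNReal.ofReal (w t)

/-- The linear map `T` preserves the `q`-th power of the Lorentz quasi-norm attached to `ν`, i.e. it
is an isometric embedding of the Lorentz space into `L_q(μ)`. Being nonzero, the Bochner integral
forces `|T f| ^ q` to be integrable whenever `f` has positive quasi-norm. -/
def IsLorentzIsometry (ν : Measure ℝ) (q : ℝ) {Ω : Type*} [MeasurableSpace Ω] (μ : Measure Ω)
    (T : (ℝ → ℝ) →ₗ[ℝ] (Ω → ℝ)) : Prop :=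
  ∀ f : ℝ → ℝ, Measurable f → lorentzPow ν q f < ⊤ →
    ∫ ω, |T f ω| ^ q ∂μ = (lorentzPow ν q f).toReal

section WeightMeasure

variable {w : ℝ → ℝ} {q : ℝ} {f : ℝ → ℝ}

lemma lorentzPow_weightMeasure (hw : IntegrableOn w (Ioo 0 1)) (hf : Measurable f) :
    lorentzPow (weightMeasure w) q f
      = ∫⁻ t in Ioo (0 : ℝ) 1, ENNReal.ofReal (decRearr f t ^ q * w t) := by
  rw [lorentzPow, weightMeasure, restrict_withDensity measurableSet_Ioo,
    Measure.restrict_restrict measurableSet_Ioo, inter_self,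
    lintegral_withDensity_eq_lintegral_mul₀ hw.aestronglyMeasurable.aemeasurable.ennreal_ofReal
      ((aemeasurable_decRearr hf volume).pow_const q).ennreal_ofReal]
  refine lintegral_congr fun t => ?_
  rw [Pi.mul_apply, mul_comm, ENNReal.ofReal_mul (Real.rpow_nonneg (decRearr_nonneg f t) q)]

lemma integral_decRearr_rpow_mul (hw : IntegrableOn w (Ioo 0 1)) (hw0 : ∀ t ∈ Ioo 0 1, 0 ≤ w t)
    (hf : Measurable f) :
    ∫ t in Ioo (0 : ℝ) 1, decRearr f t ^ q * w t = (lorentzPow (weightMeasure w) q f).toReal := by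
  rw [lorentzPow_weightMeasure hw hf]
  refine integral_eq_lintegral_of_nonneg_ae ?_ ?_
  · filter_upwards [ae_restrict_mem measurableSet_Ioo] with t ht
    exact mul_nonneg (Real.rpow_nonneg (decRearr_nonneg f t) q) (hw0 t ht)
  · exact (((aemeasurable_decRearr hf volume).pow_const q).mul
      hw.aestronglyMeasurable.aemeasurable).aestronglyMeasurable

lemma weightMeasure_Ioo (hw : IntegrableOn w (Ioo 0 1)) (hw0 : ∀ t ∈ Ioo 0 1, 0 ≤ w t)
    {d : ℝ} (hd0 : 0 ≤ d) (hd1 : d ≤ 1) :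
    weightMeasure w (Ioo 0 d) = ENNReal.ofReal (∫ t in 0..d, w t) := by
  have hsub : Ioo 0 d ⊆ Ioo (0 : ℝ) 1 := Ioo_subset_Ioo_right hd1
  rw [weightMeasure, withDensity_apply _ measurableSet_Ioo,
    Measure.restrict_restrict measurableSet_Ioo, inter_eq_left.2 hsub,
    intervalIntegral.integral_of_le hd0, integral_Ioc_eq_integral_Ioo,
    ofReal_integral_eq_lintegral_ofReal (hw.mono_set hsub)]
  filter_upwards [ae_restrict_mem measurableSet_Ioo] with t ht
  exact hw0 t (hsub ht)

lemma weightMeasure_Ioo_pos (hw : IntegrableOn w (Ioo 0 1)) (hw0 : ∀ t ∈ Ioo 0 1, 0 < w t)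
    {d : ℝ} (hd0 : 0 < d) (hd1 : d ≤ 1) : 0 < weightMeasure w (Ioo 0 d) := by
  have hsub : Ioo 0 d ⊆ Ioo (0 : ℝ) 1 := Ioo_subset_Ioo_right hd1
  rw [weightMeasure_Ioo hw (fun t ht => (hw0 t ht).le) hd0.le hd1, ENNReal.ofReal_pos]
  refine intervalIntegral.intervalIntegral_pos_of_pos_on ?_ (fun t ht => hw0 t (hsub ht)) hd0
  rw [intervalIntegrable_iff_integrableOn_Ioo_of_le hd0.le]
  exact hw.mono_set hsub

end WeightMeasure

section LinearWeights

variable {f : ℝ → ℝ} {q α : ℝ} {w : ℝ → ℝ}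

lemma max_abs_abs_eq (a b : ℝ) : max |a| |b| = |(a + b) / 2| + |(a - b) / 2| := by
  grind

lemma volume_restrict_superlevel (hf : Measurable f) (r : ℝ) :
    volume.restrict (Ioo 0 1) {u | r < |f u|} = ENNReal.ofReal (distr f r) := by
  rw [ofReal_distr, Measure.restrict_apply (measurableSet_lt measurable_const hf.abs), inter_comm]
  rfl

instance : IsProbabilityMeasure (volume.restrict (Ioo (0 : ℝ) 1)) := ⟨by simp⟩

lemma prod_volume_restrict_max_superlevel (hf : Measurable f) (r : ℝ) :
    (volume.restrict (Ioo 0 1)).prod (volume.restrict (Ioo 0 1)) {z | r < max |f z.1| |f z.2|}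
      = ENNReal.ofReal (1 - (1 - distr f r) ^ 2) := by
  have hS : MeasurableSet {u : ℝ | r < |f u|} := measurableSet_lt measurable_const hf.abs
  have hcompl : {z : ℝ × ℝ | r < max |f z.1| |f z.2|}
      = ({u | r < |f u|}ᶜ ×ˢ {u | r < |f u|}ᶜ)ᶜ := by
    ext z
    simp only [mem_ofPred_eq, lt_max_iff, mem_compl_iff, mem_prod]
    tauto
  have hle : volume.restrict (Ioo 0 1) {u | r < |f u|}ᶜ = ENNReal.ofReal (1 - distr f r) := by
    rw [prob_compl_eq_one_sub hS, volume_restrict_superlevel hf, ← ENNReal.ofReal_one,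
      ENNReal.ofReal_sub _ (distr_nonneg f r)]
  have h0 : 0 ≤ 1 - distr f r := sub_nonneg.2 (distr_le_one f r)
  rw [hcompl, prob_compl_eq_one_sub (hS.compl.prod hS.compl), Measure.prod_prod, hle,
    ← ENNReal.ofReal_mul h0, ← ENNReal.ofReal_one, ← ENNReal.ofReal_sub _ (mul_nonneg h0 h0), sq]

lemma lorentzPow_weightMeasure_one (hq : 0 < q) (hf : Measurable f) :
    lorentzPow (weightMeasure fun _ => 1) q f
      = ∫⁻ u in Ioo (0 : ℝ) 1, ENNReal.ofReal (|f u| ^ q) := by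
  refine lorentzPow_eq_lintegral_of_equimeasurable hf.abs.aemeasurable (fun u => abs_nonneg _) hq hf
    fun r _ => ?_
  rw [volume_restrict_superlevel hf, weightMeasure_Ioo (by simp) (by simp) (distr_nonneg f r)
    (distr_le_one f r)]
  simp

lemma lorentzPow_weightMeasure_two_sub_two_mul (hq : 0 < q) (hf : Measurable f) :
    lorentzPow (weightMeasure fun t => 2 - 2 * t) q f
      = ∫⁻ z, ENNReal.ofReal (max |f z.1| |f z.2| ^ q)
        ∂(volume.restrict (Ioo (0 : ℝ) 1)).prod (volume.restrict (Ioo (0 : ℝ) 1)) := by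
  refine lorentzPow_eq_lintegral_of_equimeasurable (by fun_prop) (fun z => by positivity) hq hf
    fun r _ => ?_
  have hint : IntegrableOn (fun t : ℝ => 2 - 2 * t) (Ioo 0 1) :=
    (Continuous.integrableOn_Icc (by fun_prop)).mono_set Ioo_subset_Icc_self
  rw [prod_volume_restrict_max_superlevel hf, weightMeasure_Ioo hint
    (fun t ht => by linarith [ht.2]) (distr_nonneg f r) (distr_le_one f r),
    intervalIntegral.integral_sub (by simp) (Continuous.intervalIntegrable (by fun_prop) _ _),
    intervalIntegral.integral_const_mul, integral_id]
  congr 1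
  simp only [intervalIntegral.integral_const, sub_zero, smul_eq_mul, ne_eq, OfNat.ofNat_ne_zero,
    not_false_eq_true, zero_pow]
  ring

lemma weightMeasure_eq_mixture (hα : α ∈ Icc (0 : ℝ) 2)
    (hw : ∀ᵐ t ∂volume.restrict (Ioo (0 : ℝ) 1), w t = 1 + α / 2 - α * t) :
    weightMeasure w = ENNReal.ofReal (1 - α / 2) • weightMeasure (fun _ => 1)
      + ENNReal.ofReal (α / 2) • weightMeasure fun t => 2 - 2 * t := by
  have hα0 : 0 ≤ α / 2 := by linarith [hα.1]
  have hα2 : 0 ≤ 1 - α / 2 := by linarith [hα.2]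
  simp only [weightMeasure]
  rw [← withDensity_smul _ (by fun_prop), ← withDensity_smul _ (by fun_prop),
    ← withDensity_add_left (by fun_prop)]
  refine withDensity_congr_ae ?_
  filter_upwards [hw, ae_restrict_mem measurableSet_Ioo] with t ht ht01
  simp only [Pi.add_apply, Pi.smul_apply, smul_eq_mul]
  rw [ht, ← ENNReal.ofReal_mul hα2, ← ENNReal.ofReal_mul hα0, ← ENNReal.ofReal_add (by linarith)
    (mul_nonneg hα0 (by linarith [ht01.2]))]
  congr 1
  ring

lemma lorentzPow_mixture (hα : α ∈ Icc (0 : ℝ) 2)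
    (hw : ∀ᵐ t ∂volume.restrict (Ioo (0 : ℝ) 1), w t = 1 + α / 2 - α * t) (hq : 0 < q)
    (hf : Measurable f) :
    lorentzPow (weightMeasure w) q f
      = ∫⁻ z, (ENNReal.ofReal (1 - α / 2) * ENNReal.ofReal (|f z.1| ^ q)
          + ENNReal.ofReal (α / 2) * ENNReal.ofReal (max |f z.1| |f z.2| ^ q))
        ∂(volume.restrict (Ioo (0 : ℝ) 1)).prod (volume.restrict (Ioo (0 : ℝ) 1)) := by
  have hfst : lorentzPow (weightMeasure fun _ => 1) q f
      = ∫⁻ z, ENNReal.ofReal (|f z.1| ^ q)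
        ∂(volume.restrict (Ioo (0 : ℝ) 1)).prod (volume.restrict (Ioo (0 : ℝ) 1)) := by
    rw [lorentzPow_weightMeasure_one hq hf]
    exact (measurePreserving_fst.lintegral_comp (by fun_prop)).symm
  rw [lintegral_add_left (by fun_prop), lintegral_const_mul' _ _ ENNReal.ofReal_ne_top,
    lintegral_const_mul' _ _ ENNReal.ofReal_ne_top, ← hfst,
    ← lorentzPow_weightMeasure_two_sub_two_mul hq hf, weightMeasure_eq_mixture hα hw]
  simp only [lorentzPow, Measure.restrict_add, Measure.restrict_smul, lintegral_add_measure,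
    lintegral_smul_measure, smul_eq_mul]

/-- The operator `f ↦ (f(u) + f(v))/2 · x + (f(u) - f(v))/2 · y`. It evaluates to `f(u)` at
`(x, y) = (1, 1)`, and averaging over an `ℓ₁`-embedding `(x, y)` turns it into
`max(|f(u)|, |f(v)|)`. -/
noncomputable def halfSumDiff : (ℝ → ℝ) →ₗ[ℝ] ((ℝ × ℝ) × (ℝ × ℝ) → ℝ) where
  toFun f ω := (f ω.1.1 + f ω.1.2) / 2 * ω.2.1 + (f ω.1.1 - f ω.1.2) / 2 * ω.2.2
  map_add' f g := by ext ω; simp only [Pi.add_apply]; ring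
  map_smul' c f := by ext ω; simp only [Pi.smul_apply, smul_eq_mul, RingHom.id_apply]; ring

theorem exists_isLorentzIsometry_of_linear (hq0 : 0 < q) (hq1 : q ≤ 1) (hα : α ∈ Icc (0 : ℝ) 2)
    (hw : ∀ᵐ t ∂volume.restrict (Ioo (0 : ℝ) 1), w t = 1 + α / 2 - α * t) :
    ∃ μ : Measure ((ℝ × ℝ) × (ℝ × ℝ)), IsLorentzIsometry (weightMeasure w) q μ halfSumDiff := by
  obtain ⟨m, hm, hemb⟩ := exists_measure_lintegral_rpow_eq_abs_add_abs hq0 hq1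
  let m' : Measure (ℝ × ℝ) :=
    ENNReal.ofReal (1 - α / 2) • Measure.dirac (1, 1) + ENNReal.ofReal (α / 2) • m
  refine ⟨((volume.restrict (Ioo 0 1)).prod (volume.restrict (Ioo 0 1))).prod m', fun f hf _ => ?_⟩
  have hTm : Measurable fun ω => |halfSumDiff f ω| ^ q := by
    simp only [halfSumDiff, LinearMap.coe_mk, AddHom.coe_mk]
    fun_prop
  have hinner (z : ℝ × ℝ) : ∫⁻ y, ENNReal.ofReal (|halfSumDiff f (z, y)| ^ q) ∂m'
      = ENNReal.ofReal (1 - α / 2) * ENNReal.ofReal (|f z.1| ^ q)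
        + ENNReal.ofReal (α / 2) * ENNReal.ofReal (max |f z.1| |f z.2| ^ q) := by
    simp only [m', halfSumDiff, LinearMap.coe_mk, AddHom.coe_mk]
    rw [lintegral_add_measure, lintegral_smul_measure, lintegral_smul_measure, hemb,
      lintegral_dirac, max_abs_abs_eq, smul_eq_mul, smul_eq_mul]
    ring_nf
  rw [integral_eq_lintegral_of_nonneg_ae (.of_forall fun ω => by positivity)
    hTm.aestronglyMeasurable, lintegral_prod _ hTm.ennreal_ofReal.aemeasurable,
    lorentzPow_mixture hα hw hq0 hf]
  simp only [hinner]

end LinearWeights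

section DampedSine

/-- The damped sine `x ↦ e^{-x} sin(ax)`. -/
noncomputable def dampedSine (a x : ℝ) : ℝ := Real.exp (-x) * Real.sin (a * x)

/-- The test function `x ↦ e^{-x} (a cos(ax) - sin(ax))`, the derivative of `dampedSine a`. -/
noncomputable def testFn (a x : ℝ) : ℝ := Real.exp (-x) * (a * Real.cos (a * x) - Real.sin (a * x))

variable (a : ℝ)

@[fun_prop]
lemma continuous_dampedSine : Continuous (dampedSine a) := by unfold dampedSine; fun_prop

@[fun_prop]
lemma continuous_testFn : Continuous (testFn a) := by unfold testFn; fun_prop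

lemma hasDerivAt_dampedSine (x : ℝ) : HasDerivAt (dampedSine a) (testFn a x) x := by
  have hsin := ((hasDerivAt_id x).const_mul a).sin
  refine ((hasDerivAt_id x).neg.exp.mul hsin).congr_deriv ?_
  simp only [testFn, id, Pi.neg_apply]
  ring

lemma tendsto_dampedSine_atTop : Filter.Tendsto (dampedSine a) Filter.atTop (nhds 0) := by
  refine squeeze_zero_norm (fun x => ?_) Real.tendsto_exp_neg_atTop_nhds_zero
  rw [dampedSine, norm_mul, Real.norm_of_nonneg (Real.exp_pos _).le]
  exact mul_le_of_le_one_right (Real.exp_pos _).le (Real.abs_sin_le_one _)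

lemma abs_testFn_le (x : ℝ) : |testFn a x| ≤ (|a| + 1) * Real.exp (-x) := by
  rw [testFn, abs_mul, Real.abs_exp, mul_comm]
  refine mul_le_mul_of_nonneg_right ((abs_sub _ _).trans (add_le_add ?_ (Real.abs_sin_le_one _)))
    (Real.exp_pos _).le
  rw [abs_mul]
  exact mul_le_of_le_one_right (abs_nonneg a) (Real.abs_cos_le_one _)

lemma one_add_le_two_mul_exp_half (x : ℝ) : 1 + x ≤ 2 * Real.exp (x / 2) := by
  linarith [Real.add_one_le_exp (x / 2)]

lemma integrableOn_testFn_mul_one_add : IntegrableOn (fun x => testFn a x * (1 + x)) (Ioi 0) := by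
  have hexp : IntegrableOn (fun x => 2 * (|a| + 1) * Real.exp (-(1 / 2) * x)) (Ioi 0) :=
    (integrableOn_exp_mul_Ioi (by norm_num) 0).const_mul _
  refine hexp.mono' (by fun_prop) ?_
  filter_upwards [ae_restrict_mem measurableSet_Ioi] with x hx
  have hx0 : 0 < x := hx
  rw [norm_mul, Real.norm_eq_abs, Real.norm_of_nonneg (by linarith : (0 : ℝ) ≤ 1 + x)]
  calc |testFn a x| * (1 + x)
      ≤ ((|a| + 1) * Real.exp (-x)) * (2 * Real.exp (x / 2)) :=
        mul_le_mul (abs_testFn_le a x) (one_add_le_two_mul_exp_half x) (by linarith) (by positivity)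
    _ = 2 * (|a| + 1) * (Real.exp (-x) * Real.exp (x / 2)) := by ring
    _ = 2 * (|a| + 1) * Real.exp (-(1 / 2) * x) := by rw [← Real.exp_add]; ring_nf

lemma integrableOn_testFn_mul {g : ℝ → ℝ} (hg : Measurable g) (hg1 : ∀ x, |g x| ≤ 1) :
    IntegrableOn (fun x => testFn a x * g x) (Ioi 0) := by
  refine Integrable.mono (integrableOn_testFn_mul_one_add a) (by fun_prop) ?_
  filter_upwards [ae_restrict_mem measurableSet_Ioi] with x hx
  rw [norm_mul, norm_mul]
  refine mul_le_mul_of_nonneg_left ((hg1 x).trans ?_) (norm_nonneg _)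
  rw [Real.norm_eq_abs]
  exact le_abs.2 (.inl (by linarith [mem_Ioi.1 hx]))

lemma integrableOn_testFn : IntegrableOn (testFn a) (Ioi 0) := by
  simpa using integrableOn_testFn_mul a (g := fun _ => 1) (by fun_prop) (by simp)

lemma integral_Ioi_testFn {r : ℝ} (hr : 0 ≤ r) : ∫ x in Ioi r, testFn a x = -dampedSine a r := by
  rw [integral_Ioi_of_hasDerivAt_of_tendsto' (fun x _ => hasDerivAt_dampedSine a x)
    ((integrableOn_testFn a).mono_set (Ioi_subset_Ioi hr)) (tendsto_dampedSine_atTop a), zero_sub]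

lemma integral_testFn : ∫ x in Ioi (0 : ℝ), testFn a x = 0 := by
  simp [integral_Ioi_testFn, dampedSine]

lemma cexp_neg_one_add_mul_I_mul (k x : ℝ) :
    Complex.exp ((-1 + k * Complex.I) * x)
      = (Real.exp (-x) * Real.cos (k * x) : ℝ) + (Real.exp (-x) * Real.sin (k * x) : ℝ) *
        Complex.I := by
  rw [show ((-1 + k * Complex.I) * x : ℂ) = (-x : ℝ) + (k * x : ℝ) * Complex.I by push_cast; ring,
    Complex.exp_add_mul_I]
  push_cast
  ring

lemma integral_cexp_neg_one_add_mul_I_mul (k : ℝ) :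
    ∫ x : ℝ in Ioi 0, Complex.exp ((-1 + k * Complex.I) * x)
      = (1 / (1 + k ^ 2) : ℝ) + (k / (1 + k ^ 2) : ℝ) * Complex.I := by
  have hne : (1 - k * Complex.I : ℂ) ≠ 0 := fun h => by simpa using congrArg Complex.re h
  have hne' : (1 + k ^ 2 : ℂ) ≠ 0 := by
    exact_mod_cast (by positivity : (1 + k ^ 2 : ℝ) ≠ 0)
  rw [integral_exp_mul_complex_Ioi (by simp), show (-1 + k * Complex.I) = -(1 - k * Complex.I) by
    ring, neg_div_neg_eq]
  simp only [Complex.ofReal_zero, mul_zero, Complex.exp_zero]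
  push_cast
  field_simp
  linear_combination (k : ℂ) ^ 2 * Complex.I_sq

lemma integral_exp_neg_mul_cos (k : ℝ) :
    ∫ x in Ioi (0 : ℝ), Real.exp (-x) * Real.cos (k * x) = 1 / (1 + k ^ 2) := by
  have hre := integral_re (𝕜 := ℂ) (integrableOn_exp_mul_complex_Ioi (a := -1 + k * Complex.I)
    (by simp) 0)
  rw [integral_cexp_neg_one_add_mul_I_mul] at hre
  simpa only [cexp_neg_one_add_mul_I_mul, RCLike.re_eq_complex_re, Complex.add_re,
    Complex.mul_I_re, Complex.ofReal_re, Complex.ofReal_im, neg_zero, add_zero] using hre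

lemma integral_exp_neg_mul_sin (k : ℝ) :
    ∫ x in Ioi (0 : ℝ), Real.exp (-x) * Real.sin (k * x) = k / (1 + k ^ 2) := by
  have him := integral_im (𝕜 := ℂ) (integrableOn_exp_mul_complex_Ioi (a := -1 + k * Complex.I)
    (by simp) 0)
  rw [integral_cexp_neg_one_add_mul_I_mul] at him
  simpa only [cexp_neg_one_add_mul_I_mul, RCLike.im_eq_complex_im, Complex.add_im,
    Complex.mul_I_im, Complex.ofReal_re, Complex.ofReal_im, zero_add] using him

lemma integrableOn_exp_neg_mul {g : ℝ → ℝ} (hg : Measurable g) (hg1 : ∀ x, |g x| ≤ 1) :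
    IntegrableOn (fun x => Real.exp (-x) * g x) (Ioi 0) :=
  (integrableOn_exp_neg_Ioi 0).mul_bdd (c := 1) (by fun_prop) (.of_forall hg1)

lemma integrableOn_and_integral_exp_neg_mul_cos_sub_sin (k : ℝ) :
    IntegrableOn (fun x => Real.exp (-x) * (a * Real.cos (k * x) - Real.sin (k * x))) (Ioi 0) ∧
    ∫ x in Ioi (0 : ℝ), Real.exp (-x) * (a * Real.cos (k * x) - Real.sin (k * x))
      = (a - k) / (1 + k ^ 2) := by
  have hcos : IntegrableOn (fun x => a * (Real.exp (-x) * Real.cos (k * x))) (Ioi 0) :=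
    (integrableOn_exp_neg_mul (by fun_prop) fun x => Real.abs_cos_le_one _).const_mul a
  have hsin : IntegrableOn (fun x => Real.exp (-x) * Real.sin (k * x)) (Ioi 0) :=
    integrableOn_exp_neg_mul (by fun_prop) fun x => Real.abs_sin_le_one _
  simp_rw [mul_sub, mul_left_comm _ a]
  refine ⟨hcos.sub hsin, ?_⟩
  rw [integral_sub hcos hsin, integral_const_mul, integral_exp_neg_mul_cos,
    integral_exp_neg_mul_sin]
  ring

lemma testFn_mul_cos (ξ x : ℝ) :
    testFn a x * Real.cos (ξ * x)
      = (Real.exp (-x) * (a * Real.cos ((a - ξ) * x) - Real.sin ((a - ξ) * x))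
        + Real.exp (-x) * (a * Real.cos ((a + ξ) * x) - Real.sin ((a + ξ) * x))) / 2 := by
  rw [testFn, sub_mul, add_mul, Real.cos_add, Real.cos_sub, Real.sin_add, Real.sin_sub]
  ring

lemma integral_testFn_mul_cos (ξ : ℝ) :
    ∫ x in Ioi (0 : ℝ), testFn a x * Real.cos (ξ * x)
      = 2 * a * ξ ^ 2 / ((1 + (a - ξ) ^ 2) * (1 + (a + ξ) ^ 2)) := by
  obtain ⟨hi₁, h₁⟩ := integrableOn_and_integral_exp_neg_mul_cos_sub_sin a (a - ξ)
  obtain ⟨hi₂, h₂⟩ := integrableOn_and_integral_exp_neg_mul_cos_sub_sin a (a + ξ)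
  simp_rw [testFn_mul_cos]
  rw [integral_div, integral_add hi₁ hi₂, h₁, h₂]
  field_simp
  ring

lemma integral_testFn_mul_cos_nonneg {a : ℝ} (ha : 0 ≤ a) (ξ : ℝ) :
    0 ≤ ∫ x in Ioi (0 : ℝ), testFn a x * Real.cos (ξ * x) := by
  rw [integral_testFn_mul_cos]
  positivity

end DampedSine

section Orthant

variable {ι : Type*} [Fintype ι]

/-- Lebesgue measure on the open orthant `(0, ∞)^ι`. -/
noncomputable def orthant (ι : Type*) [Fintype ι] : Measure (ι → ℝ) :=
  Measure.pi fun _ => volume.restrict (Ioi 0)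

instance : SigmaFinite (orthant ι) := by unfold orthant; infer_instance

lemma ae_orthant_pos : ∀ᵐ v ∂orthant ι, ∀ i, 0 < v i :=
  ae_all_iff.2 fun _ => Measure.tendsto_eval_ae_ae (ae_restrict_mem measurableSet_Ioi)

/-- The tensor product of the one-variable test functions with frequencies `α i`. -/
noncomputable def testProd (α v : ι → ℝ) : ℝ := ∏ i, testFn (α i) (v i)

variable (α : ι → ℝ)

@[fun_prop]
lemma continuous_testProd : Continuous (testProd α) := by unfold testProd; fun_prop

lemma integrable_testProd_mul_prod {g : ι → ℝ → ℝ}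
    (hg : ∀ i, IntegrableOn (fun x => testFn (α i) x * g i x) (Ioi 0)) :
    Integrable (fun v => testProd α v * ∏ i, g i (v i)) (orthant ι) := by
  simp only [testProd, ← Finset.prod_mul_distrib]
  exact Integrable.fintype_prod hg

lemma integral_testProd_mul_prod (g : ι → ℝ → ℝ) :
    ∫ v, testProd α v * ∏ i, g i (v i) ∂orthant ι
      = ∏ i, ∫ x in Ioi (0 : ℝ), testFn (α i) x * g i x := by
  simp only [testProd, ← Finset.prod_mul_distrib]
  exact integral_fintype_prod_eq_prod fun i x => testFn (α i) x * g i x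

lemma integrable_testProd : Integrable (testProd α) (orthant ι) :=
  Integrable.fintype_prod fun i => integrableOn_testFn (α i)

lemma integral_testProd [Nonempty ι] : ∫ v, testProd α v ∂orthant ι = 0 := by
  have h := integral_fintype_prod_eq_prod (μ := fun _ : ι => volume.restrict (Ioi (0 : ℝ)))
    fun i => testFn (α i)
  simpa [testProd, orthant, integral_testFn] using h

lemma integral_testProd_mul_one_sub_prod_cos_nonpos [Nonempty ι] {α : ι → ℝ} (hα : ∀ i, 0 ≤ α i)
    (ξ : ι → ℝ) :
    ∫ v, testProd α v * (1 - ∏ i, Real.cos (ξ i * v i)) ∂orthant ι ≤ 0 := by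
  have hint := integrable_testProd_mul_prod α (g := fun i x => Real.cos (ξ i * x)) fun i =>
    integrableOn_testFn_mul (α i) (by fun_prop) fun x => Real.abs_cos_le_one _
  simp_rw [mul_sub, mul_one]
  rw [integral_sub (integrable_testProd α) hint, integral_testProd,
    integral_testProd_mul_prod α fun i x => Real.cos (ξ i * x), zero_sub, neg_nonpos]
  exact Finset.prod_nonneg fun i _ => integral_testFn_mul_cos_nonneg (hα i) (ξ i)

lemma integral_mul_eq_integral_integral_of_lintegral {X Θ : Type*} [MeasurableSpace X]
    [MeasurableSpace Θ] {μ : Measure X} [SFinite μ] {κ : Measure Θ} [SFinite κ] {φ N : X → ℝ}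
    {g : X → Θ → ℝ} (hφ : Measurable φ) (hg : Measurable (Function.uncurry g))
    (hg0 : ∀ x θ, 0 ≤ g x θ) (hN0 : ∀ x, 0 ≤ N x)
    (hN : ∀ᵐ x ∂μ, ∫⁻ θ, ENNReal.ofReal (g x θ) ∂κ = ENNReal.ofReal (N x))
    (hφN : Integrable (fun x => φ x * N x) μ) :
    ∫ x, φ x * N x ∂μ = ∫ θ, ∫ x, φ x * g x θ ∂μ ∂κ := by
  have hgx (x : X) : Measurable (g x) := hg.comp measurable_prodMk_left
  have hgint : ∀ᵐ x ∂μ, Integrable (g x) κ := hN.mono fun x hx =>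
    ⟨(hgx x).aestronglyMeasurable, by
      rw [hasFiniteIntegral_iff_ofReal (.of_forall (hg0 x)), hx]
      exact ENNReal.ofReal_lt_top⟩
  have hgval : ∀ᵐ x ∂μ, ∫ θ, g x θ ∂κ = N x := hN.mono fun x hx => by
    rw [integral_eq_lintegral_of_nonneg_ae (.of_forall (hg0 x)) (hgx x).aestronglyMeasurable, hx,
      ENNReal.toReal_ofReal (hN0 x)]
  have hint : Integrable (Function.uncurry fun x θ => φ x * g x θ) (μ.prod κ) := by
    refine (integrable_prod_iff (by fun_prop)).2 ⟨hgint.mono fun x hx => hx.const_mul (φ x), ?_⟩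
    refine hφN.norm.congr (hgval.mono fun x hx => ?_)
    simp only [Function.uncurry_apply_pair, norm_mul, integral_const_mul,
      Real.norm_of_nonneg (hg0 x _), hx, Real.norm_of_nonneg (hN0 x)]
  rw [← integral_integral_swap hint]
  exact integral_congr_ae (hgval.mono fun x hx => by simp only [integral_const_mul, hx])

lemma integral_testProd_mul_nonpos [Nonempty ι] {Θ : Type*} [MeasurableSpace Θ] {κ : Measure Θ}
    [SFinite κ] {α : ι → ℝ} (hα : ∀ i, 0 ≤ α i) {N : (ι → ℝ) → ℝ} (hN0 : ∀ v, 0 ≤ N v)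
    {ξ : ι → Θ → ℝ} (hξ : ∀ i, Measurable (ξ i))
    (hN : ∀ v, ∫⁻ θ, ENNReal.ofReal (1 - ∏ i, Real.cos (ξ i θ * v i)) ∂κ = ENNReal.ofReal (N v))
    (hint : Integrable (fun v => testProd α v * N v) (orthant ι)) :
    ∫ v, testProd α v * N v ∂orthant ι ≤ 0 := by
  have hprod (v : ι → ℝ) (θ : Θ) : ∏ i, Real.cos (ξ i θ * v i) ≤ 1 :=
    (le_abs_self _).trans <| by
      rw [Finset.abs_prod]
      exact Finset.prod_le_one (fun _ _ => abs_nonneg _) fun _ _ => Real.abs_cos_le_one _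
  rw [integral_mul_eq_integral_integral_of_lintegral (by fun_prop) (by fun_prop)
    (fun v θ => sub_nonneg.2 (hprod v θ)) hN0 (.of_forall hN) hint]
  exact integral_nonpos fun θ => integral_testProd_mul_one_sub_prod_cos_nonpos hα fun i => ξ i θ

end Orthant

section SignAverage

variable {ι : Type*} [Fintype ι] [DecidableEq ι] {q : ℝ}

/-- The average of `|∑ i, ± y i| ^ q` over all choices of signs. -/
noncomputable def signAvg (q : ℝ) (y : ι → ℝ) : ℝ :=
  (∑ ε : ι → ℤˣ, |∑ i, ((ε i : ℤ) : ℝ) * y i| ^ q) / 2 ^ Fintype.card ι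

@[fun_prop]
lemma measurable_signAvg (q : ℝ) : Measurable (signAvg q : (ι → ℝ) → ℝ) := by
  unfold signAvg
  fun_prop

lemma signAvg_nonneg (q : ℝ) (y : ι → ℝ) : 0 ≤ signAvg q y :=
  div_nonneg (Finset.sum_nonneg fun _ _ => by positivity) (by positivity)

lemma signAvg_zero (hq : q ≠ 0) : signAvg q (0 : ι → ℝ) = 0 := by
  simp [signAvg, Real.zero_rpow hq]

lemma exists_unit_mul_eq_abs (t : ℝ) : ∃ u : ℤˣ, ((u : ℤ) : ℝ) * t = |t| := by
  rcases abs_choice t with h | h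
  · exact ⟨1, by simp [h]⟩
  · exact ⟨-1, by simp [h]⟩

lemma signAvg_mul_abs (q : ℝ) (v t : ι → ℝ) :
    signAvg q (fun i => v i * |t i|) = signAvg q fun i => v i * t i := by
  choose u hu using fun i => exists_unit_mul_eq_abs (t i)
  rw [signAvg, signAvg]
  congr 1
  refine Fintype.sum_equiv (Equiv.mulRight u) _ _ fun ε => ?_
  congr 2
  refine Finset.sum_congr rfl fun i _ => ?_
  simp only [Equiv.coe_mulRight, Pi.mul_apply, Units.val_mul, Int.cast_mul, ← hu]
  ring

lemma two_pow_mul_prod_cos (y : ι → ℝ) :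
    2 ^ Fintype.card ι * ∏ i, Real.cos (y i)
      = ∑ ε : ι → ℤˣ, Real.cos (∑ i, ((ε i : ℤ) : ℝ) * y i) := by
  have hcos (x : ℝ) : ∑ u : ℤˣ, Complex.exp ((((u : ℤ) : ℝ) * x : ℝ) * Complex.I)
      = (2 * Real.cos x : ℝ) := by
    rw [UnitsInt.univ, Finset.sum_pair (by decide)]
    push_cast
    rw [Complex.two_cos]
    simp
  have hprod : ((2 ^ Fintype.card ι * ∏ i, Real.cos (y i) : ℝ) : ℂ)
      = ∑ ε : ι → ℤˣ, Complex.exp ((∑ i, ((ε i : ℤ) : ℝ) * y i : ℝ) * Complex.I) := by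
    rw [← Finset.card_univ, ← Finset.prod_const, ← Finset.prod_mul_distrib, Complex.ofReal_prod]
    simp_rw [← hcos, Fintype.prod_sum, ← Complex.exp_sum, ← Finset.sum_mul, ← Complex.ofReal_sum]
  simpa only [Complex.ofReal_re, Complex.re_sum, Complex.exp_ofReal_mul_I_re]
    using congrArg Complex.re hprod

lemma one_sub_prod_cos_eq (y : ι → ℝ) (s : ℝ) :
    1 - ∏ i, Real.cos (s * y i) = (∑ ε : ι → ℤˣ,
      (1 - Real.cos ((∑ i, ((ε i : ℤ) : ℝ) * y i) * s))) / 2 ^ Fintype.card ι := by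
  have h := two_pow_mul_prod_cos fun i => s * y i
  have harg (ε : ι → ℤˣ) : (∑ i, ((ε i : ℤ) : ℝ) * y i) * s
      = ∑ i, ((ε i : ℤ) : ℝ) * (s * y i) := by
    rw [Finset.sum_mul]
    exact Finset.sum_congr rfl fun i _ => by ring
  have hcard : ∑ _ε : ι → ℤˣ, (1 : ℝ) = 2 ^ Fintype.card ι := by simp
  rw [eq_div_iff (by positivity), Finset.sum_sub_distrib, hcard]
  simp_rw [harg, ← h]
  ring

lemma exists_lintegral_one_sub_prod_cos_eq_signAvg (ι : Type*) [Fintype ι] [DecidableEq ι]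
    (hq0 : 0 < q) (hq2 : q < 2) :
    ∃ C > 0, ∀ y : ι → ℝ, ∫⁻ s, ENNReal.ofReal (1 - ∏ i, Real.cos (s * y i)) ∂rpowMeasure (-1 - q)
      = ENNReal.ofReal (C * signAvg q y) := by
  obtain ⟨C, hC, h⟩ := exists_lintegral_one_sub_cos_eq_rpow hq0 hq2
  refine ⟨C, hC, fun y => ?_⟩
  have hcard : (0 : ℝ) < 2 ^ Fintype.card ι := by positivity
  calc ∫⁻ s, ENNReal.ofReal (1 - ∏ i, Real.cos (s * y i)) ∂rpowMeasure (-1 - q)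
      = ∫⁻ s, (∑ ε : ι → ℤˣ, ENNReal.ofReal (1 - Real.cos ((∑ i, ((ε i : ℤ) : ℝ) * y i) * s)))
          / ENNReal.ofReal (2 ^ Fintype.card ι) ∂rpowMeasure (-1 - q) :=
        lintegral_congr fun s => by
          rw [one_sub_prod_cos_eq, ENNReal.ofReal_div_of_pos hcard,
            ENNReal.ofReal_sum_of_nonneg fun ε _ => sub_nonneg.2 (Real.cos_le_one _)]
    _ = (∑ ε : ι → ℤˣ, ENNReal.ofReal (C * |∑ i, ((ε i : ℤ) : ℝ) * y i| ^ q))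
          / ENNReal.ofReal (2 ^ Fintype.card ι) := by
        simp_rw [div_eq_mul_inv]
        rw [lintegral_mul_const _ (by fun_prop), lintegral_finsetSum _ fun ε _ => by fun_prop]
        simp_rw [h]
    _ = ENNReal.ofReal (C * signAvg q y) := by
        rw [← ENNReal.ofReal_sum_of_nonneg fun ε _ => by positivity,
          ← ENNReal.ofReal_div_of_pos hcard, ← Finset.mul_sum, mul_div_assoc, signAvg]

end SignAverage

section CosineRepresentation

variable {ι Ω : Type*} [Fintype ι] [MeasurableSpace Ω] {μ : Measure Ω} {q : ℝ}

lemma exists_measurable_ae_eq_abs (hq : q ≠ 0) {t : Ω → ℝ}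
    (h : AEMeasurable (fun ω => |t ω| ^ q) μ) :
    ∃ p : Ω → ℝ, Measurable p ∧ ∀ᵐ ω ∂μ, p ω = |t ω| := by
  have hroot : AEMeasurable (fun ω => (|t ω| ^ q) ^ q⁻¹) μ := h.pow_const _
  refine ⟨hroot.mk _, hroot.measurable_mk, hroot.ae_eq_mk.mono fun ω hω => ?_⟩
  rw [← hω]
  exact Real.rpow_rpow_inv (abs_nonneg _) hq

variable {t : ι → Ω → ℝ} {N : (ι → ℝ) → ℝ}

lemma integrable_abs_sum_mul_rpow (hq : q ≠ 0)
    (hN : ∀ x, ∫ ω, |∑ i, x i * t i ω| ^ q ∂μ = N x) (hpos : ∀ x ≠ 0, 0 < N x) (x : ι → ℝ) :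
    Integrable (fun ω => |∑ i, x i * t i ω| ^ q) μ := by
  rcases eq_or_ne x 0 with rfl | hx
  · simp [Real.zero_rpow hq]
  · exact .of_integral_ne_zero (by rw [hN]; exact (hpos x hx).ne')

lemma integrable_signAvg_mul [DecidableEq ι]
    (hint : ∀ x : ι → ℝ, Integrable (fun ω => |∑ i, x i * t i ω| ^ q) μ) (v : ι → ℝ) :
    Integrable (fun ω => signAvg q fun i => v i * t i ω) μ := by
  simp only [signAvg, ← mul_assoc]
  exact (integrable_finsetSum _ fun ε _ => hint fun i => ((ε i : ℤ) : ℝ) * v i).div_const _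

lemma integral_signAvg_mul [DecidableEq ι]
    (hint : ∀ x : ι → ℝ, Integrable (fun ω => |∑ i, x i * t i ω| ^ q) μ)
    (hN : ∀ x, ∫ ω, |∑ i, x i * t i ω| ^ q ∂μ = N x)
    (hsign : ∀ (ε : ι → ℤˣ) x, N (fun i => ((ε i : ℤ) : ℝ) * x i) = N x) (v : ι → ℝ) :
    ∫ ω, signAvg q (fun i => v i * t i ω) ∂μ = N v := by
  simp only [signAvg, ← mul_assoc]
  rw [integral_div, integral_finsetSum _ fun ε _ => hint fun i => ((ε i : ℤ) : ℝ) * v i]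
  simp [hN, hsign]

/-- Averaging over signs replaces each `t i` by a measurable version of `|t i|`, and a finite
family of `q`-integrable functions lives on a `σ`-finite part of the measure space. -/
lemma exists_sigmaFinite_lintegral_signAvg [DecidableEq ι] (hq : q ≠ 0)
    (hN : ∀ x, ∫ ω, |∑ i, x i * t i ω| ^ q ∂μ = N x) (hpos : ∀ x ≠ 0, 0 < N x)
    (hsign : ∀ (ε : ι → ℤˣ) x, N (fun i => ((ε i : ℤ) : ℝ) * x i) = N x) :
    ∃ (S : Set Ω) (p : ι → Ω → ℝ), SigmaFinite (μ.restrict S) ∧ (∀ i, Measurable (p i)) ∧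
      ∀ v, ∫⁻ ω in S, ENNReal.ofReal (signAvg q fun i => v i * p i ω) ∂μ
        = ENNReal.ofReal (N v) := by
  have hint := integrable_abs_sum_mul_rpow hq hN hpos
  have hinti (i : ι) : Integrable (fun ω => |t i ω| ^ q) μ := by
    simpa [Pi.single_apply] using hint (Pi.single i 1)
  choose p hp hpt using fun i => exists_measurable_ae_eq_abs hq (hinti i).aemeasurable
  have hfin : AEFinStronglyMeasurable (fun ω => ∑ i, |t i ω| ^ q) μ :=
    (integrable_finsetSum _ fun i _ => hinti i).aefinStronglyMeasurable
  have hsupp : ∀ᵐ ω ∂μ, ω ∉ hfin.sigmaFiniteSet → ∀ i, t i ω = 0 := by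
    have hzero := (ae_restrict_iff' hfin.measurableSet.compl).1 hfin.ae_eq_zero_compl
    filter_upwards [hzero] with ω hω hωS i
    have hi := (Finset.sum_eq_zero_iff_of_nonneg fun i _ => by positivity).1 (hω hωS) i
      (Finset.mem_univ i)
    exact abs_eq_zero.1 ((Real.rpow_eq_zero (abs_nonneg _) hq).1 hi)
  refine ⟨hfin.sigmaFiniteSet, p, inferInstance, hp, fun v => ?_⟩
  rw [← integral_signAvg_mul hint hN hsign v, ofReal_integral_eq_lintegral_ofReal
    (integrable_signAvg_mul hint v) (.of_forall fun ω => signAvg_nonneg q _),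
    ← lintegral_indicator hfin.measurableSet]
  refine lintegral_congr_ae ?_
  filter_upwards [hsupp, ae_all_iff.2 hpt] with ω hω hpω
  by_cases hωS : ω ∈ hfin.sigmaFiniteSet
  · simp only [indicator_of_mem hωS, hpω, signAvg_mul_abs]
  · simp only [indicator_of_notMem hωS, hω hωS, mul_zero, ← Pi.zero_def, signAvg_zero hq,
      ENNReal.ofReal_zero]

lemma exists_sigmaFinite_lintegral_one_sub_prod_cos (hq0 : 0 < q) (hq2 : q < 2)
    (hN : ∀ x, ∫ ω, |∑ i, x i * t i ω| ^ q ∂μ = N x) (hpos : ∀ x ≠ 0, 0 < N x)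
    (hsign : ∀ (ε : ι → ℤˣ) x, N (fun i => ((ε i : ℤ) : ℝ) * x i) = N x) :
    ∃ (κ : Measure (Ω × ℝ)) (ξ : ι → Ω × ℝ → ℝ), SFinite κ ∧ (∀ i, Measurable (ξ i)) ∧
      ∃ C > 0, ∀ v, ∫⁻ θ, ENNReal.ofReal (1 - ∏ i, Real.cos (ξ i θ * v i)) ∂κ
        = ENNReal.ofReal (C * N v) := by
  classical
  obtain ⟨S, p, hS, hp, hlint⟩ := exists_sigmaFinite_lintegral_signAvg hq0.ne' hN hpos hsign
  obtain ⟨C, hC, hcos⟩ := exists_lintegral_one_sub_prod_cos_eq_signAvg ι hq0 hq2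
  refine ⟨(μ.restrict S).prod (rpowMeasure (-1 - q)), fun i θ => θ.2 * p i θ.1, inferInstance,
    by fun_prop, C, hC, fun v => ?_⟩
  rw [lintegral_prod _ (by fun_prop)]
  simp_rw [mul_assoc, mul_comm (p _ _) (v _), hcos, ENNReal.ofReal_mul hC.le]
  rw [lintegral_const_mul _ (by fun_prop), hlint]

lemma integral_testProd_mul_nonpos_of_integral_abs_sum_rpow [Nonempty ι] (hq0 : 0 < q)
    (hq2 : q < 2) (hN : ∀ x, ∫ ω, |∑ i, x i * t i ω| ^ q ∂μ = N x) (hpos : ∀ x ≠ 0, 0 < N x)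
    (hsign : ∀ (ε : ι → ℤˣ) x, N (fun i => ((ε i : ℤ) : ℝ) * x i) = N x) {α : ι → ℝ}
    (hα : ∀ i, 0 ≤ α i) (hint : Integrable (fun v => testProd α v * N v) (orthant ι)) :
    ∫ v, testProd α v * N v ∂orthant ι ≤ 0 := by
  obtain ⟨κ, ξ, _, hξ, C, hC, hrep⟩ :=
    exists_sigmaFinite_lintegral_one_sub_prod_cos hq0 hq2 hN hpos hsign
  have hN0 (v : ι → ℝ) : 0 ≤ C * N v := by
    rw [← hN]
    exact mul_nonneg hC.le (integral_nonneg fun ω => by positivity)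
  have hle := integral_testProd_mul_nonpos hα hN0 hξ hrep
  simp_rw [mul_left_comm _ C, integral_const_mul] at hle
  exact nonpos_of_mul_nonpos_right (hle (hint.const_mul C)) hC

end CosineRepresentation

section StepFunction

variable {ι : Type*} [Fintype ι] {E : ι → Set ℝ} {v : ι → ℝ}

/-- The step function taking the value `v i` on `E i` and `0` elsewhere, for disjoint `E i`. It is
written as a linear combination of indicators, to which linear maps can be applied. -/
noncomputable def stepFn (E : ι → Set ℝ) (v : ι → ℝ) : ℝ → ℝ := ∑ i, v i • (E i).indicator 1

lemma measurable_stepFn (hE : ∀ i, MeasurableSet (E i)) (v : ι → ℝ) : Measurable (stepFn E v) := by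
  simp only [stepFn, Finset.sum_fn]
  exact Finset.measurable_fun_sum _ fun i _ => (measurable_one.indicator (hE i)).const_smul (v i)

lemma stepFn_apply_of_mem (hdisj : Pairwise (Function.onFun Disjoint E)) {i : ι} {u : ℝ}
    (hu : u ∈ E i) : stepFn E v u = v i := by
  rw [stepFn, Finset.sum_apply, Fintype.sum_eq_single i fun j hj => ?_]
  · simp [hu]
  · simp [disjoint_left.1 (hdisj hj.symm) hu]

lemma stepFn_apply_of_notMem {u : ℝ} (hu : ∀ i, u ∉ E i) : stepFn E v u = 0 := by
  simp [stepFn, hu]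

lemma abs_stepFn_le (hdisj : Pairwise (Function.onFun Disjoint E)) {M : ℝ} (hM : 0 ≤ M)
    (hv : ∀ i, |v i| ≤ M) (u : ℝ) : |stepFn E v u| ≤ M := by
  by_cases hu : ∃ i, u ∈ E i
  · obtain ⟨i, hi⟩ := hu
    rw [stepFn_apply_of_mem hdisj hi]
    exact hv i
  · rwa [stepFn_apply_of_notMem (not_exists.1 hu), abs_zero]

lemma superlevel_stepFn (hE1 : ∀ i, E i ⊆ Ioo 0 1) (hdisj : Pairwise (Function.onFun Disjoint E))
    {r : ℝ} (hr : 0 ≤ r) :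
    {u ∈ Ioo (0 : ℝ) 1 | r < |stepFn E v u|} = ⋃ i ∈ Finset.univ.filter (r < |v ·|), E i := by
  ext u
  simp only [mem_ofPred_eq, mem_iUnion, Finset.mem_filter_univ, exists_prop]
  constructor
  · rintro ⟨-, hu⟩
    by_contra! hnot
    refine hu.not_ge ?_
    by_cases hmem : ∃ i, u ∈ E i
    · obtain ⟨i, hi⟩ := hmem
      rw [stepFn_apply_of_mem hdisj hi]
      exact not_lt.1 fun h => hnot i h hi
    · rwa [stepFn_apply_of_notMem (not_exists.1 hmem), abs_zero]
  · rintro ⟨i, hi, hu⟩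
    exact ⟨hE1 i hu, by rwa [stepFn_apply_of_mem hdisj hu]⟩

lemma distr_stepFn (hE : ∀ i, MeasurableSet (E i)) (hE1 : ∀ i, E i ⊆ Ioo 0 1)
    (hdisj : Pairwise (Function.onFun Disjoint E)) (v : ι → ℝ) {r : ℝ} (hr : 0 ≤ r) :
    distr (stepFn E v) r = ∑ i with r < |v i|, volume.real (E i) := by
  rw [distr, superlevel_stepFn hE1 hdisj hr,
    measureReal_biUnion_finset (hdisj.set_pairwise _) (fun i _ => hE i)
      fun i _ => ((measure_mono (hE1 i)).trans_lt measure_Ioo_lt_top).ne]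

lemma lorentzPow_stepFn {q : ℝ} (ν : Measure ℝ) (hq : 0 < q) (hE : ∀ i, MeasurableSet (E i))
    (hE1 : ∀ i, E i ⊆ Ioo 0 1) (hdisj : Pairwise (Function.onFun Disjoint E)) (v : ι → ℝ) :
    lorentzPow ν q (stepFn E v) = ENNReal.ofReal q *
      ∫⁻ r, ν (Ioo 0 (∑ i with r < |v i|, volume.real (E i))) ∂rpowMeasure (q - 1) := by
  rw [lorentzPow_eq_layerCake ν hq (measurable_stepFn hE v)]
  congr 1
  refine lintegral_congr_ae ((ae_rpowMeasure_pos _).mono fun r hr => ?_)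
  simp only [distr_stepFn hE hE1 hdisj v hr.le]

lemma lorentzPow_stepFn_units_mul {q : ℝ} (ν : Measure ℝ) (hq : 0 < q)
    (hE : ∀ i, MeasurableSet (E i)) (hE1 : ∀ i, E i ⊆ Ioo 0 1)
    (hdisj : Pairwise (Function.onFun Disjoint E)) (ε : ι → ℤˣ) (v : ι → ℝ) :
    lorentzPow ν q (stepFn E fun i => ((ε i : ℤ) : ℝ) * v i) = lorentzPow ν q (stepFn E v) := by
  have habs (i : ι) : |((ε i : ℤ) : ℝ) * v i| = |v i| := by
    rcases Int.units_eq_one_or (ε i) with h | h <;> simp [h]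
  simp only [lorentzPow_stepFn ν hq hE hE1 hdisj, habs]

lemma lorentzPow_stepFn_pos {q : ℝ} {ν : Measure ℝ} (hν : ∀ d > 0, 0 < ν (Ioo 0 d)) (hq : 0 ≤ q)
    (hE : ∀ i, MeasurableSet (E i)) (hE1 : ∀ i, E i ⊆ Ioo 0 1) (hE0 : ∀ i, 0 < volume.real (E i))
    (hdisj : Pairwise (Function.onFun Disjoint E)) (hv : v ≠ 0) :
    0 < lorentzPow ν q (stepFn E v) := by
  obtain ⟨i, hi⟩ := Function.ne_iff.1 hv
  have hvi : 0 < |v i| := abs_pos.2 hi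
  have hdistr : 0 < distr (stepFn E v) (|v i| / 2) := by
    rw [distr_stepFn hE hE1 hdisj v (by positivity)]
    exact Finset.sum_pos (fun j _ => hE0 j) ⟨i, by simpa using hi⟩
  refine lt_of_lt_of_le ?_ (rpow_mul_measure_le_lorentzPow ν hq (measurable_stepFn hE v)
    (by positivity : 0 ≤ |v i| / 2))
  exact ENNReal.mul_pos (ENNReal.ofReal_pos.2 (by positivity)).ne' (hν _ hdistr).ne'

lemma lorentzPow_stepFn_le_prod {q : ℝ} (ν : Measure ℝ) (hq0 : 0 ≤ q) (hq1 : q ≤ 1)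
    (hdisj : Pairwise (Function.onFun Disjoint E)) (hv : ∀ i, 0 ≤ v i) :
    lorentzPow ν q (stepFn E v) ≤ ENNReal.ofReal (∏ i, (1 + v i)) * ν (Ioo 0 1) := by
  classical
  have hone (s : Finset ι) : 1 ≤ ∏ i ∈ s, (1 + v i) :=
    Finset.one_le_prod fun i _ => le_add_of_nonneg_right (hv i)
  have hprod : 0 ≤ ∏ i, (1 + v i) := zero_le_one.trans (hone _)
  have hle (i : ι) : |v i| ≤ ∏ i, (1 + v i) := by
    rw [abs_of_nonneg (hv i), ← Finset.mul_prod_erase _ _ (Finset.mem_univ i)]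
    exact (le_add_of_nonneg_left zero_le_one).trans
      (le_mul_of_one_le_right (add_nonneg zero_le_one (hv i)) (hone _))
  refine (lorentzPow_le_of_abs_le ν (fun u _ => abs_stepFn_le hdisj hprod hle u) hprod hq0).trans ?_
  gcongr
  exact Real.rpow_le_self_of_one_le (hone _) hq1

end StepFunction

section Interaction

variable {ι : Type*} [Fintype ι]

/-- The alternating sum of `W` over the vertices `∑ i ∈ s, a i` of the box spanned by `a`: up to
sign, the mixed difference of `W` at `0` with increments `a i`. -/
noncomputable def altSum (W : ℝ → ℝ) (a : ι → ℝ) : ℝ :=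
  ∑ s : Finset ι, (-1) ^ s.card * W (∑ i ∈ s, a i)

/-- The integral `∫ r ^ (q - 1) ∏ i, e ^ (-r) sin (α i r) dr` over the half-line. -/
noncomputable def interaction (q : ℝ) (α : ι → ℝ) : ℝ :=
  ∫ r, ∏ i, dampedSine (α i) r ∂rpowMeasure (q - 1)

lemma integral_testFn_mul_ite (a : ℝ) {r : ℝ} (hr : 0 ≤ r) (p : Prop) [Decidable p] :
    ∫ x in Ioi (0 : ℝ), testFn a x * (if p ↔ r < x then 1 else 0)
      = (if p then -1 else 1) * dampedSine a r := by
  have hIoi : ∫ x in Ioi (0 : ℝ), (Ioi r).indicator (testFn a) x = -dampedSine a r := by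
    rw [setIntegral_indicator measurableSet_Ioi, Ioi_inter_Ioi, sup_of_le_right hr,
      integral_Ioi_testFn a hr]
  have hint : IntegrableOn ((Ioi r).indicator (testFn a)) (Ioi 0) :=
    (integrableOn_testFn a).indicator measurableSet_Ioi
  by_cases hp : p
  · simp only [hp, true_iff, if_true, mul_ite, mul_one, mul_zero, neg_one_mul]
    exact hIoi
  · have hsub (x : ℝ) : testFn a x * (if ¬ r < x then 1 else 0)
        = testFn a x - (Ioi r).indicator (testFn a) x := by
      by_cases hx : r < x <;> simp [hx, indicator_of_mem, indicator_of_notMem]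
    simp only [hp, false_iff, if_false, one_mul, hsub]
    rw [integral_sub (integrableOn_testFn a) hint, hIoi, integral_testFn, zero_sub, neg_neg]

lemma apply_filter_eq_sum_mul_prod_ite [DecidableEq ι] (F : Finset ι → ℝ) (p : ι → Prop)
    [DecidablePred p] :
    F {i | p i} = ∑ s, F s * ∏ i, if i ∈ s ↔ p i then 1 else 0 := by
  rw [Fintype.sum_eq_single (Finset.univ.filter p) fun s hs => ?_]
  · simp
  · obtain ⟨i, hi⟩ : ∃ i, ¬(i ∈ s ↔ p i) := by
      by_contra! h
      exact hs (by ext i; simp [h])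
    rw [Finset.prod_eq_zero (Finset.mem_univ i) (if_neg hi), mul_zero]

lemma integral_testProd_mul_apply_filter (α : ι → ℝ) (F : Finset ι → ℝ) {r : ℝ} (hr : 0 ≤ r) :
    ∫ v, testProd α v * F {i | r < v i} ∂orthant ι
      = (∑ s : Finset ι, (-1) ^ s.card * F s) * ∏ i, dampedSine (α i) r := by
  classical
  have hint (s : Finset ι) : Integrable
      (fun v => testProd α v * ∏ i, if i ∈ s ↔ r < v i then (1 : ℝ) else 0) (orthant ι) :=
    integrable_testProd_mul_prod α (g := fun i x => if i ∈ s ↔ r < x then 1 else 0) fun i =>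
      integrableOn_testFn_mul (α i) (.ite (by measurability) measurable_const measurable_const)
        fun x => by split_ifs <;> simp
  simp_rw [apply_filter_eq_sum_mul_prod_ite F, Finset.mul_sum, mul_left_comm _ (F _)]
  rw [integral_finsetSum _ fun s _ => (hint s).const_mul (F s), Finset.sum_mul]
  refine Finset.sum_congr rfl fun s _ => ?_
  rw [integral_const_mul,
    integral_testProd_mul_prod α fun i x => if i ∈ s ↔ r < x then (1 : ℝ) else 0]
  simp_rw [integral_testFn_mul_ite _ hr, Finset.prod_mul_distrib, Finset.prod_ite_mem]
  simp only [Finset.univ_inter, Finset.prod_const]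
  ring

variable {E : ι → Set ℝ} {q : ℝ} (ν : Measure ℝ)

lemma measurable_measure_Ioo_sum_filter (a : ι → ℝ) :
    Measurable fun x : (ι → ℝ) × ℝ => ν (Ioo 0 (∑ i with x.2 < x.1 i, a i)) := by
  have hmono : Monotone fun d : ℝ => ν (Ioo 0 d) :=
    fun _ _ h => measure_mono (Ioo_subset_Ioo_right h)
  simp only [Finset.sum_filter]
  refine hmono.measurable.comp (Finset.measurable_fun_sum _ fun i _ => ?_)
  exact .ite (measurableSet_lt (by fun_prop) (by fun_prop)) measurable_const measurable_const

lemma measurable_lorentzPow_stepFn (hq : 0 < q) (hE : ∀ i, MeasurableSet (E i))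
    (hE1 : ∀ i, E i ⊆ Ioo 0 1) (hdisj : Pairwise (Function.onFun Disjoint E)) :
    Measurable fun v => lorentzPow ν q (stepFn E v) := by
  simp only [lorentzPow_stepFn ν hq hE hE1 hdisj]
  exact ((measurable_measure_Ioo_sum_filter ν fun i => volume.real (E i)).comp
    (by fun_prop : Measurable fun x : (ι → ℝ) × ℝ =>
      ((fun i => |x.1 i|, x.2) : (ι → ℝ) × ℝ))).lintegral_prod_right'.const_mul _

variable [IsFiniteMeasure ν]

lemma lorentzPow_stepFn_lt_top (hq : 0 ≤ q) (hdisj : Pairwise (Function.onFun Disjoint E))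
    (v : ι → ℝ) : lorentzPow ν q (stepFn E v) < ⊤ := by
  have hle := abs_stepFn_le hdisj (Finset.sum_nonneg fun i _ => abs_nonneg (v i))
    fun i => Finset.single_le_sum (fun j _ => abs_nonneg (v j)) (Finset.mem_univ i)
  exact (lorentzPow_le_of_abs_le ν (fun u _ => hle u)
    (Finset.sum_nonneg fun i _ => abs_nonneg (v i)) hq).trans_lt
    (ENNReal.mul_lt_top ENNReal.ofReal_lt_top (measure_lt_top ν _))

lemma integrable_testProd_mul_lorentzPow_stepFn (hq0 : 0 < q) (hq1 : q ≤ 1)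
    (hE : ∀ i, MeasurableSet (E i)) (hE1 : ∀ i, E i ⊆ Ioo 0 1)
    (hdisj : Pairwise (Function.onFun Disjoint E)) (α : ι → ℝ) :
    Integrable (fun v => testProd α v * (lorentzPow ν q (stepFn E v)).toReal) (orthant ι) := by
  have hbound := (integrable_testProd_mul_prod α (g := fun _ x => 1 + x) fun i =>
    integrableOn_testFn_mul_one_add (α i)).mul_const (ν.real (Ioo 0 1))
  have hmeas := (measurable_lorentzPow_stepFn ν hq0 hE hE1 hdisj).ennreal_toReal
  refine hbound.mono ((continuous_testProd α).measurable.mul hmeas).aestronglyMeasurable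
    (ae_orthant_pos.mono fun v hv => ?_)
  have hprod : 0 ≤ ∏ i, (1 + v i) := Finset.prod_nonneg fun i _ => by linarith [hv i]
  rw [mul_assoc, norm_mul, norm_mul]
  gcongr
  rw [Real.norm_of_nonneg ENNReal.toReal_nonneg, Real.norm_of_nonneg (by positivity)]
  refine ENNReal.toReal_le_of_le_ofReal (by positivity) ?_
  rw [ENNReal.ofReal_mul hprod, ofReal_measureReal]
  exact lorentzPow_stepFn_le_prod ν hq0.le hq1 hdisj fun i => (hv i).le

lemma integral_testProd_mul_lorentzPow_stepFn (hq0 : 0 < q) (hq1 : q ≤ 1)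
    (hE : ∀ i, MeasurableSet (E i)) (hE1 : ∀ i, E i ⊆ Ioo 0 1)
    (hdisj : Pairwise (Function.onFun Disjoint E)) (α : ι → ℝ) :
    ∫ v, testProd α v * (lorentzPow ν q (stepFn E v)).toReal ∂orthant ι
      = q * (altSum (fun d => ν.real (Ioo 0 d)) (fun i => volume.real (E i))
        * interaction q α) := by
  have hrep : ∀ᵐ v ∂orthant ι, ∫⁻ r, ENNReal.ofReal
      (q * ν.real (Ioo 0 (∑ i with r < v i, volume.real (E i)))) ∂rpowMeasure (q - 1)
        = ENNReal.ofReal (lorentzPow ν q (stepFn E v)).toReal := by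
    filter_upwards [ae_orthant_pos] with v hv
    rw [ENNReal.ofReal_toReal (lorentzPow_stepFn_lt_top ν hq0.le hdisj v).ne,
      lorentzPow_stepFn ν hq0 hE hE1 hdisj, ← lintegral_const_mul' _ _ ENNReal.ofReal_ne_top]
    simp only [ENNReal.ofReal_mul hq0.le, abs_of_pos (hv _)]
    exact lintegral_congr fun r => by rw [ofReal_measureReal]
  rw [integral_mul_eq_integral_integral_of_lintegral (by fun_prop)
    ((measurable_measure_Ioo_sum_filter ν _).ennreal_toReal.const_mul q)
    (fun v r => by positivity) (fun v => ENNReal.toReal_nonneg) hrep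
    (integrable_testProd_mul_lorentzPow_stepFn ν hq0 hq1 hE hE1 hdisj α), interaction,
    ← integral_const_mul, ← integral_const_mul]
  refine integral_congr_ae ((ae_rpowMeasure_pos _).mono fun r hr => ?_)
  simp only [mul_left_comm _ q, integral_const_mul]
  rw [integral_testProd_mul_apply_filter α
    (fun s => ν.real (Ioo 0 (∑ i ∈ s, volume.real (E i)))) hr.le, altSum]

end Interaction

section Obstruction

variable {Ω : Type*} [MeasurableSpace Ω] {μ : Measure Ω} {T : (ℝ → ℝ) →ₗ[ℝ] (Ω → ℝ)}
  {ν : Measure ℝ} [IsFiniteMeasure ν] {q : ℝ}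

lemma IsLorentzIsometry.altSum_mul_interaction_nonpos {ι : Type*} [Fintype ι] [Nonempty ι]
    (hT : IsLorentzIsometry ν q μ T) (hq0 : 0 < q) (hq1 : q ≤ 1)
    (hν : ∀ d > 0, 0 < ν (Ioo 0 d)) {E : ι → Set ℝ} (hE : ∀ i, MeasurableSet (E i))
    (hE1 : ∀ i, E i ⊆ Ioo 0 1) (hE0 : ∀ i, 0 < volume.real (E i))
    (hdisj : Pairwise (Function.onFun Disjoint E)) {α : ι → ℝ} (hα : ∀ i, 0 ≤ α i) :
    altSum (fun d => ν.real (Ioo 0 d)) (fun i => volume.real (E i)) * interaction q α ≤ 0 := by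
  have hfin := lorentzPow_stepFn_lt_top ν hq0.le hdisj
  have hnorm (v : ι → ℝ) : ∫ ω, |∑ i, v i * T ((E i).indicator 1) ω| ^ q ∂μ
      = (lorentzPow ν q (stepFn E v)).toReal := by
    rw [← hT _ (measurable_stepFn hE v) (hfin v)]
    simp [stepFn]
  have hle := integral_testProd_mul_nonpos_of_integral_abs_sum_rpow hq0 (hq1.trans_lt one_lt_two)
    hnorm
    (fun v hv => ENNReal.toReal_pos (lorentzPow_stepFn_pos hν hq0.le hE hE1 hE0 hdisj hv).ne'
      (hfin v).ne)
    (fun ε v => by rw [lorentzPow_stepFn_units_mul ν hq0 hE hE1 hdisj]) hα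
    (integrable_testProd_mul_lorentzPow_stepFn ν hq0 hq1 hE hE1 hdisj α)
  rw [integral_testProd_mul_lorentzPow_stepFn ν hq0 hq1 hE hE1 hdisj] at hle
  exact nonpos_of_mul_nonpos_right hle hq0

lemma exists_pairwise_disjoint_volume_eq {n : ℕ} {a : Fin n → ℝ} (ha : ∀ i, 0 ≤ a i)
    (ha1 : ∑ i, a i ≤ 1) :
    ∃ E : Fin n → Set ℝ, (∀ i, MeasurableSet (E i)) ∧ (∀ i, E i ⊆ Ioo 0 1) ∧
      Pairwise (Function.onFun Disjoint E) ∧ ∀ i, volume.real (E i) = a i := by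
  have hsum {s t : Finset (Fin n)} (hst : s ⊆ t) : ∑ i ∈ s, a i ≤ ∑ i ∈ t, a i :=
    Finset.sum_le_sum_of_subset_of_nonneg hst fun i _ _ => ha i
  refine ⟨fun i => Ioo (∑ j ∈ Finset.Iio i, a j) (∑ j ∈ Finset.Iic i, a j),
    fun i => measurableSet_Ioo, fun i => Ioo_subset_Ioo (Finset.sum_nonneg fun j _ => ha j)
      ((hsum (Finset.subset_univ _)).trans ha1), ?_, fun i => ?_⟩
  · refine (pairwise_disjoint_on _).2 fun i j hij => ?_
    refine Ioo_disjoint_Ioo.2 (min_le_left _ _ |>.trans (le_trans (hsum ?_) (le_max_right _ _)))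
    exact fun k hk => Finset.mem_Iio.2 ((Finset.mem_Iic.1 hk).trans_lt hij)
  · rw [Real.volume_real_Ioo_of_le (hsum Finset.Iio_subset_Iic_self), ← Finset.Iio_insert,
      Finset.sum_insert (by simp), add_sub_cancel_right]

lemma IsLorentzIsometry.altSum_mul_interaction_nonpos_of_sum_le_one
    (hT : IsLorentzIsometry ν q μ T) (hq0 : 0 < q) (hq1 : q ≤ 1)
    (hν : ∀ d > 0, 0 < ν (Ioo 0 d)) {n : ℕ} [NeZero n] {a α : Fin n → ℝ} (ha : ∀ i, 0 < a i)
    (ha1 : ∑ i, a i ≤ 1) (hα : ∀ i, 0 ≤ α i) :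
    altSum (fun d => ν.real (Ioo 0 d)) a * interaction q α ≤ 0 := by
  obtain ⟨E, hE, hE1, hdisj, hEa⟩ := exists_pairwise_disjoint_volume_eq (fun i => (ha i).le) ha1
  simpa only [hEa] using hT.altSum_mul_interaction_nonpos hq0 hq1 hν hE hE1
    (fun i => (hEa i).symm ▸ ha i) hdisj hα

end Obstruction

section GammaSine

variable {p q : ℝ}

lemma integral_rpowMeasure (s : ℝ) (F : ℝ → ℝ) :
    ∫ r, F r ∂rpowMeasure s = ∫ r in Ioi (0 : ℝ), r ^ s * F r := by
  rw [rpowMeasure, integral_withDensity_eq_integral_toReal_smul (by fun_prop) (by simp)]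
  refine setIntegral_congr_fun measurableSet_Ioi fun r hr => ?_
  simp only [ENNReal.toReal_ofReal (Real.rpow_nonneg (mem_Ioi.1 hr).le s), smul_eq_mul]

lemma integral_rpow_mul_exp_neg_mul_rpowMeasure (hq : 0 < q) (hp : 0 < p) {t : ℝ} (ht : 0 ≤ t) :
    ∫ r, r ^ t * Real.exp (-(p * r)) ∂rpowMeasure (q - 1)
      = (1 / p) ^ (q + t) * Real.Gamma (q + t) := by
  rw [← Real.integral_rpow_mul_exp_neg_mul_Ioi (by positivity) hp, integral_rpowMeasure]
  refine setIntegral_congr_fun measurableSet_Ioi fun r hr => ?_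
  simp only [← mul_assoc, ← Real.rpow_add (mem_Ioi.1 hr)]
  ring_nf

lemma integrable_rpow_mul_exp_neg_mul (hq : 0 < q) (hp : 0 < p) {t : ℝ} (ht : 0 ≤ t) :
    Integrable (fun r => r ^ t * Real.exp (-(p * r))) (rpowMeasure (q - 1)) :=
  .of_integral_ne_zero (by
    rw [integral_rpow_mul_exp_neg_mul_rpowMeasure hq hp ht]
    exact (mul_pos (by positivity) (Real.Gamma_pos_of_pos (by positivity))).ne')

lemma integrable_exp_neg_mul_rpowMeasure (hq : 0 < q) (hp : 0 < p) :
    Integrable (fun r => Real.exp (-(p * r))) (rpowMeasure (q - 1)) := by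
  simpa using integrable_rpow_mul_exp_neg_mul hq hp le_rfl

/-- The sine transform `∫ r ^ (q - 1) e ^ (-p r) sin (k r) dr` of the Gamma density. -/
noncomputable def gammaSine (p q k : ℝ) : ℝ :=
  ∫ r, Real.exp (-(p * r)) * Real.sin (k * r) ∂rpowMeasure (q - 1)

lemma integrable_gammaSine (hq : 0 < q) (hp : 0 < p) (k : ℝ) :
    Integrable (fun r => Real.exp (-(p * r)) * Real.sin (k * r)) (rpowMeasure (q - 1)) :=
  (integrable_exp_neg_mul_rpowMeasure hq hp).mul_bdd (c := 1) (by fun_prop)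
    (.of_forall fun _ => Real.abs_sin_le_one _)

lemma gammaSine_neg (p q k : ℝ) : gammaSine p q (-k) = -gammaSine p q k := by
  simp [gammaSine, integral_neg]

lemma tendsto_integral_mul_sin_atTop {f : ℝ → ℝ} (hf : Integrable f) :
    Filter.Tendsto (fun k => ∫ r, f r * Real.sin (k * r)) Filter.atTop (nhds 0) := by
  have hlim : Filter.Tendsto (fun k : ℝ => k / (2 * Real.pi)) Filter.atTop (Filter.cocompact ℝ) :=
    (Filter.tendsto_id.atTop_div_const Real.two_pi_pos).mono_right atTop_le_cocompact
  have hRL := (Complex.continuous_im.tendsto _).comp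
    ((Real.tendsto_integral_exp_smul_cocompact fun r => (f r : ℂ)).comp hlim) |>.neg
  rw [Complex.zero_im, neg_zero] at hRL
  refine hRL.congr fun k => ?_
  have hexp (r : ℝ) : (Real.fourierChar (-(r * (k / (2 * Real.pi)))) • (f r : ℂ)).im
      = -(f r * Real.sin (k * r)) := by
    rw [Circle.smul_def, Real.fourierChar_apply, smul_eq_mul, Complex.im_mul_ofReal,
      Complex.exp_ofReal_mul_I_im]
    have harg : 2 * Real.pi * -(r * (k / (2 * Real.pi))) = -(k * r) := by field_simp
    rw [harg, Real.sin_neg]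
    ring
  have hint : Integrable fun r => Real.fourierChar (-(r * (k / (2 * Real.pi)))) • (f r : ℂ) := by
    simpa [mul_comm] using
      (Real.fourierIntegral_convergent_iff (k / (2 * Real.pi))).2 (hf.ofReal (𝕜 := ℂ))
  have him := integral_im hint
  simp only [RCLike.im_eq_complex_im, hexp, integral_neg] at him
  exact neg_eq_iff_eq_neg.2 him.symm

lemma tendsto_gammaSine (hq : 0 < q) (hp : 0 < p) :
    Filter.Tendsto (gammaSine p q) Filter.atTop (nhds 0) := by
  have hint : IntegrableOn (fun r => r ^ (q - 1) * Real.exp (-(p * r))) (Ioi 0) := by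
    simpa using integrableOn_rpow_mul_exp_neg_mul_rpow (p := 1) (s := q - 1) (by linarith)
      one_pos hp
  refine (tendsto_integral_mul_sin_atTop
    ((integrable_indicator_iff measurableSet_Ioi).2 hint)).congr fun k => ?_
  rw [gammaSine, integral_rpowMeasure, ← integral_indicator measurableSet_Ioi]
  simp only [← mul_assoc, indicator_mul_left]

lemma le_gammaSine_one (hq : 0 < q) (hp : 0 < p) :
    (1 / p) ^ (q + 1) * Real.Gamma (q + 1) - (1 / p) ^ (q + 3) * Real.Gamma (q + 3) / 6
      ≤ gammaSine p q 1 := by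
  have hint₁ := integrable_rpow_mul_exp_neg_mul hq hp zero_le_one
  have hint₃ := (integrable_rpow_mul_exp_neg_mul hq hp zero_le_three).div_const 6
  rw [← integral_rpow_mul_exp_neg_mul_rpowMeasure hq hp zero_le_one,
    ← integral_rpow_mul_exp_neg_mul_rpowMeasure hq hp zero_le_three, ← integral_div,
    ← integral_sub hint₁ hint₃]
  refine integral_mono_ae (hint₁.sub hint₃) (integrable_gammaSine hq hp 1)
    ((ae_rpowMeasure_pos _).mono fun r hr => ?_)
  have hsin := mul_le_mul_of_nonneg_left (Real.sin_ge_sub_cube hr.le) (Real.exp_pos (-(p * r))).le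
  simp only [Real.rpow_one, Real.rpow_ofNat, one_mul]
  linarith

lemma gammaSine_one_pos (hq : 0 < q) (hp : 0 < p) (hpq : (q + 1) * (q + 2) < 6 * p ^ 2) :
    0 < gammaSine p q 1 := by
  refine (le_gammaSine_one hq hp).trans_lt' ?_
  have hΓ : Real.Gamma (q + 3) = (q + 2) * ((q + 1) * Real.Gamma (q + 1)) := by
    rw [← Real.Gamma_add_one (by positivity), add_assoc, one_add_one_eq_two,
      ← Real.Gamma_add_one (by positivity)]
    norm_num [add_assoc]
  have hpow : (1 / p) ^ (q + 3) = (1 / p) ^ (q + 1) / p ^ 2 := by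
    rw [show q + 3 = q + 1 + (2 : ℕ) by push_cast; ring, Real.rpow_add_natCast (by positivity)]
    field_simp
  have := Real.Gamma_pos_of_pos (show 0 < q + 1 by positivity)
  have : 0 < (1 / p) ^ (q + 1) := by positivity
  rw [hΓ, hpow, show (1 / p) ^ (q + 1) * Real.Gamma (q + 1) - (1 / p) ^ (q + 1) / p ^ 2
    * ((q + 2) * ((q + 1) * Real.Gamma (q + 1))) / 6 = (1 / p) ^ (q + 1) * Real.Gamma (q + 1)
    * (1 - (q + 1) * (q + 2) / (6 * p ^ 2)) by field_simp]
  exact mul_pos (by positivity) (sub_pos.2 ((div_lt_one (by positivity)).2 hpq))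

end GammaSine

section InteractionSigns

variable {q : ℝ}

lemma interaction_pair_pos (hq : 0 < q) : 0 < interaction q ![1, 1] := by
  have hint : Integrable (fun r => dampedSine 1 r * dampedSine 1 r) (rpowMeasure (q - 1)) := by
    refine ((integrable_gammaSine hq zero_lt_two 1).mul_bdd (c := 1)
      (g := fun r => Real.sin (1 * r)) (by fun_prop)
      (.of_forall fun _ => Real.abs_sin_le_one _)).congr (.of_forall fun r => ?_)
    simp only [dampedSine, two_mul, neg_add, Real.exp_add]
    ring
  have hpos := lintegral_rpowMeasure_pos (q - 1) (φ := fun r => dampedSine 1 r * dampedSine 1 r)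
    (by fun_prop) fun r hr => ?_
  · simp only [interaction, Fin.prod_univ_two, Matrix.cons_val_zero, Matrix.cons_val_one]
    rwa [← ENNReal.ofReal_pos, ofReal_integral_eq_lintegral_ofReal hint
      (.of_forall fun r => mul_self_nonneg _)]
  · have := Real.sin_pos_of_pos_of_lt_pi hr.1 (hr.2.trans (by linarith [Real.pi_gt_three]))
    simp only [dampedSine, one_mul]
    positivity

lemma prod_dampedSine_triple (K σ r : ℝ) :
    ∏ i, dampedSine (![K, K, 2 * K + σ] i) r = 1 / 2 * (Real.exp (-(3 * r))
      * Real.sin ((2 * K + σ) * r)) - 1 / 4 * (Real.exp (-(3 * r)) * Real.sin ((4 * K + σ) * r))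
      - 1 / 4 * (Real.exp (-(3 * r)) * Real.sin (σ * r)) := by
  have hexp : Real.exp (-(3 * r)) = Real.exp (-r) * Real.exp (-r) * Real.exp (-r) := by
    rw [← Real.exp_add, ← Real.exp_add]
    ring_nf
  have hsum : Real.sin ((4 * K + σ) * r) + Real.sin (σ * r)
      = 2 * (Real.sin ((2 * K + σ) * r) * Real.cos (2 * (K * r))) := by
    rw [← mul_assoc, Real.two_mul_sin_mul_cos]
    ring_nf
  have hsq : Real.cos (2 * (K * r)) = 1 - 2 * Real.sin (K * r) ^ 2 :=
    Real.cos_two_mul_eq_one_sub _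
  rw [hsq] at hsum
  simp only [Fin.prod_univ_three, dampedSine, hexp, Matrix.cons_val]
  linear_combination (1 / 4 * Real.exp (-r) ^ 3) * hsum

lemma interaction_triple (hq : 0 < q) (K σ : ℝ) :
    interaction q ![K, K, 2 * K + σ] = 1 / 2 * gammaSine 3 q (2 * K + σ)
      - 1 / 4 * gammaSine 3 q (4 * K + σ) - 1 / 4 * gammaSine 3 q σ := by
  have hint (c k : ℝ) := (integrable_gammaSine hq three_pos k).const_mul c
  simp only [gammaSine, ← integral_const_mul]
  rw [← integral_sub' (hint _ _) (hint _ _), ← integral_sub' ((hint _ _).sub (hint _ _)) (hint _ _)]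
  simp only [interaction, prod_dampedSine_triple, Pi.sub_apply]

lemma exists_interaction_triple_neg_pos (hq0 : 0 < q) (hq1 : q ≤ 1) :
    ∃ α β : Fin 3 → ℝ, (∀ i, 0 ≤ α i) ∧ (∀ i, 0 ≤ β i) ∧
      interaction q α < 0 ∧ 0 < interaction q β := by
  have hpos : 0 < gammaSine 3 q 1 := gammaSine_one_pos hq0 three_pos (by nlinarith)
  obtain ⟨M, hM⟩ := Filter.eventually_atTop.1 <| (tendsto_gammaSine hq0 three_pos).eventually
    (Metric.ball_mem_nhds 0 (show 0 < gammaSine 3 q 1 / 8 by positivity))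
  have hsmall (k : ℝ) (hk : M ≤ k) : |gammaSine 3 q k| < gammaSine 3 q 1 / 8 := by
    simpa using hM k hk
  obtain ⟨K, hMK, hK⟩ : ∃ K, M ≤ K ∧ 1 ≤ K := ⟨max M 1, le_max_left _ _, le_max_right _ _⟩
  have hnonneg {σ : ℝ} (hσ : -1 ≤ σ) (i : Fin 3) : 0 ≤ ![K, K, 2 * K + σ] i := by
    fin_cases i <;> [change 0 ≤ K; change 0 ≤ K; change 0 ≤ 2 * K + σ] <;> linarith
  refine ⟨![K, K, 2 * K + 1], ![K, K, 2 * K + -1], hnonneg (by norm_num), hnonneg le_rfl, ?_, ?_⟩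
  · rw [interaction_triple hq0]
    linarith [(abs_lt.1 (hsmall (2 * K + 1) (by linarith))).2,
      (abs_lt.1 (hsmall (4 * K + 1) (by linarith))).1]
  · rw [interaction_triple hq0, gammaSine_neg]
    linarith [(abs_lt.1 (hsmall (2 * K + -1) (by linarith))).1,
      (abs_lt.1 (hsmall (4 * K + -1) (by linarith))).2]

end InteractionSigns

section QuadraticPrimitive

variable {W : ℝ → ℝ}

lemma altSum_of_isEmpty {ι : Type*} [Fintype ι] [IsEmpty ι] (W : ℝ → ℝ) (a : ι → ℝ) :
    altSum W a = W 0 := by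
  rw [altSum, Fintype.sum_eq_single ∅ fun s hs => (hs s.eq_empty_of_isEmpty).elim]
  simp

lemma altSum_vecCons (W : ℝ → ℝ) {n : ℕ} (x : ℝ) (a : Fin n → ℝ) :
    altSum W (Matrix.vecCons x a) = altSum W a - altSum (fun d => W (x + d)) a := by
  have hpowerset (e : Fin n ↪ Fin (n + 1)) : (Finset.univ.map e).powerset
      = Finset.univ.map (Finset.mapEmbedding e).toEmbedding := by
    ext s
    simp [Finset.subset_map_iff, eq_comm]
  rw [altSum, ← Finset.powerset_univ, Fin.univ_succ, Finset.cons_eq_insert,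
    Finset.sum_powerset_insert (by simp), hpowerset]
  simp [altSum, pow_succ, Finset.sum_neg_distrib, sub_eq_add_neg]

lemma altSum_pair (W : ℝ → ℝ) (a b : ℝ) :
    altSum W ![a, b] = W 0 - W a - W b + W (a + b) := by
  simp only [altSum_vecCons, altSum_of_isEmpty, add_zero]
  ring

lemma altSum_triple (W : ℝ → ℝ) (a b c : ℝ) :
    altSum W ![a, b, c] = W 0 - W a - W b - W c + W (a + b) + W (a + c) + W (b + c)
      - W (a + b + c) := by
  simp only [altSum_vecCons, altSum_of_isEmpty, add_zero, ← add_assoc]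
  ring

lemma eq_quadratic_of_second_difference_const {u : ℕ → ℝ} {N : ℕ} (hu0 : u 0 = 0)
    (hu : ∀ k, k + 2 ≤ N → u (k + 2) - 2 * u (k + 1) + u k = u 2 - 2 * u 1) {k : ℕ} (hk : k ≤ N) :
    u k = k * u 1 + k * (k - 1) / 2 * (u 2 - 2 * u 1) := by
  induction k using Nat.twoStepInduction with
  | zero => simp [hu0]
  | one => simp
  | more k ih0 ih1 =>
    have hstep := hu k hk
    rw [ih0 (by omega), ih1 (by omega)] at hstep
    push_cast at hstep ⊢
    linear_combination hstep

lemma second_difference_eq_of_altSum_triple_eq_zero (h0 : W 0 = 0)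
    (hW : ∀ a b c : ℝ, 0 < a → 0 < b → 0 < c → a + b + c ≤ 1 → altSum W ![a, b, c] = 0)
    {x h : ℝ} (hx : 0 ≤ x) (hh : 0 < h) (hxh : x + 2 * h ≤ 1) :
    W (x + 2 * h) - 2 * W (x + h) + W x = W (2 * h) - 2 * W h := by
  obtain rfl | hx := hx.eq_or_lt
  · simp [h0]
  have hxhh := hW x h h hx hh hh (by linarith)
  rw [altSum_triple, h0, add_assoc x, ← two_mul] at hxhh
  linarith

lemma apply_nat_mul_eq_quadratic (h0 : W 0 = 0)
    (hW : ∀ a b c : ℝ, 0 < a → 0 < b → 0 < c → a + b + c ≤ 1 → altSum W ![a, b, c] = 0)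
    {h : ℝ} (hh : 0 < h) {N : ℕ} (hN : N * h ≤ 1) {k : ℕ} (hk : k ≤ N) :
    W (k * h) = k * W h + k * (k - 1) / 2 * (W (2 * h) - 2 * W h) := by
  have hdiff (j : ℕ) (hj : j + 2 ≤ N) : W ((j + 2 : ℕ) * h) - 2 * W ((j + 1 : ℕ) * h) + W (j * h)
      = W ((2 : ℕ) * h) - 2 * W ((1 : ℕ) * h) := by
    have hj' : (j + 2) * h ≤ N * h := by gcongr; exact_mod_cast hj
    have := second_difference_eq_of_altSum_triple_eq_zero h0 hW (x := j * h) (by positivity) hh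
      (by linarith)
    push_cast
    rwa [add_mul, add_mul, one_mul]
  simpa using eq_quadratic_of_second_difference_const (u := fun j : ℕ => W (j * h))
    (by simpa) hdiff hk

lemma apply_div_eq_quadratic (h0 : W 0 = 0)
    (hW : ∀ a b c : ℝ, 0 < a → 0 < b → 0 < c → a + b + c ≤ 1 → altSum W ![a, b, c] = 0)
    {k m : ℕ} (hm : 0 < m) (hk : k ≤ 2 * m) : W (k / (2 * m)) = W 1 * (k / (2 * m))
      + (4 * W (1 / 2) - 2 * W 1) * (k / (2 * m)) * (1 - k / (2 * m)) := by
  have : (0 : ℝ) < m := by exact_mod_cast hm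
  have hquad {j : ℕ} (hj : j ≤ 2 * m) := apply_nat_mul_eq_quadratic h0 hW
    (h := (2 * m : ℝ)⁻¹) (by positivity) (by push_cast; field_simp; rfl) hj
  have hone := hquad le_rfl
  have hhalf := hquad (j := m) (by omega)
  rw [Nat.cast_mul, Nat.cast_ofNat, mul_inv_cancel₀ (by positivity)] at hone
  rw [show (m * (2 * m : ℝ)⁻¹ : ℝ) = 1 / 2 by field_simp] at hhalf
  rw [div_eq_mul_inv, hquad hk, hone, hhalf]
  field_simp
  ring

theorem eq_quadratic_of_altSum_triple_eq_zero (h0 : W 0 = 0)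
    (hW : ∀ a b c : ℝ, 0 < a → 0 < b → 0 < c → a + b + c ≤ 1 → altSum W ![a, b, c] = 0)
    (hcont : ContinuousOn W (Icc 0 1)) {x : ℝ} (hx : x ∈ Icc (0 : ℝ) 1) :
    W x = W 1 * x + (4 * W (1 / 2) - 2 * W 1) * x * (1 - x) := by
  have hdense : Icc (0 : ℝ) 1 ⊆ closure (Ioo 0 1 ∩ range ((↑) : ℚ → ℝ)) := by
    rw [← closure_Ioo zero_ne_one]
    exact closure_minimal (Rat.denseRange_cast.open_subset_closure_inter isOpen_Ioo)
      isClosed_closure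
  have hrat : EqOn W (fun x => W 1 * x + (4 * W (1 / 2) - 2 * W 1) * x * (1 - x))
      (Ioo 0 1 ∩ range ((↑) : ℚ → ℝ)) := by
    rintro _ ⟨⟨hr0, hr1⟩, r, rfl⟩
    lift r to ℚ≥0 using by exact_mod_cast hr0.le
    rw [Rat.cast_nnratCast] at hr1 ⊢
    have hden : (0 : ℝ) < r.den := by exact_mod_cast r.den_pos
    have hr : (r : ℝ) = (2 * r.num : ℕ) / (2 * r.den) := by
      rw [NNRat.cast_def]
      push_cast
      field_simp
    have hle : r.num ≤ r.den := by
      rw [NNRat.cast_def, div_lt_one hden] at hr1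
      exact_mod_cast hr1.le
    simpa [hr] using apply_div_eq_quadratic h0 hW r.den_pos (k := 2 * r.num) (by omega)
  exact hrat.of_subset_closure hcont (by fun_prop)
    (inter_subset_left.trans Ioo_subset_Icc_self) hdense hx

end QuadraticPrimitive

section LinearWeight

lemma ae_eq_of_intervalIntegral_eq {f F F' : ℝ → ℝ} {a b : ℝ} (hf : IntegrableOn f (Ioo a b))
    (hfF : ∀ x ∈ Ioo a b, ∫ t in a..x, f t = F x) (hF : ∀ x ∈ Ioo a b, HasDerivAt F (F' x) x) :
    ∀ᵐ x ∂volume.restrict (Ioo a b), f x = F' x := by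
  obtain hab | hab := le_or_gt b a
  · simp [Ioo_eq_empty_of_le hab]
  have hint : IntervalIntegrable f volume a b :=
    (intervalIntegrable_iff_integrableOn_Ioo_of_le hab.le).2 hf
  filter_upwards [ae_restrict_of_ae hint.ae_hasDerivAt_integral, ae_restrict_mem measurableSet_Ioo]
    with x hderiv hx
  have hfx := hderiv (Icc_subset_uIcc (Ioo_subset_Icc_self hx)) a left_mem_uIcc
  refine (hfx.congr_of_eventuallyEq ?_).unique (hF x hx)
  filter_upwards [isOpen_Ioo.mem_nhds hx] with y hy using (hfF y hy).symm

variable {Ω : Type*} [MeasurableSpace Ω] {μ : Measure Ω} {T : (ℝ → ℝ) →ₗ[ℝ] (Ω → ℝ)}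
  {ν : Measure ℝ} [IsFiniteMeasure ν] {q : ℝ}

lemma IsLorentzIsometry.measureReal_Ioo_add_le (hT : IsLorentzIsometry ν q μ T) (hq0 : 0 < q)
    (hq1 : q ≤ 1) (hν : ∀ d > 0, 0 < ν (Ioo 0 d)) {a b : ℝ} (ha : 0 < a) (hb : 0 < b)
    (hab : a + b ≤ 1) : ν.real (Ioo 0 (a + b)) ≤ ν.real (Ioo 0 a) + ν.real (Ioo 0 b) := by
  have hle := nonpos_of_mul_nonpos_left (hT.altSum_mul_interaction_nonpos_of_sum_le_one hq0 hq1 hν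
    (a := ![a, b]) (α := ![1, 1]) (by simp [ha, hb]) (by simpa) (by simp))
    (interaction_pair_pos hq0)
  rw [altSum_pair, Ioo_self, measureReal_empty] at hle
  linarith

lemma IsLorentzIsometry.altSum_triple_eq_zero (hT : IsLorentzIsometry ν q μ T) (hq0 : 0 < q)
    (hq1 : q ≤ 1) (hν : ∀ d > 0, 0 < ν (Ioo 0 d)) {a b c : ℝ} (ha : 0 < a) (hb : 0 < b)
    (hc : 0 < c) (habc : a + b + c ≤ 1) :
    altSum (fun d => ν.real (Ioo 0 d)) ![a, b, c] = 0 := by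
  obtain ⟨α, β, hα, hβ, hneg, hpos⟩ := exists_interaction_triple_neg_pos hq0 hq1
  have hle {γ : Fin 3 → ℝ} (hγ : ∀ i, 0 ≤ γ i) :=
    hT.altSum_mul_interaction_nonpos_of_sum_le_one hq0 hq1 hν (a := ![a, b, c])
      (by simp [Fin.forall_fin_succ, ha, hb, hc]) (by simpa [Fin.sum_univ_three]) hγ
  exact le_antisymm (nonpos_of_mul_nonpos_left (hle hβ) hpos)
    (nonneg_of_mul_nonpos_left (hle hα) hneg)

lemma IsLorentzIsometry.exists_measureReal_Ioo_eq_quadratic (hT : IsLorentzIsometry ν q μ T)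
    (hq0 : 0 < q) (hq1 : q ≤ 1) (hν : ∀ d > 0, 0 < ν (Ioo 0 d)) (hν1 : ν.real (Ioo 0 1) = 1)
    (hcont : ContinuousOn (fun d => ν.real (Ioo 0 d)) (Icc 0 1)) :
    ∃ β ∈ Icc (0 : ℝ) 1, ∀ x ∈ Icc (0 : ℝ) 1, ν.real (Ioo 0 x) = x + β * x * (1 - x) := by
  obtain ⟨β, hβ⟩ : ∃ β, β = 4 * ν.real (Ioo 0 (1 / 2)) - 2 := ⟨_, rfl⟩
  have hquad (x : ℝ) (hx : x ∈ Icc 0 1) : ν.real (Ioo 0 x) = x + β * x * (1 - x) := by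
    have h := eq_quadratic_of_altSum_triple_eq_zero (by simp)
      (fun a b c ha hb hc => hT.altSum_triple_eq_zero hq0 hq1 hν ha hb hc) hcont hx
    simp only [hν1] at h
    rw [h, hβ]
    ring
  refine ⟨β, ⟨?_, ?_⟩, hquad⟩
  · have hle := hT.measureReal_Ioo_add_le hq0 hq1 hν (a := 1 / 2) (b := 1 / 2)
      (by norm_num) (by norm_num) (by norm_num)
    rw [add_halves, hν1] at hle
    linarith
  · by_contra! hβ1
    -- The vertex of the parabola would lie in `(0, 1)`, and its value there would exceed `1`.
    have hx : (1 + β) / (2 * β) ∈ Ioo (0 : ℝ) 1 :=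
      ⟨by positivity, (div_lt_one (by positivity)).2 (by linarith)⟩
    have hle : ν.real (Ioo 0 ((1 + β) / (2 * β))) ≤ 1 :=
      (measureReal_mono (Ioo_subset_Ioo_right hx.2.le)).trans_eq hν1
    rw [hquad _ (Ioo_subset_Icc_self hx), ← sub_nonpos] at hle
    have hvalue : (1 + β) / (2 * β) + β * ((1 + β) / (2 * β)) * (1 - (1 + β) / (2 * β)) - 1
        = (β - 1) ^ 2 / (4 * β) := by
      field_simp
      ring
    exact hle.not_gt (hvalue ▸ div_pos (pow_pos (sub_pos.2 hβ1) 2) (by positivity))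

variable {w : ℝ → ℝ}

lemma isFiniteMeasure_weightMeasure (hw : IntegrableOn w (Ioo 0 1)) :
    IsFiniteMeasure (weightMeasure w) :=
  isFiniteMeasure_withDensity_ofReal hw.2

lemma measureReal_weightMeasure_Ioo (hw : IntegrableOn w (Ioo 0 1))
    (hw0 : ∀ t ∈ Ioo 0 1, 0 ≤ w t) {d : ℝ} (hd0 : 0 ≤ d) (hd1 : d ≤ 1) :
    (weightMeasure w).real (Ioo 0 d) = ∫ t in 0..d, w t := by
  rw [measureReal_def, weightMeasure_Ioo hw hw0 hd0 hd1, ENNReal.toReal_ofReal]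
  rw [intervalIntegral.integral_of_le hd0, integral_Ioc_eq_integral_Ioo]
  exact setIntegral_nonneg measurableSet_Ioo fun t ht => hw0 t (Ioo_subset_Ioo_right hd1 ht)

lemma continuousOn_measureReal_weightMeasure_Ioo (hw : IntegrableOn w (Ioo 0 1))
    (hw0 : ∀ t ∈ Ioo 0 1, 0 ≤ w t) :
    ContinuousOn (fun d => (weightMeasure w).real (Ioo 0 d)) (Icc 0 1) := by
  have hint : IntervalIntegrable w volume 0 1 :=
    (intervalIntegrable_iff_integrableOn_Ioo_of_le zero_le_one).2 hw
  have hcont := intervalIntegral.continuousOn_primitive_interval' hint left_mem_uIcc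
  rw [uIcc_of_le zero_le_one] at hcont
  exact hcont.congr fun d hd => measureReal_weightMeasure_Ioo hw hw0 hd.1 hd.2

theorem IsLorentzIsometry.exists_linear_of_weightMeasure
    (hT : IsLorentzIsometry (weightMeasure w) q μ T) (hq0 : 0 < q) (hq1 : q ≤ 1)
    (hw0 : ∀ t ∈ Ioo 0 1, 0 < w t) (hw1 : ∫ t in Ioo (0 : ℝ) 1, w t = 1) :
    ∃ α ∈ Icc (0 : ℝ) 2, ∀ᵐ t ∂volume.restrict (Ioo (0 : ℝ) 1), w t = 1 + α / 2 - α * t := by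
  have hw : IntegrableOn w (Ioo 0 1) := integrable_of_integral_eq_one hw1
  have hw0' (t : ℝ) (ht : t ∈ Ioo 0 1) : 0 ≤ w t := (hw0 t ht).le
  have := isFiniteMeasure_weightMeasure hw
  have hpos (d : ℝ) (hd : 0 < d) : 0 < weightMeasure w (Ioo 0 d) :=
    (weightMeasure_Ioo_pos hw hw0 (lt_min hd one_pos) (min_le_right d 1)).trans_le
      (measure_mono (Ioo_subset_Ioo_right (min_le_left d 1)))
  have hone : (weightMeasure w).real (Ioo 0 1) = 1 := by
    rw [measureReal_weightMeasure_Ioo hw hw0' zero_le_one le_rfl,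
      intervalIntegral.integral_of_le zero_le_one, integral_Ioc_eq_integral_Ioo, hw1]
  obtain ⟨β, hβ, hquad⟩ := hT.exists_measureReal_Ioo_eq_quadratic hq0 hq1 hpos hone
    (continuousOn_measureReal_weightMeasure_Ioo hw hw0')
  refine ⟨2 * β, ⟨by linarith [hβ.1], by linarith [hβ.2]⟩, ?_⟩
  have hderiv (x : ℝ) :
      HasDerivAt (fun x => x + β * x * (1 - x)) (1 + 2 * β / 2 - 2 * β * x) x :=
    ((hasDerivAt_id' x).fun_add (((hasDerivAt_id' x).const_mul β).fun_mul
      ((hasDerivAt_id' x).const_sub 1))).congr_deriv (by ring)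
  refine ae_eq_of_intervalIntegral_eq hw (fun x hx => ?_) fun x _ => hderiv x
  rw [← measureReal_weightMeasure_Ioo hw hw0' hx.1.le hx.2.le, hquad x (Ioo_subset_Icc_self hx)]

end LinearWeight

theorem stmt2_general (q : ℝ) (hq0 : 0 < q) (hq1 : q ≤ 1) (w : ℝ → ℝ)
    (hw_pos : ∀ t ∈ Ioo (0 : ℝ) 1, 0 < w t) (hw_int : (∫ t in Ioo (0 : ℝ) 1, w t) = 1) :
    (∃ (Ω : Type) (_ : MeasurableSpace Ω) (μ : Measure Ω)
        (T : (ℝ → ℝ) →ₗ[ℝ] (Ω → ℝ)),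
      ∀ f : ℝ → ℝ, Measurable f →
        (∫⁻ t in Ioo (0 : ℝ) 1, ENNReal.ofReal (decRearr f t ^ q * w t)) < ⊤ →
        (∫ ω, |T f ω| ^ q ∂μ) = ∫ t in Ioo (0 : ℝ) 1, decRearr f t ^ q * w t) ↔
    (∃ α ∈ Icc (0 : ℝ) 2, ∀ᵐ t ∂(volume.restrict (Ioo (0 : ℝ) 1)),
        w t = 1 + α / 2 - α * t) := by
  have hw : IntegrableOn w (Ioo 0 1) := integrable_of_integral_eq_one hw_int
  have hw0 (t : ℝ) (ht : t ∈ Ioo 0 1) : 0 ≤ w t := (hw_pos t ht).le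
  constructor
  · rintro ⟨Ω, _, μ, T, hT⟩
    have hiso : IsLorentzIsometry (weightMeasure w) q μ T := fun f hf hfin => by
      rw [← integral_decRearr_rpow_mul hw hw0 hf]
      exact hT f hf (lorentzPow_weightMeasure hw hf ▸ hfin)
    exact hiso.exists_linear_of_weightMeasure hq0 hq1 hw_pos hw_int
  · rintro ⟨α, hα, hwα⟩
    obtain ⟨μ, hiso⟩ := exists_isLorentzIsometry_of_linear hq0 hq1 hα hwα
    refine ⟨_, _, μ, halfSumDiff, fun f hf hfin => ?_⟩
    rw [integral_decRearr_rpow_mul hw hw0 hf]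
    exact hiso f hf (lorentzPow_weightMeasure hw hf ▸ hfin)

/-- For `0 < q ≤ 1` and a positive non-increasing weight `w` on `(0,1)` with
`∫_0^1 w = 1`, the Lorentz function space `L_{w,q}(0,1)` is isometric to a
subspace of `L_q` iff `w(t) = 1 + α/2 − αt` a.e. for some `α ∈ [0,2]`. -/
theorem stmt2 (q : ℝ) (hq0 : 0 < q) (hq1 : q ≤ 1) (w : ℝ → ℝ)
    (hw_pos : ∀ t ∈ Ioo (0:ℝ) 1, 0 < w t)
    (hw_anti : ∀ s t, s ∈ Ioo (0:ℝ) 1 → t ∈ Ioo (0:ℝ) 1 → s ≤ t → w t ≤ w s)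
    (hw_int : (∫ t in Ioo (0:ℝ) 1, w t) = 1) :
    (∃ (Ω : Type) (_ : MeasurableSpace Ω) (μ : Measure Ω)
        (T : (ℝ → ℝ) →ₗ[ℝ] (Ω → ℝ)),
      ∀ f : ℝ → ℝ, Measurable f →
        (∫⁻ t in Ioo (0:ℝ) 1, ENNReal.ofReal (decRearr f t ^ q * w t)) < ⊤ →
        (∫ ω, |T f ω| ^ q ∂μ) = ∫ t in Ioo (0:ℝ) 1, decRearr f t ^ q * w t) ↔
    (∃ α ∈ Icc (0:ℝ) 2, ∀ᵐ t ∂(volume.restrict (Ioo (0:ℝ) 1)),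
        w t = 1 + α / 2 - α * t) :=
  stmt2_general q hq0 hq1 w hw_pos hw_int
end
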